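/- Let (W,T) be an affine dual Coxeter system and let w ∈ W be a parabolic quasi-Coxeter element for (W,T). Then the Hurwitz action of the braid group on the set Red_T(w) of reduced reflection factorizations of w is transitive. -/

import Mathlib

open scoped RealInnerProductSpace

noncomputable section

variable {V : Type*} [NormedAddCommGroup V] [InnerProductSpace ℝ V]

/-- The coroot `α^∨ = 2α/(α|α)` of a vector `α`. -/
def coroot (α : V) : V := (2 / ⟪α, α⟫) • α

/-- The affine reflection `s_{α,k} : v ↦ v - ((v|α) - k)α^∨`, as a function. -/
def sAffFun (α : V) (k : ℝ) (v : V) : V := v - (⟪v, α⟫ - k) • coroot α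

theorem sAffFun_involutive (α : V) (k : ℝ) : Function.Involutive (sAffFun α k) := by
  intro v
  by_cases h : α = 0
  · simp [sAffFun, coroot, h]
  · have h2 : ⟪α, α⟫ ≠ 0 := by
      intro hz
      exact h (inner_self_eq_zero.mp hz)
    have hr : ⟪coroot α, α⟫ = 2 := by
      simp only [coroot, real_inner_smul_left]
      field_simp
    simp only [sAffFun, inner_sub_left, real_inner_smul_left, hr]
    have : ⟪v, α⟫ - (⟪v, α⟫ - k) * 2 - k = -(⟪v, α⟫ - k) := by ring
    rw [this, neg_smul, sub_neg_eq_add, sub_add_cancel]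

/-- The affine reflection `s_{α,k}` as a permutation of `V`. -/
def sAff (α : V) (k : ℝ) : Equiv.Perm V :=
  Function.Involutive.toPerm _ (sAffFun_involutive α k)

/-- The translation `Tr(x) : v ↦ v + x`, as a function. -/
def trFun (x : V) (v : V) : V := v + x

/-- The translation `Tr(x) : v ↦ v + x`, as a permutation of `V`. -/
def trPerm (x : V) : Equiv.Perm V := Equiv.addRight x

/-- A crystallographic (reduced) root system in a Euclidean space `V`. -/
structure IsCrystRootSystem (Φ : Set V) : Prop where
  finite : Φ.Finite
  nonempty : Φ.Nonempty
  ne_zero : ∀ α ∈ Φ, α ≠ 0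
  spanning : Submodule.span ℝ Φ = ⊤
  refl_mem : ∀ α ∈ Φ, ∀ β ∈ Φ, sAffFun α 0 β ∈ Φ
  reduced : ∀ α ∈ Φ, ∀ c : ℝ, c • α ∈ Φ → c = 1 ∨ c = -1
  cryst : ∀ α ∈ Φ, ∀ β ∈ Φ, ∃ n : ℤ, 2 * ⟪β, α⟫ / ⟪α, α⟫ = (n : ℝ)

/-- The (finite) Weyl group of `Φ`, generated by the reflections `s_α`. -/
def WeylGroup (Φ : Set V) : Subgroup (Equiv.Perm V) :=
  Subgroup.closure {g | ∃ α ∈ Φ, g = sAff α 0}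

/-- The affine Weyl group of `Φ`, generated by all affine reflections `s_{α,k}`, `k ∈ ℤ`. -/
def AffWeylGroup (Φ : Set V) : Subgroup (Equiv.Perm V) :=
  Subgroup.closure {g | ∃ α ∈ Φ, ∃ k : ℤ, g = sAff α k}

/-- The set of reflections of the affine Weyl group. -/
def AffReflections (Φ : Set V) : Set (Equiv.Perm V) :=
  {g | ∃ α ∈ Φ, ∃ k : ℤ, g = sAff α k}

/-- The coweight lattice `P(Φ^∨) = {x | (x|α) ∈ ℤ for all α ∈ Φ}`. -/
def coweightLattice (Φ : Set V) : Set V :=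
  {x | ∀ α ∈ Φ, ∃ n : ℤ, ⟪x, α⟫ = (n : ℝ)}

/-- `Φ` is irreducible: it admits no decomposition into two nonempty orthogonal parts. -/
def IsIrreducibleRS (Φ : Set V) : Prop :=
  ∀ Φ₁ Φ₂ : Set V, Φ₁ ∪ Φ₂ = Φ → (∀ α ∈ Φ₁, ∀ β ∈ Φ₂, ⟪α, β⟫ = 0) →
    Φ₁ = ∅ ∨ Φ₂ = ∅

end


section Hurwitz

variable {G : Type*} [Group G]

/-- One Hurwitz move: replace two adjacent entries `(a, b)` by `(a * b * a⁻¹, a)`. -/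
def HurwitzMove (l l' : List G) : Prop :=
  ∃ (u v : List G) (a b : G),
    l = u ++ a :: b :: v ∧ l' = u ++ (a * b * a⁻¹) :: a :: v

/-- Hurwitz equivalence: two tuples are Hurwitz equivalent iff they lie in the same
orbit of the Hurwitz action of the braid group. -/
def HurwitzEquiv (l l' : List G) : Prop := Relation.EqvGen HurwitzMove l l'

/-- The reflection length `ℓ_T(w)` of `w` with respect to a generating set `T`. -/
noncomputable def reflLength (T : Set G) (w : G) : ℕ :=
  sInf {k | ∃ l : List G, (∀ t ∈ l, t ∈ T) ∧ l.prod = w ∧ l.length = k}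

/-- `l` is a reduced `T`-factorization of `w`, i.e. an element of `Red_T(w)`. -/
def IsRedFac (T : Set G) (w : G) (l : List G) : Prop :=
  (∀ t ∈ l, t ∈ T) ∧ l.prod = w ∧ l.length = reflLength T w

end Hurwitz


section DualCox

variable {W : Type*} [Group W]

/-- `(W,T)` is a dual Coxeter system: `T` is the set of reflections of some
Coxeter system on `W`. -/
def IsDualCoxeterSystem (W : Type*) [Group W] (T : Set W) : Prop :=
  ∃ (B : Type) (M : CoxeterMatrix B) (cs : CoxeterSystem M W),
    T = {t | cs.IsReflection t}

/-- `(W,T)` is a dual Coxeter system of rank `n`. -/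
def IsDualCoxeterSystemOfRank (W : Type*) [Group W] (T : Set W) (n : ℕ) : Prop :=
  ∃ (B : Type) (M : CoxeterMatrix B) (cs : CoxeterSystem M W),
    Nat.card B = n ∧ T = {t | cs.IsReflection t}

/-- `S ⊆ T` is a simple system for the dual Coxeter system `(W,T)`. -/
def IsSimpleSystem (T S : Set W) : Prop :=
  ∃ (B : Type) (M : CoxeterMatrix B) (cs : CoxeterSystem M W),
    S = Set.range cs.simple ∧ T = {t | cs.IsReflection t}

end DualCox


/-- `w` is a parabolic quasi-Coxeter element for the dual Coxeter system `(W,T)`: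
there are a simple system `s_1, …, s_n` for `(W,T)` and a reduced reflection
factorization `(t_1, …, t_m)` of `w` with `m ≤ n` such that
`⟨t_1, …, t_m⟩ = ⟨s_1, …, s_m⟩`. -/
def IsParabolicQuasiCoxeter {W : Type*} [Group W] (T : Set W) (w : W) : Prop :=
  ∃ (n m : ℕ) (hmn : m ≤ n) (s : Fin n → W) (t : Fin m → W),
    Function.Injective s ∧
    IsSimpleSystem T (Set.range s) ∧
    IsRedFac T w (List.ofFn t) ∧
    Subgroup.closure (Set.range t) =
      Subgroup.closure (Set.range fun j : Fin m => s (Fin.castLE hmn j))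

/-- A witness that the dual Coxeter system `(W,T)` is affine: an isomorphism of `W`
with the affine Weyl group of a crystallographic root system, carrying `T` onto the
set of affine reflections. -/
structure AffineDualCoxeterModel (W : Type*) [Group W] (T : Set W) where
  /-- the ambient Euclidean space -/
  E : Type
  [normed : NormedAddCommGroup E]
  [ips : InnerProductSpace ℝ E]
  [fd : FiniteDimensional ℝ E]
  /-- the crystallographic root system -/
  Φ : Set E
  isRoot : IsCrystRootSystem Φ
  /-- the isomorphism onto the affine Weyl group -/
  iso : W ≃* ↥(AffWeylGroup Φ)
  mem_T_iff : ∀ w : W, w ∈ T ↔ ∃ α ∈ Φ, ∃ k : ℤ, ((iso w : Equiv.Perm E)) = sAff α k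

/-!
Let `X` be a reduced factorization of `w` generating a standard parabolic subgroup `W_J`. In the
Hurwitz orbit of any reduced factorization of `w` choose one whose partial products have least
total length. By parity of inversions these partial products increase in length, so the entries of
this factorization, and with them those of the whole orbit, lie in `W_J`.

The group acts linearly on the span `U` of abstract simple roots, which projects to the Euclidean
space. Since `X` has `|J|` entries and generates `W_J`, its roots are linearly independent, and
the root and coroot of every reflection of `W_J` are integral combinations of those of `X`. Follow
the last coordinate, in the basis of roots of `X`, of such a root under the powers of `w`. Using
coroots instead of roots if necessary, the Cartan integers let it move by at most `2` in each
step, so if it takes both signs it either vanishes, and `X` without its last entry takes over, or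
jumps between `1` and `-1`, which forces the root of the last entry. Hence the reflection occurs
in the orbit of `X`.

Call vectors of `U` with zero projection imaginary. If the span of the roots of `X` contains none,
both signs occur because the sum over an orbit of `w` vanishes; common last entries can then be
cancelled one by one. Splitting `X` into mutually orthogonal parts reduces everything else to the
case that the imaginary vectors form a line. Some entry of the other factorization has a root that
a power of `w` shifts by a nonzero imaginary vector; for it both signs occur by unboundedness, and
cancelling it leaves the case without imaginary vectors.
-/

section HurwitzEquivalence

variable {G : Type*} [Group G]

theorem list_prod_mem_closure (l : List G) : l.prod ∈ Subgroup.closure {x | x ∈ l} :=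
  Subgroup.list_prod_mem _ fun _ hx => Subgroup.subset_closure hx

namespace HurwitzEquiv

variable {l l' : List G}

theorem refl (l : List G) : HurwitzEquiv l l := Relation.EqvGen.refl l

theorem symm (h : HurwitzEquiv l l') : HurwitzEquiv l' l := Relation.EqvGen.symm _ _ h

theorem trans {l'' : List G} (h : HurwitzEquiv l l') (h' : HurwitzEquiv l' l'') :
    HurwitzEquiv l l'' := Relation.EqvGen.trans _ _ _ h h'

theorem of_eq (h : l = l') : HurwitzEquiv l l' := h ▸ refl l

theorem move (u v : List G) (a b : G) :
    HurwitzEquiv (u ++ a :: b :: v) (u ++ (a * b * a⁻¹) :: a :: v) :=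
  Relation.EqvGen.rel _ _ ⟨u, v, a, b, rfl, rfl⟩

theorem apply_eq_of_move {α : Type*} (f : List G → α)
    (hf : ∀ u v a b, f (u ++ a :: b :: v) = f (u ++ (a * b * a⁻¹) :: a :: v))
    (h : HurwitzEquiv l l') : f l = f l' := by
  induction h with
  | rel _ _ h => obtain ⟨u, v, a, b, rfl, rfl⟩ := h; exact hf u v a b
  | refl _ => rfl
  | symm _ _ _ ih => exact ih.symm
  | trans _ _ _ _ _ ih ih' => exact ih.trans ih'

theorem apply_of_move (f : List G → List G)
    (hf : ∀ u v a b, HurwitzEquiv (f (u ++ a :: b :: v)) (f (u ++ (a * b * a⁻¹) :: a :: v)))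
    (h : HurwitzEquiv l l') : HurwitzEquiv (f l) (f l') := by
  induction h with
  | rel _ _ h => obtain ⟨u, v, a, b, rfl, rfl⟩ := h; exact hf u v a b
  | refl _ => exact refl _
  | symm _ _ _ ih => exact ih.symm
  | trans _ _ _ _ _ ih ih' => exact ih.trans ih'

theorem prod_eq (h : HurwitzEquiv l l') : l.prod = l'.prod :=
  h.apply_eq_of_move List.prod fun u v a b => by simp [mul_assoc]

theorem length_eq (h : HurwitzEquiv l l') : l.length = l'.length :=
  h.apply_eq_of_move List.length fun u v a b => by simp

theorem forall_mem_iff {Q : G → Prop} (hQ : ∀ a b, Q a → (Q (a * b * a⁻¹) ↔ Q b))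
    (h : HurwitzEquiv l l') : (∀ x ∈ l, Q x) ↔ ∀ x ∈ l', Q x := by
  refine iff_of_eq (h.apply_eq_of_move (fun l => ∀ x ∈ l, Q x) fun u v a b => propext ?_)
  simp only [List.forall_mem_append, List.forall_mem_cons]
  have := hQ a b
  tauto

theorem closure_eq (h : HurwitzEquiv l l') :
    Subgroup.closure {x | x ∈ l} = Subgroup.closure {x | x ∈ l'} := by
  refine eq_of_forall_ge_iff fun H => ?_
  simp only [Subgroup.closure_le, Set.subset_def, Set.mem_ofPred_eq, SetLike.mem_coe]
  exact h.forall_mem_iff fun a b ha => by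
    rw [H.mul_mem_cancel_right (H.inv_mem ha), H.mul_mem_cancel_left ha]

theorem append_append (u v : List G) (h : HurwitzEquiv l l') :
    HurwitzEquiv (u ++ l ++ v) (u ++ l' ++ v) :=
  h.apply_of_move (u ++ · ++ v) fun u' v' a b => by simpa using move (u ++ u') (v' ++ v) a b

theorem append_left (u : List G) (h : HurwitzEquiv l l') : HurwitzEquiv (u ++ l) (u ++ l') := by
  simpa using h.append_append u []

theorem append_right (v : List G) (h : HurwitzEquiv l l') : HurwitzEquiv (l ++ v) (l' ++ v) := by
  simpa using h.append_append [] v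

theorem map_conj (g : G) (h : HurwitzEquiv l l') :
    HurwitzEquiv (l.map (MulAut.conj g)) (l'.map (MulAut.conj g)) :=
  h.apply_of_move (List.map (MulAut.conj g)) fun u v a b => by
    simpa only [List.map_append, List.map_cons, map_mul, map_inv] using
      move (u.map (MulAut.conj g)) (v.map (MulAut.conj g)) (MulAut.conj g a) (MulAut.conj g b)

theorem cons_rotate (a : G) (l : List G) :
    HurwitzEquiv (a :: l) (l.map (MulAut.conj a) ++ [a]) := by
  induction l with
  | nil => exact refl _
  | cons b l ih => exact (move [] l a b).trans (ih.append_left [a * b * a⁻¹])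

theorem append_swap (u v : List G) :
    HurwitzEquiv (u ++ v) (v.map (MulAut.conj u.prod) ++ u) := by
  induction u with
  | nil => simpa using refl v
  | cons a u ih =>
    refine (ih.append_left [a]).trans ?_
    simpa [Function.comp_def] using
      (cons_rotate a (v.map (MulAut.conj u.prod))).append_right u

theorem conj_prod (l : List G) : HurwitzEquiv l (l.map (MulAut.conj l.prod)) := by
  induction l with
  | nil => exact refl _
  | cons a l ih =>
    refine (cons_rotate a l).trans (((ih.map_conj a).append_right [a]).trans ?_)
    refine (append_swap _ [a]).trans (of_eq ?_)
    rw [← map_list_prod, ← map_list_prod]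
    simp [Function.comp_def, mul_assoc]

theorem conj_zpow (l : List G) (k : ℤ) : HurwitzEquiv l (l.map (MulAut.conj (l.prod ^ k))) := by
  let H : Subgroup G :=
    { carrier := {g | HurwitzEquiv l (l.map (MulAut.conj g))}
      one_mem' := by simpa using refl l
      mul_mem' := fun {g h} hg hh => by
        simpa [Function.comp_def] using hg.trans (hh.map_conj g)
      inv_mem' := fun {g} hg => by
        simpa [Function.comp_def, mul_assoc] using (hg.map_conj g⁻¹).symm }
  exact H.zpow_mem (conj_prod l) k

theorem exists_append_singleton_of_mem {t : G} (h : t ∈ l) :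
    ∃ l', HurwitzEquiv l (l' ++ [t]) := by
  obtain ⟨u, v, rfl⟩ := List.append_of_mem h
  exact ⟨u ++ v.map (MulAut.conj t), by simpa using (cons_rotate t v).append_left u⟩

theorem filter_append_filter_not (p : G → Bool)
    (h : ∀ x ∈ l, ∀ y ∈ l, p x = true → p y = false → x * y = y * x) :
    HurwitzEquiv l (l.filter p ++ l.filter fun x => !p x) := by
  induction l with
  | nil => exact refl _
  | cons a l ih =>
    have ih' := (ih fun x hx y hy => h x (.tail a hx) y (.tail a hy)).append_left [a]
    cases hpa : p a with
    | true => simpa [List.filter_cons, hpa] using ih'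
    | false =>
      have hfix : (l.filter p).map (MulAut.conj a) = l.filter p := by
        refine (List.map_congr_left fun x hx => ?_).trans (List.map_id _)
        obtain ⟨hxl, hpx⟩ := List.mem_filter.mp hx
        simp [← h x (.tail a hxl) a List.mem_cons_self hpx hpa]
      have hswap := (cons_rotate a (l.filter p)).append_right (l.filter fun x => !p x)
      rw [hfix] at hswap
      simpa [List.filter_cons, hpa] using ih'.trans hswap

end HurwitzEquiv

end HurwitzEquivalence

section InversionParity

open CoxeterSystem

variable {B W : Type*} [Group W] {M : CoxeterMatrix B} (cs : CoxeterSystem M W)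

open Classical in
/-- The action of the simple reflection `s_i` on `W × ZMod 2` which conjugates the first component
and flips the second one exactly at `s_i` itself. -/
noncomputable def parityStep (i : B) : Function.End (W × ZMod 2) :=
  fun p => (cs.simple i * p.1 * (cs.simple i)⁻¹, p.2 + if p.1 = cs.simple i then 1 else 0)

open Classical in
theorem prod_map_parityStep_apply (ω : List B) (t : W) (e : ZMod 2) :
    (ω.map (parityStep cs)).prod (t, e) =
      (cs.wordProd ω * t * (cs.wordProd ω)⁻¹, e + (cs.rightInvSeq ω).count t) := by
  induction ω with
  | nil => simp [Function.End.one_def]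
  | cons i ω ih =>
    have hiff : cs.wordProd ω * t * (cs.wordProd ω)⁻¹ = cs.simple i ↔
        (cs.wordProd ω)⁻¹ * cs.simple i * cs.wordProd ω = t := by
      rw [mul_inv_eq_iff_eq_mul, mul_assoc, inv_mul_eq_iff_eq_mul, eq_comm]
    rw [List.map_cons, List.prod_cons]
    change parityStep cs i ((ω.map (parityStep cs)).prod (t, e)) = _
    rw [ih]
    simp only [parityStep, hiff, rightInvSeq, cs.wordProd_cons, List.count_cons, beq_iff_eq]
    refine Prod.ext (by simp [mul_assoc]) ?_
    push_cast
    simp only [add_assoc]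

theorem rightInvSeq_alternatingWord (i j : B) (m : ℕ) :
    cs.rightInvSeq (alternatingWord i j m) =
      (List.range m).reverse.map fun n => (cs.simple j * cs.simple i) ^ n * cs.simple j := by
  induction m generalizing i j with
  | zero => simp [alternatingWord]
  | succ m ih =>
    rw [alternatingWord_succ, rightInvSeq_concat, ih, List.range_succ_eq_map]
    have hconj (n : ℕ) : cs.simple j * ((cs.simple i * cs.simple j) ^ n * cs.simple i) *
        cs.simple j = (cs.simple j * cs.simple i) ^ (n + 1) * cs.simple j := by
      have h : SemiconjBy (cs.simple j) (cs.simple i * cs.simple j) (cs.simple j * cs.simple i) :=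
        (mul_assoc _ _ _).symm
      rw [← mul_assoc, (h.pow_right n).eq, pow_succ]
      simp only [mul_assoc]
    simp [hconj, Function.comp_def]

theorem isLiftable_parityStep : M.IsLiftable (parityStep cs) := by
  classical
  intro i j
  have hword (m : ℕ) : (parityStep cs i * parityStep cs j) ^ m =
      ((alternatingWord i j (2 * m)).map (parityStep cs)).prod := by
    induction m with
    | zero => simp [alternatingWord]
    | succ m ih =>
      rw [pow_succ', ih, mul_add_one, alternatingWord_succ', alternatingWord_succ']
      simp [mul_assoc]
  have hperiod (n : ℕ) :
      (cs.simple j * cs.simple i) ^ (M i j + n) = (cs.simple j * cs.simple i) ^ n := by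
    rw [pow_add, M.symmetric, cs.simple_mul_simple_pow, one_mul]
  have hprod : cs.wordProd (alternatingWord i j (2 * M i j)) = 1 := by
    rw [prod_alternatingWord_eq_mul_pow]; simp
  funext ⟨t, e⟩
  rw [hword, prod_map_parityStep_apply, rightInvSeq_alternatingWord, hprod, two_mul, List.range_add]
  simp [Function.comp_def, hperiod, CharTwo.add_self_eq_zero, Function.End.one_def]

/-- The action of `W` on `W × ZMod 2` generated by `parityStep`. -/
noncomputable def parityAction : W →* Function.End (W × ZMod 2) :=
  cs.lift ⟨parityStep cs, isLiftable_parityStep cs⟩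

/-- The parity of the number of occurrences of `t` among the right inversions of a word for `w`;
it depends on `w` only, since `W` acts through `parityAction`. -/
noncomputable def inversionParity (w t : W) : ZMod 2 := (parityAction cs w (t, 0)).2

open Classical in
theorem parityAction_wordProd_apply (ω : List B) (t : W) (e : ZMod 2) :
    parityAction cs (cs.wordProd ω) (t, e) =
      (cs.wordProd ω * t * (cs.wordProd ω)⁻¹, e + (cs.rightInvSeq ω).count t) := by
  rw [← prod_map_parityStep_apply, wordProd, map_list_prod, List.map_map]
  exact congrArg (fun l => l.prod (t, e)) (List.map_congr_left fun i _ =>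
    cs.lift_apply_simple (isLiftable_parityStep cs) i)

open Classical in
theorem inversionParity_wordProd (ω : List B) (t : W) :
    inversionParity cs (cs.wordProd ω) t = (cs.rightInvSeq ω).count t := by
  simp [inversionParity, parityAction_wordProd_apply]

theorem parityAction_apply (w t : W) (e : ZMod 2) :
    parityAction cs w (t, e) = (w * t * w⁻¹, e + inversionParity cs w t) := by
  classical
  obtain ⟨ω, -, rfl⟩ := cs.exists_isReduced w
  rw [parityAction_wordProd_apply, inversionParity_wordProd]

theorem inversionParity_mul (g h t : W) : inversionParity cs (g * h) t =
    inversionParity cs h t + inversionParity cs g (h * t * h⁻¹) := by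
  rw [inversionParity, map_mul]
  change (parityAction cs g (parityAction cs h (t, 0))).2 = _
  rw [parityAction_apply, parityAction_apply, zero_add]

theorem inversionParity_one (t : W) : inversionParity cs 1 t = 0 := by
  simp [inversionParity, Function.End.one_def]

open Classical in
theorem inversionParity_simple (i : B) (t : W) :
    inversionParity cs (cs.simple i) t = if cs.simple i = t then 1 else 0 := by
  simpa [List.count_singleton] using inversionParity_wordProd cs [i] t

theorem inversionParity_inv_conj (g t : W) :
    inversionParity cs g⁻¹ (g * t * g⁻¹) = inversionParity cs g t := by
  have h := inversionParity_mul cs g⁻¹ g t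
  rw [inv_mul_cancel, inversionParity_one] at h
  exact (CharTwo.add_eq_zero.1 h.symm).symm

theorem inversionParity_self {t : W} (ht : cs.IsReflection t) : inversionParity cs t t = 1 := by
  obtain ⟨g, i, rfl⟩ := ht
  rw [inversionParity_mul, inversionParity_inv_conj, inversionParity_mul, inversionParity_simple]
  have hi : g⁻¹ * (g * cs.simple i * g⁻¹) * g⁻¹⁻¹ = cs.simple i := by group
  rw [hi, if_pos rfl, mul_inv_cancel_right, add_left_comm, CharTwo.add_self_eq_zero, add_zero]

theorem mem_rightInvSeq_of_inversionParity_eq_one {ω : List B} {t : W}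
    (h : inversionParity cs (cs.wordProd ω) t = 1) : t ∈ cs.rightInvSeq ω := by
  classical
  rw [inversionParity_wordProd] at h
  exact List.count_pos_iff.1 (Nat.pos_of_ne_zero fun h0 => by simp [h0] at h)

theorem length_mul_lt_of_inversionParity_eq_one {w t : W} (h : inversionParity cs w t = 1) :
    cs.length (w * t) < cs.length w := by
  obtain ⟨ω, hω, rfl⟩ := cs.exists_isReduced w
  exact (cs.isRightInversion_of_mem_rightInvSeq hω
    (mem_rightInvSeq_of_inversionParity_eq_one cs h)).2

theorem inversionParity_eq_one_iff {w t : W} (ht : cs.IsReflection t) :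
    inversionParity cs w t = 1 ↔ cs.length (w * t) < cs.length w := by
  refine ⟨length_mul_lt_of_inversionParity_eq_one cs, fun h => ?_⟩
  by_contra hw
  have hwt : inversionParity cs (w * t) t = 1 := by
    rw [inversionParity_mul, inversionParity_self cs ht, mul_inv_cancel_right]
    generalize inversionParity cs w t = e at hw ⊢
    decide +revert
  have := length_mul_lt_of_inversionParity_eq_one cs hwt
  rw [mul_assoc, ht.mul_self, mul_one] at this
  omega

theorem inversionParity_eq_zero_iff {w t : W} (ht : cs.IsReflection t) :
    inversionParity cs w t = 0 ↔ cs.length w ≤ cs.length (w * t) := by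
  rw [← not_lt, ← inversionParity_eq_one_iff cs ht]
  generalize inversionParity cs w t = e
  decide +revert

theorem subsingleton_of_inversionParity_eq_one {R : Set W} (ω : List B) (i : B)
    (hmem : cs.wordProd ω * cs.simple i * (cs.wordProd ω)⁻¹ ∈ R)
    (hconj : ∀ r ∈ R, ∀ r' ∈ R, r * r' * r⁻¹ ∈ R)
    (hpar : ∀ r ∈ R, ∀ r' ∈ R, inversionParity cs r r' = 1) : R.Subsingleton := by
  have of_simple {R : Set W} {j : B} (hj : cs.simple j ∈ R)
      (hpar : ∀ r ∈ R, ∀ r' ∈ R, inversionParity cs r r' = 1) : R.Subsingleton := by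
    refine Set.subsingleton_of_forall_eq (cs.simple j) fun r hr => ?_
    have := hpar _ hj r hr
    rw [inversionParity_simple] at this
    by_contra hne
    simp [Ne.symm hne] at this
  induction ω generalizing R with
  | nil => exact of_simple (j := i) (by simpa using hmem) hpar
  | cons j ω ih =>
    by_cases hj : cs.simple j ∈ R
    · exact of_simple hj hpar
    set a := cs.simple j with ha
    have hinv : a⁻¹ = a := cs.inv_simple j
    have hzero {r : W} (hr : r ∈ R) : inversionParity cs a r = 0 := by
      rw [inversionParity_simple, if_neg fun h => hj (by rwa [ha, h])]
    have hzero' {r : W} (hr : a * r * a⁻¹ ∈ R) : inversionParity cs a r = 0 := by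
      rw [← inversionParity_inv_conj, ← hzero hr, hinv]
    -- Conjugation by `a ∉ R` shortens the word and does not change the parities.
    have hR' : ((MulAut.conj a) ⁻¹' R).Subsingleton := by
      refine ih ?_ (fun r hr r' hr' => ?_) fun r hr r' hr' => ?_
      · simpa [ha, cs.wordProd_cons, mul_assoc] using hmem
      · simpa only [Set.mem_preimage, map_mul, map_inv] using hconj _ hr _ hr'
      · have hrr' : a * (r * r' * r⁻¹) * a⁻¹ ∈ R := by simpa [mul_assoc] using hconj _ hr _ hr'
        have := hpar _ hr _ hr'
        have har : a⁻¹ * (a * r' * a⁻¹) * a⁻¹⁻¹ = r' := by group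
        rwa [MulAut.conj_apply, MulAut.conj_apply, inversionParity_mul, inversionParity_inv_conj,
          hzero' hr', har, inversionParity_mul, hzero' hrr', zero_add, add_zero] at this
    exact Set.subsingleton_of_preimage (MulAut.conj a).surjective R hR'

theorem inversionParity_zpow_eq_zero {R : Set W} {c : W} (hc : ∀ r, c * r * c⁻¹ ∈ R ↔ r ∈ R)
    (hpar : ∀ r ∈ R, inversionParity cs c r = 0) (k : ℤ) :
    ∀ r ∈ R, inversionParity cs (c ^ k) r = 0 := by
  let K : Subgroup W :=
    { carrier := {g | ∀ r, (g * r * g⁻¹ ∈ R ↔ r ∈ R) ∧ (r ∈ R → inversionParity cs g r = 0)}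
      one_mem' := fun r => by simp [inversionParity_one]
      mul_mem' := fun {g h} hg hh r => by
        refine ⟨?_, fun hr => ?_⟩
        · rw [← (hh r).1, ← (hg (h * r * h⁻¹)).1]; simp only [mul_inv_rev, mul_assoc]
        · rw [inversionParity_mul, (hh r).2 hr, (hg _).2 ((hh r).1.2 hr), add_zero]
      inv_mem' := fun {g} hg r => by
        have hr : g * (g⁻¹ * r * g⁻¹⁻¹) * g⁻¹ = r := by group
        have hiff := (hg (g⁻¹ * r * g⁻¹⁻¹)).1
        rw [hr] at hiff
        refine ⟨hiff.symm, fun h => ?_⟩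
        rw [← (hg _).2 (hiff.1 h), ← inversionParity_inv_conj cs g, hr] }
  exact fun r => ((K.zpow_mem (show c ∈ K from fun r => ⟨hc r, hpar r⟩) k) r).2

theorem mul_zpow_of_mul_self_eq_one {G : Type*} [Group G] {a b : G} (ha : a * a = 1)
    (hb : b * b = 1) (k : ℤ) : a * (a * b) ^ k = (a * b) ^ (-k) * a := by
  have h : SemiconjBy a (a * b) (a * b)⁻¹ := by
    rw [SemiconjBy, mul_inv_rev, inv_eq_of_mul_eq_one_left ha, inv_eq_of_mul_eq_one_left hb,
      ← mul_assoc, ha, mul_assoc, ha, one_mul, mul_one]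
  rw [(h.zpow_right k).eq, inv_zpow, zpow_neg]

theorem zpow_mul_conj_of_mul_self_eq_one {G : Type*} [Group G] {a b : G} (ha : a * a = 1)
    (hb : b * b = 1) (j k : ℤ) :
    (a * b) ^ j * ((a * b) ^ k * a) * ((a * b) ^ j)⁻¹ = (a * b) ^ (2 * j + k) * a := by
  rw [← zpow_neg, mul_assoc, mul_assoc, mul_zpow_of_mul_self_eq_one ha hb, neg_neg,
    ← mul_assoc, ← mul_assoc, ← zpow_add, ← zpow_add]
  ring_nf

/-- The reflections of the dihedral group generated by two involutions `a` and `b`. -/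
def dihedralReflections {G : Type*} [Group G] (a b : G) : Set G :=
  Set.range fun k : ℤ => (a * b) ^ k * a

section DihedralReflections

variable {G : Type*} [Group G] {a b r r' : G}

theorem left_mem_dihedralReflections : a ∈ dihedralReflections a b :=
  ⟨0, by simp⟩

theorem right_mem_dihedralReflections (hb : b * b = 1) : b ∈ dihedralReflections a b :=
  ⟨-1, by simp [inv_eq_of_mul_eq_one_left hb, mul_assoc]⟩

theorem mul_conj_mem_dihedralReflections_iff (ha : a * a = 1) (hb : b * b = 1) :
    a * b * r * (a * b)⁻¹ ∈ dihedralReflections a b ↔ r ∈ dihedralReflections a b := by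
  have hconj := zpow_mul_conj_of_mul_self_eq_one ha hb
  refine ⟨fun ⟨k, hk⟩ => ⟨2 * -1 + k, ?_⟩, ?_⟩
  · beta_reduce at hk ⊢
    rw [← hconj, hk]
    group
  · rintro ⟨k, rfl⟩
    exact ⟨2 * 1 + k, by simp only [← hconj, zpow_one]⟩

theorem conj_mem_dihedralReflections (ha : a * a = 1) (hb : b * b = 1)
    (hr : r ∈ dihedralReflections a b) (hr' : r' ∈ dihedralReflections a b) :
    r * r' * r⁻¹ ∈ dihedralReflections a b := by
  obtain ⟨k, rfl⟩ := hr
  obtain ⟨l, rfl⟩ := hr'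
  refine ⟨2 * k + -l, ?_⟩
  beta_reduce
  rw [← zpow_mul_conj_of_mul_self_eq_one ha hb, ← mul_zpow_of_mul_self_eq_one ha hb]
  group

end DihedralReflections

theorem isReflection_of_mem_dihedralReflections {t₁ t₂ r : W} (h₁ : cs.IsReflection t₁)
    (h₂ : cs.IsReflection t₂) (hr : r ∈ dihedralReflections t₁ t₂) : cs.IsReflection r := by
  have hconj := zpow_mul_conj_of_mul_self_eq_one h₁.mul_self h₂.mul_self
  obtain ⟨k, rfl⟩ := hr
  beta_reduce
  obtain ⟨j, rfl | rfl⟩ := k.even_or_odd'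
  · rw [← add_zero (2 * j), ← hconj, zpow_zero, one_mul]
    exact h₁.conj _
  · have h₂₁ := h₂.conj t₁
    rw [h₁.inv] at h₂₁
    rw [← hconj, zpow_one]
    exact h₂₁.conj _

theorem exists_length_mul_lt {t₁ t₂ : W} (u : W) (h₁ : cs.IsReflection t₁) (h₂ : cs.IsReflection t₂)
    (hne : t₁ ≠ t₂) : ∃ r ∈ dihedralReflections t₁ t₂, cs.length (u * r) < cs.length u ∨
      cs.length (u * r) < cs.length (u * (t₁ * t₂)) := by
  by_contra! hcon
  set R := dihedralReflections t₁ t₂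
  have hrefl {r : W} (hr : r ∈ R) := isReflection_of_mem_dihedralReflections cs h₁ h₂ hr
  have hcR (r : W) := mul_conj_mem_dihedralReflections_iff (r := r) h₁.mul_self h₂.mul_self
  have hconj {r r' : W} (hr : r ∈ R) (hr' : r' ∈ R) : r * r' * r⁻¹ ∈ R :=
    conj_mem_dihedralReflections h₁.mul_self h₂.mul_self hr hr'
  have hcpar (r : W) (hr : r ∈ R) : inversionParity cs (t₁ * t₂) r = 0 := by
    have hu := (inversionParity_eq_zero_iff cs (hrefl ((hcR r).2 hr))).2 (hcon _ ((hcR r).2 hr)).1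
    have huc : inversionParity cs (u * (t₁ * t₂)) r = 0 := by
      rw [inversionParity_eq_zero_iff cs (hrefl hr), mul_assoc u]
      obtain ⟨k, rfl⟩ := hr
      exact (hcon _ ⟨1 + k, by simp only [zpow_one_add, mul_assoc]⟩).2
    rwa [inversionParity_mul, hu, add_zero] at huc
  have hpar {r r' : W} (hr : r ∈ R) (hr' : r' ∈ R) :
      inversionParity cs r r' = inversionParity cs t₁ r' := by
    obtain ⟨k, rfl⟩ := hr
    rw [inversionParity_mul, inversionParity_zpow_eq_zero cs hcR hcpar k _
      (hconj left_mem_dihedralReflections hr'), add_zero]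
  have hpar_one (r : W) (hr : r ∈ R) (r' : W) (hr' : r' ∈ R) : inversionParity cs r r' = 1 := by
    rw [hpar hr hr', ← hpar hr' hr', inversionParity_self cs (hrefl hr')]
  obtain ⟨g, i, hg⟩ := id h₁
  obtain ⟨ω, -, rfl⟩ := cs.exists_isReduced g
  exact hne (subsingleton_of_inversionParity_eq_one cs ω i (hg ▸ left_mem_dihedralReflections)
    (fun r hr r' hr' => hconj hr hr') hpar_one left_mem_dihedralReflections
    (right_mem_dihedralReflections h₂.mul_self))

end InversionParity

section ReducedFactorizations

theorem IsRedFac.length_le {G : Type*} [Group G] {T : Set G} {w : G} {l l' : List G}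
    (hl : IsRedFac T w l) (hmem : ∀ t ∈ l', t ∈ T) (hprod : l'.prod = w) :
    l.length ≤ l'.length := hl.2.2.trans_le (Nat.sInf_le ⟨l', hmem, hprod, rfl⟩)

theorem HurwitzEquiv.zpow_pair {G : Type*} [Group G] {a b : G} (ha : a * a = 1) (hb : b * b = 1)
    (k : ℤ) : HurwitzEquiv [a, b] [(a * b) ^ k * a, (a * b) ^ k * b] := by
  have hswap := mul_zpow_of_mul_self_eq_one ha hb
  have step (k : ℤ) : HurwitzEquiv [(a * b) ^ k * a, (a * b) ^ k * b]
      [(a * b) ^ (k + 1) * a, (a * b) ^ (k + 1) * b] := by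
    have h := HurwitzEquiv.move [] [] ((a * b) ^ k * a) ((a * b) ^ k * b)
    have hb' : (a * b) ^ (k + 1) * b = (a * b) ^ k * a := by
      rw [zpow_add_one, mul_assoc, mul_assoc, hb, mul_one]
    have ha' : (a * b) ^ k * a * ((a * b) ^ k * b) * ((a * b) ^ k * a)⁻¹ =
        (a * b) ^ (k + 1) * a := by
      rw [mul_assoc _ a, ← mul_assoc a, hswap, mul_inv_rev, inv_eq_of_mul_eq_one_left ha,
        ← zpow_neg, hswap, neg_neg, add_comm k, zpow_one_add]
      group
    rw [ha'] at h
    rwa [hb']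
  induction k with
  | zero => simpa using HurwitzEquiv.refl [a, b]
  | succ k ih => exact ih.trans (step k)
  | pred k ih => exact ih.trans (by simpa using (step (-k - 1)).symm)

open CoxeterSystem

variable {B W : Type*} [Group W] {M : CoxeterMatrix B} (cs : CoxeterSystem M W)

/-- The sum of the lengths of the points `u, u a₁, u a₁ a₂, …` visited when the entries of a list
are multiplied to `u` one after the other. -/
noncomputable def pathLength : W → List W → ℕ
  | u, [] => cs.length u
  | u, a :: l => cs.length u + pathLength (u * a) l

theorem pathLength_append (u : W) (l l' : List W) :
    pathLength cs u (l ++ l') + cs.length (u * l.prod) =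
      pathLength cs u l + pathLength cs (u * l.prod) l' := by
  induction l generalizing u with
  | nil => simp [pathLength, add_comm]
  | cons a l ih =>
    simp only [List.cons_append, pathLength, List.prod_cons, ← mul_assoc, add_assoc, ih]

/-- `x` is a reflection of the standard parabolic subgroup generated by the simple reflections
indexed by `J`. -/
def IsParabolicReflection (J : Set B) (x : W) : Prop :=
  ∃ g ∈ Subgroup.closure (cs.simple '' J), ∃ i ∈ J, x = g * cs.simple i * g⁻¹

variable {cs} {J : Set B}

theorem IsParabolicReflection.mem_closure {x : W} (h : IsParabolicReflection cs J x) :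
    x ∈ Subgroup.closure (cs.simple '' J) := by
  obtain ⟨g, hg, i, hi, rfl⟩ := h
  exact mul_mem (mul_mem hg (Subgroup.subset_closure ⟨i, hi, rfl⟩)) (inv_mem hg)

theorem isParabolicReflection_conj_iff {a x : W} (ha : a ∈ Subgroup.closure (cs.simple '' J)) :
    IsParabolicReflection cs J (a * x * a⁻¹) ↔ IsParabolicReflection cs J x := by
  have conj {a x : W} (ha : a ∈ Subgroup.closure (cs.simple '' J))
      (h : IsParabolicReflection cs J x) : IsParabolicReflection cs J (a * x * a⁻¹) := by
    obtain ⟨g, hg, i, hi, rfl⟩ := h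
    exact ⟨a * g, mul_mem ha hg, i, hi, by simp [mul_assoc]⟩
  exact ⟨fun h => by simpa [mul_assoc] using conj (inv_mem ha) h, conj ha⟩

theorem wordProd_mem_closure {ω : List B} (hω : ∀ i ∈ ω, i ∈ J) :
    cs.wordProd ω ∈ Subgroup.closure (cs.simple '' J) :=
  list_prod_mem fun x hx => by
    obtain ⟨i, hi, rfl⟩ := List.mem_map.1 hx
    exact Subgroup.subset_closure ⟨i, hω i hi, rfl⟩

theorem exists_wordProd_eq_of_mem_closure {w : W} (h : w ∈ Subgroup.closure (cs.simple '' J)) :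
    ∃ ω : List B, (∀ i ∈ ω, i ∈ J) ∧ cs.wordProd ω = w := by
  induction h using Subgroup.closure_induction with
  | mem x hx => obtain ⟨i, hi, rfl⟩ := hx; exact ⟨[i], by simpa using hi, by simp⟩
  | one => exact ⟨[], by simp, by simp⟩
  | mul x y _ _ hx hy =>
    obtain ⟨ω, hω, rfl⟩ := hx
    obtain ⟨ω', hω', rfl⟩ := hy
    exact ⟨ω ++ ω', List.forall_mem_append.2 ⟨hω, hω'⟩, cs.wordProd_append ω ω'⟩
  | inv x _ hx =>
    obtain ⟨ω, hω, rfl⟩ := hx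
    exact ⟨ω.reverse, by simpa using hω, by simp⟩

theorem isParabolicReflection_of_mem_rightInvSeq {ω : List B} (hω : ∀ i ∈ ω, i ∈ J) {t : W}
    (ht : t ∈ cs.rightInvSeq ω) : IsParabolicReflection cs J t := by
  induction ω with
  | nil => simp at ht
  | cons i ω ih =>
    obtain ⟨hi, hω⟩ := List.forall_mem_cons.1 hω
    rw [rightInvSeq, List.mem_cons] at ht
    obtain rfl | ht := ht
    · exact ⟨(cs.wordProd ω)⁻¹, inv_mem (wordProd_mem_closure hω), i, hi, by simp⟩
    · exact ih hω ht

theorem isParabolicReflection_of_length_mul_lt {w t : W}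
    (hw : w ∈ Subgroup.closure (cs.simple '' J)) (ht : cs.IsReflection t)
    (hlt : cs.length (w * t) < cs.length w) : IsParabolicReflection cs J t := by
  obtain ⟨ω, hω, rfl⟩ := exists_wordProd_eq_of_mem_closure hw
  exact isParabolicReflection_of_mem_rightInvSeq hω
    (mem_rightInvSeq_of_inversionParity_eq_one cs ((inversionParity_eq_one_iff cs ht).2 hlt))

theorem isParabolicReflection_of_length_prod_lt {l : List W} (hl : ∀ t ∈ l, cs.IsReflection t)
    (hlt : ∀ u a v, l = u ++ a :: v → cs.length u.prod < cs.length (u.prod * a))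
    (hprod : l.prod ∈ Subgroup.closure (cs.simple '' J)) :
    ∀ t ∈ l, IsParabolicReflection cs J t := by
  induction l using List.reverseRecOn with
  | nil => simp
  | append_singleton l a ih =>
    obtain ⟨hl, ha⟩ := List.forall_mem_append.1 hl
    rw [List.forall_mem_singleton] at ha
    rw [List.prod_append, List.prod_singleton] at hprod
    have hcancel : l.prod * a * a = l.prod := by rw [mul_assoc, ha.mul_self, mul_one]
    have haJ : IsParabolicReflection cs J a :=
      isParabolicReflection_of_length_mul_lt hprod ha (by rw [hcancel]; exact hlt l a [] rfl)
    have hlJ : l.prod ∈ Subgroup.closure (cs.simple '' J) := by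
      rw [← hcancel]; exact mul_mem hprod haJ.mem_closure
    refine List.forall_mem_append.2 ⟨ih hl ?_ hlJ, List.forall_mem_singleton.2 haJ⟩
    rintro u b v rfl
    exact hlt u b (v ++ [a]) (by simp)

theorem exists_hurwitzEquiv_pair_length_mul_lt {a b u : W} (ha : cs.IsReflection a)
    (hb : cs.IsReflection b) (hne : a ≠ b) (hlt : cs.length u < cs.length (u * a))
    (hle : cs.length (u * (a * b)) ≤ cs.length (u * a)) :
    ∃ a' b', HurwitzEquiv [a, b] [a', b'] ∧ cs.length (u * a') < cs.length (u * a) := by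
  obtain ⟨_, ⟨k, rfl⟩, hk⟩ := exists_length_mul_lt cs u ha hb hne
  beta_reduce at hk
  exact ⟨_, _, HurwitzEquiv.zpow_pair ha.mul_self hb.mul_self k, by omega⟩

theorem IsRedFac.length_prod_lt_of_pathLength_le {w : W} {l : List W}
    (hl : IsRedFac {t | cs.IsReflection t} w l)
    (hmin : ∀ l', HurwitzEquiv l l' → pathLength cs 1 l ≤ pathLength cs 1 l') :
    ∀ u a v, l = u ++ a :: v → cs.length u.prod < cs.length (u.prod * a) := by
  intro u
  induction u using List.reverseRecOn with
  | nil =>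
    rintro a v rfl
    have := (hl.1 a (by simp)).length_mul_left_ne 1
    simp only [cs.length_one, one_mul, List.prod_nil] at this ⊢
    omega
  | append_singleton u a ih =>
    rintro b v rfl
    obtain ⟨hu, ha, hb, hv⟩ : (∀ t ∈ u, cs.IsReflection t) ∧ cs.IsReflection a ∧
        cs.IsReflection b ∧ ∀ t ∈ v, cs.IsReflection t := by
      simpa [List.forall_mem_append, or_imp, forall_and] using hl.1
    have hne : a ≠ b := by
      rintro rfl
      have := hl.length_le (l' := u ++ v) (List.forall_mem_append.2 ⟨hu, hv⟩) (by
        rw [← hl.2.1]; simp [← mul_assoc, ha.mul_self])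
      simp at this
    have hlt := ih a (b :: v) (by simp)
    rw [List.prod_append, List.prod_singleton]
    by_contra! hle
    obtain ⟨a', b', hpair, hlt'⟩ :=
      exists_hurwitzEquiv_pair_length_mul_lt ha hb hne hlt (by rwa [← mul_assoc])
    have hprod := hpair.prod_eq
    have hpath := hmin (u ++ a' :: b' :: v) (by simpa using hpair.append_append u v)
    have h₁ := pathLength_append cs 1 u (a :: b :: v)
    have h₂ := pathLength_append cs 1 u (a' :: b' :: v)
    simp only [List.prod_cons, List.prod_nil, mul_one] at hprod
    simp only [pathLength, one_mul, mul_assoc, hprod, List.append_assoc, List.singleton_append]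
      at h₁ h₂ hpath
    omega

/-- A reduced factorization of minimal path length in its Hurwitz orbit has increasing partial
products, so its entries can be read off a word in the generators indexed by `J`. -/
theorem IsRedFac.forall_isParabolicReflection {w : W} {l : List W}
    (hl : IsRedFac {t | cs.IsReflection t} w l) (hw : w ∈ Subgroup.closure (cs.simple '' J)) :
    ∀ t ∈ l, IsParabolicReflection cs J t := by
  obtain ⟨l', hl', hmin⟩ := exists_minimalFor_of_wellFoundedLT (HurwitzEquiv l)
    (pathLength cs 1) ⟨l, .refl l⟩
  have hred : IsRedFac {t | cs.IsReflection t} w l' :=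
    ⟨(hl'.forall_mem_iff fun a b _ => cs.isReflection_conj_iff a b).1 hl.1,
      hl'.prod_eq.symm.trans hl.2.1, hl'.length_eq.symm.trans hl.2.2⟩
  have hlt := hred.length_prod_lt_of_pathLength_le fun l'' h =>
    (le_total _ _).elim id (hmin (hl'.trans h))
  exact (hl'.forall_mem_iff fun a b ha => isParabolicReflection_conj_iff ha.mem_closure).2
    (isParabolicReflection_of_length_prod_lt hred.1 hlt (hred.2.1 ▸ hw))

end ReducedFactorizations

section Coroots

variable {E : Type*} [NormedAddCommGroup E] [InnerProductSpace ℝ E]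

theorem inner_coroot (a α : E) : ⟪a, coroot α⟫ = 2 * ⟪a, α⟫ / ⟪α, α⟫ := by
  rw [coroot, real_inner_smul_right, div_mul_eq_mul_div]

theorem inner_coroot_self {α : E} (hα : α ≠ 0) : ⟪α, coroot α⟫ = 2 := by
  rw [inner_coroot, mul_div_cancel_right₀ _ (inner_self_ne_zero.mpr hα)]

theorem inner_coroot_eq_zero {a α : E} (hα : α ≠ 0) : ⟪a, coroot α⟫ = 0 ↔ ⟪a, α⟫ = 0 := by
  simp [inner_coroot, hα]

/-- The factor turning a root `α` into `α` itself (`i = false`) or into its coroot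
(`i = true`). -/
noncomputable def rootWeight (i : Bool) (α : E) : ℝ := if i then 2 / ⟪α, α⟫ else 1

theorem rootWeight_pos (i : Bool) {α : E} (hα : α ≠ 0) : 0 < rootWeight i α := by
  have := real_inner_self_pos.mpr hα
  cases i with
  | false => exact one_pos
  | true => exact div_pos two_pos this

theorem rootWeight_congr (i : Bool) {α β : E} (h : ⟪α, α⟫ = ⟪β, β⟫) :
    rootWeight i α = rootWeight i β := by
  rw [rootWeight, h, rootWeight]

theorem rootWeight_true_mul_inner_coroot (α β : E) :
    rootWeight true β * ⟪β, coroot α⟫ = ⟪α, coroot β⟫ * rootWeight true α := by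
  simp only [rootWeight, inner_coroot, if_true, real_inner_comm α β]
  ring

theorem IsCrystRootSystem.exists_rootWeight_mul_inner_coroot {Φ : Set E}
    (hΦ : IsCrystRootSystem Φ) (i : Bool) {α β : E} (hα : α ∈ Φ) (hβ : β ∈ Φ) :
    ∃ n : ℤ, rootWeight i β * ⟪β, coroot α⟫ = n * rootWeight i α := by
  cases i with
  | false =>
    obtain ⟨n, hn⟩ := hΦ.cryst α hα β hβ
    exact ⟨n, by simpa [rootWeight, inner_coroot] using hn⟩
  | true =>
    obtain ⟨n, hn⟩ := hΦ.cryst β hβ α hα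
    exact ⟨n, by rw [rootWeight_true_mul_inner_coroot, inner_coroot, hn]⟩

end Coroots

/-- A linear realization of a group `W` of affine isometries with reflections `T`: `W` acts on
`U`, its linear parts act on the Euclidean space `E`, and `π : U → E` is an equivariant projection
sending the root of a reflection to its linear direction. The kernel of `π` plays the role of the
imaginary roots; `imaginary_dependent` says that at most one imaginary direction occurs in each
root string. -/
structure AffineRealization (W : Type*) [Group W] (T : Set W) (U E : Type*) [AddCommGroup U]
    [Module ℝ U] [NormedAddCommGroup E] [InnerProductSpace ℝ E] where
  Φ : Set E
  isRoot : IsCrystRootSystem Φ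
  π : U →ₗ[ℝ] E
  act : W →* Module.End ℝ U
  lin : W →* Module.End ℝ E
  root : W → U
  π_act : ∀ g u, π (act g u) = lin g (π u)
  inner_lin : ∀ g a b, ⟪lin g a, lin g b⟫ = ⟪a, b⟫
  isOfFinOrder_lin : ∀ g, IsOfFinOrder (lin g)
  mul_self : ∀ t ∈ T, t * t = 1
  act_reflection : ∀ t ∈ T, ∀ u, act t u = u - ⟪π u, coroot (π (root t))⟫ • root t
  lin_reflection : ∀ t ∈ T, ∀ a, lin t a = a - ⟪a, coroot (π (root t))⟫ • π (root t)
  π_root_mem : ∀ t ∈ T, π (root t) ∈ Φ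
  root_injective : ∀ t ∈ T, ∀ t' ∈ T, (root t = root t' ∨ root t = -root t') → t = t'
  conj_mem : ∀ g, ∀ t ∈ T, g * t * g⁻¹ ∈ T
  root_conj : ∀ g, ∀ t ∈ T,
    root (g * t * g⁻¹) = act g (root t) ∨ root (g * t * g⁻¹) = -act g (root t)
  imaginary_dependent : ∀ t₁ ∈ T, ∀ t₂ ∈ T, ∀ t₃ ∈ T, ∀ r r' : U, π r = 0 → π r' = 0 →
    (root t₂ = root t₁ + r ∨ root t₂ = -(root t₁ + r)) →
    (root t₃ = root t₁ + r' ∨ root t₃ = -(root t₁ + r')) →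
    ∃ p q : ℝ, (p ≠ 0 ∨ q ≠ 0) ∧ p • r + q • r' = 0
  faithful : ∀ X ⊆ T, ∀ g ∈ Subgroup.closure X, (∀ x ∈ X, act g (root x) = root x) → g = 1

namespace AffineRealization

variable {W : Type*} [Group W] {T : Set W} {U E : Type*} [AddCommGroup U] [Module ℝ U]
  [NormedAddCommGroup E] [InnerProductSpace ℝ E] (D : AffineRealization W T U E)

/-- The root of `t` (`i = false`) or the corresponding multiple lifting the coroot of its linear
direction (`i = true`). -/
noncomputable def scaledRoot (i : Bool) (t : W) : U := rootWeight i (D.π (D.root t)) • D.root t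

/-- The lattice generated by the scaled roots of a list of reflections. -/
def rootLattice (i : Bool) (X : List W) : AddSubgroup U :=
  AddSubgroup.closure (D.scaledRoot i '' {x | x ∈ X})

/-- The real span of the roots of a list of reflections. -/
def rootSpan (X : List W) : Submodule ℝ U := Submodule.span ℝ (D.root '' {x | x ∈ X})

/-- The root of `t` lies in the root lattice, and its coroot in the coroot lattice, of `X`. -/
def InRootLattices (X : List W) (t : W) : Prop := ∀ i, D.scaledRoot i t ∈ D.rootLattice i X

/-- The roots of the list `X` are linearly independent, expressed by a dimension count. -/
def RootsIndependent (X : List W) : Prop := Module.finrank ℝ (D.rootSpan X) = X.length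

variable {D} {X Y : List W} {g t x : W} {i : Bool} {u v : U}

theorem π_root_ne_zero (ht : t ∈ T) : D.π (D.root t) ≠ 0 :=
  D.isRoot.ne_zero _ (D.π_root_mem t ht)

theorem inv_eq_self (D : AffineRealization W T U E) (ht : t ∈ T) : t⁻¹ = t :=
  inv_eq_of_mul_eq_one_left (D.mul_self t ht)

theorem conj_mem_iff (D : AffineRealization W T U E) (g t : W) : g * t * g⁻¹ ∈ T ↔ t ∈ T :=
  ⟨fun h => by simpa [mul_assoc] using D.conj_mem g⁻¹ _ h, D.conj_mem g t⟩

theorem forall_mem_iff (D : AffineRealization W T U E) (h : HurwitzEquiv X Y) :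
    (∀ x ∈ X, x ∈ T) ↔ ∀ x ∈ Y, x ∈ T :=
  h.forall_mem_iff fun a b _ => D.conj_mem_iff a b

theorem scaledRoot_false : D.scaledRoot false t = D.root t := by
  simp [scaledRoot, rootWeight]

theorem inner_π_act_self (g : W) (u : U) :
    ⟪D.π (D.act g u), D.π (D.act g u)⟫ = ⟪D.π u, D.π u⟫ := by
  rw [D.π_act, D.inner_lin]

theorem act_mul (g h : W) (u : U) : D.act (g * h) u = D.act g (D.act h u) := by
  rw [map_mul, Module.End.mul_apply]

theorem scaledRoot_conj (i : Bool) (g : W) (ht : t ∈ T) :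
    D.scaledRoot i (g * t * g⁻¹) = D.act g (D.scaledRoot i t) ∨
      D.scaledRoot i (g * t * g⁻¹) = -D.act g (D.scaledRoot i t) := by
  have hw : rootWeight i (D.π (D.root (g * t * g⁻¹))) = rootWeight i (D.π (D.root t)) := by
    apply rootWeight_congr
    rcases D.root_conj g t ht with h | h
    · rw [h, inner_π_act_self]
    · rw [h, map_neg, inner_neg_neg, inner_π_act_self]
  simp only [scaledRoot, hw, map_smul]
  rcases D.root_conj g t ht with h | h <;> simp [h]

theorem scaledRoot_conj_mem_iff (i : Bool) (g : W) (ht : t ∈ T) (H : AddSubgroup U) :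
    D.scaledRoot i (g * t * g⁻¹) ∈ H ↔ D.act g (D.scaledRoot i t) ∈ H := by
  rcases D.scaledRoot_conj i g ht with h | h <;> simp [h]

section Closure

theorem closure_induction (D : AffineRealization W T U E) {S : Set W} (hS : S ⊆ T) {p : W → Prop}
    (mem : ∀ x ∈ S, p x) (one : p 1) (mul : ∀ g h, p g → p h → p (g * h))
    (hg : g ∈ Subgroup.closure S) : p g := by
  induction hg using Subgroup.closure_induction'' with
  | mem x hx => exact mem x hx
  | inv_mem x hx => exact (D.inv_eq_self (hS hx)).symm ▸ mem x hx
  | one => exact one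
  | mul x y _ _ hx hy => exact mul x y hx hy

theorem scaledRoot_mem_rootLattice (hx : x ∈ X) : D.scaledRoot i x ∈ D.rootLattice i X :=
  AddSubgroup.subset_closure (Set.mem_image_of_mem _ hx)

theorem root_mem_rootSpan (hx : x ∈ X) : D.root x ∈ D.rootSpan X :=
  Submodule.subset_span (Set.mem_image_of_mem _ hx)

theorem rootSpan_mono (h : X ⊆ Y) : D.rootSpan X ≤ D.rootSpan Y :=
  Submodule.span_mono (Set.image_mono h)

theorem rootLattice_le_rootSpan (i : Bool) (X : List W) :
    D.rootLattice i X ≤ (D.rootSpan X).toAddSubgroup := by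
  rw [rootLattice, AddSubgroup.closure_le, Set.image_subset_iff]
  exact fun x hx => (D.rootSpan X).smul_mem _ (root_mem_rootSpan hx)

theorem InRootLattices.root_mem_rootSpan (h : D.InRootLattices X t) : D.root t ∈ D.rootSpan X :=
  scaledRoot_false (D := D) ▸ rootLattice_le_rootSpan false X (h false)

theorem act_sub_mem_of_scaledRoot_mem {H : AddSubgroup U} (ht : t ∈ T) (hx : x ∈ T)
    (hxH : D.scaledRoot i x ∈ H) : D.act x (D.scaledRoot i t) - D.scaledRoot i t ∈ H := by
  obtain ⟨n, hn⟩ := D.isRoot.exists_rootWeight_mul_inner_coroot i (D.π_root_mem x hx)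
    (D.π_root_mem t ht)
  rw [scaledRoot, D.act_reflection x hx, sub_sub_cancel_left, map_smul, real_inner_smul_left, hn,
    mul_smul, Int.cast_smul_eq_zsmul]
  exact neg_mem (zsmul_mem hxH n)

theorem act_mem_rootLattice (hX : ∀ x ∈ X, x ∈ T) (hg : g ∈ Subgroup.closure {x | x ∈ X})
    (hv : v ∈ D.rootLattice i X) : D.act g v ∈ D.rootLattice i X := by
  refine D.closure_induction hX (p := fun g => ∀ v ∈ D.rootLattice i X,
    D.act g v ∈ D.rootLattice i X) (fun x hx => ?_) (fun v hv => by simpa using hv)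
    (fun g h hg hh v hv => by simpa only [act_mul] using hg _ (hh v hv)) hg v hv
  change D.rootLattice i X ≤ (D.rootLattice i X).comap (D.act x).toAddMonoidHom
  refine (AddSubgroup.closure_le _).mpr (Set.image_subset_iff.mpr fun y hy => ?_)
  have hxL : D.scaledRoot i x ∈ D.rootLattice i X := scaledRoot_mem_rootLattice hx
  have hsub := act_sub_mem_of_scaledRoot_mem (hX y hy) (hX x hx) hxL
  simpa using add_mem hsub (scaledRoot_mem_rootLattice hy)

theorem act_sub_mem_rootSpan (hX : ∀ x ∈ X, x ∈ T) (hg : g ∈ Subgroup.closure {x | x ∈ X})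
    (u : U) : D.act g u - u ∈ D.rootSpan X := by
  refine D.closure_induction hX (p := fun g => ∀ u, D.act g u - u ∈ D.rootSpan X)
    (fun x hx u => ?_) (fun u => by simp) (fun g h hg hh u => ?_) hg u
  · rw [D.act_reflection x (hX x hx), sub_sub_cancel_left]
    exact neg_mem (Submodule.smul_mem _ _ (root_mem_rootSpan hx))
  · simpa [act_mul] using add_mem (hg (D.act h u)) (hh u)

theorem act_mem_rootSpan (hX : ∀ x ∈ X, x ∈ T) (hg : g ∈ Subgroup.closure {x | x ∈ X})
    (hu : u ∈ D.rootSpan X) : D.act g u ∈ D.rootSpan X := by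
  simpa using add_mem (act_sub_mem_rootSpan hX hg u) hu

theorem act_eq_self_of_inner_eq_zero (hX : ∀ x ∈ X, x ∈ T)
    (hg : g ∈ Subgroup.closure {x | x ∈ X}) (hu : ∀ x ∈ X, ⟪D.π u, D.π (D.root x)⟫ = 0) :
    D.act g u = u := by
  refine D.closure_induction hX (p := fun g => D.act g u = u) (fun x hx => ?_) (by simp)
    (fun g h hg hh => by rw [act_mul, hh, hg]) hg
  rw [D.act_reflection x (hX x hx),
    (inner_coroot_eq_zero (π_root_ne_zero (hX x hx))).mpr (hu x hx), zero_smul, sub_zero]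

theorem act_eq_self_of_π_eq_zero (hX : ∀ x ∈ X, x ∈ T) (hg : g ∈ Subgroup.closure {x | x ∈ X})
    (hu : D.π u = 0) : D.act g u = u :=
  act_eq_self_of_inner_eq_zero hX hg fun x _ => by simp [hu]

theorem InRootLattices.conj (hX : ∀ x ∈ X, x ∈ T) (hg : g ∈ Subgroup.closure {x | x ∈ X})
    (ht : t ∈ T) (h : D.InRootLattices X t) : D.InRootLattices X (g * t * g⁻¹) := fun i =>
  (scaledRoot_conj_mem_iff i g ht _).mpr (act_mem_rootLattice hX hg (h i))

end Closure

section HurwitzInvariance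

theorem rootLattice_eq_of_hurwitzEquiv (i : Bool) (h : HurwitzEquiv X Y) (hX : ∀ x ∈ X, x ∈ T) :
    D.rootLattice i X = D.rootLattice i Y := by
  have hiff : ∀ H : AddSubgroup U, (∀ x ∈ X, x ∈ T ∧ D.scaledRoot i x ∈ H) ↔
      ∀ x ∈ Y, x ∈ T ∧ D.scaledRoot i x ∈ H := fun H =>
    h.forall_mem_iff fun a b ha => by
      rw [D.conj_mem_iff]
      refine and_congr_right fun hb => ?_
      rw [scaledRoot_conj_mem_iff i a hb, ← sub_add_cancel (D.act a _) (D.scaledRoot i b)]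
      exact H.add_mem_cancel_left (act_sub_mem_of_scaledRoot_mem hb ha.1 ha.2)
  have hY := (D.forall_mem_iff h).mp hX
  refine eq_of_forall_ge_iff fun H => ?_
  simp only [rootLattice, AddSubgroup.closure_le, Set.image_subset_iff]
  exact ⟨fun hH y hy => ((hiff H).mp (fun x hx => ⟨hX x hx, hH hx⟩) y hy).2,
    fun hH x hx => ((hiff H).mpr (fun y hy => ⟨hY y hy, hH hy⟩) x hx).2⟩

theorem rootSpan_eq_span_rootLattice (X : List W) :
    D.rootSpan X = Submodule.span ℝ (D.rootLattice false X : Set U) := by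
  refine le_antisymm (Submodule.span_mono ?_)
    (Submodule.span_le.mpr (rootLattice_le_rootSpan false X))
  rintro _ ⟨x, hx, rfl⟩
  exact scaledRoot_false (D := D) ▸ scaledRoot_mem_rootLattice hx

theorem rootSpan_eq_of_hurwitzEquiv (h : HurwitzEquiv X Y) (hX : ∀ x ∈ X, x ∈ T) :
    D.rootSpan X = D.rootSpan Y := by
  rw [rootSpan_eq_span_rootLattice, rootLattice_eq_of_hurwitzEquiv false h hX,
    rootSpan_eq_span_rootLattice]

theorem rootsIndependent_iff_of_hurwitzEquiv (h : HurwitzEquiv X Y) (hX : ∀ x ∈ X, x ∈ T) :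
    D.RootsIndependent X ↔ D.RootsIndependent Y := by
  rw [RootsIndependent, rootSpan_eq_of_hurwitzEquiv h hX, h.length_eq, RootsIndependent]

theorem inRootLattices_iff_of_hurwitzEquiv (h : HurwitzEquiv X Y) (hX : ∀ x ∈ X, x ∈ T) (t : W) :
    D.InRootLattices X t ↔ D.InRootLattices Y t := by
  simp only [InRootLattices, rootLattice_eq_of_hurwitzEquiv _ h hX]

end HurwitzInvariance

section Independence

theorem rootSpan_append (X Y : List W) :
    D.rootSpan (X ++ Y) = D.rootSpan X ⊔ D.rootSpan Y := by
  simp only [rootSpan, List.mem_append, Set.ofPred_or, Set.image_union, Submodule.span_union]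

theorem rootLattice_append (i : Bool) (X Y : List W) :
    D.rootLattice i (X ++ Y) = D.rootLattice i X ⊔ D.rootLattice i Y := by
  simp only [rootLattice, List.mem_append, Set.ofPred_or, Set.image_union,
    AddSubgroup.closure_union]

instance (X : List W) : FiniteDimensional ℝ (D.rootSpan X) :=
  FiniteDimensional.span_of_finite ℝ (X.finite_toSet.image D.root)

theorem finrank_rootSpan_le (X : List W) : Module.finrank ℝ (D.rootSpan X) ≤ X.length := by
  have hrange : D.root '' {x | x ∈ X} = Set.range fun j : Fin X.length => D.root (X.get j) := by
    rw [← Set.range_list_get X, ← Set.range_comp]; rfl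
  rw [rootSpan, hrange]
  exact (finrank_range_le_card _).trans_eq (Fintype.card_fin _)

theorem RootsIndependent.of_append (h : D.RootsIndependent (X ++ Y)) :
    D.RootsIndependent X ∧ D.RootsIndependent Y ∧ Disjoint (D.rootSpan X) (D.rootSpan Y) := by
  have hX := D.finrank_rootSpan_le X
  have hY := D.finrank_rootSpan_le Y
  have hXY := Submodule.finrank_sup_add_finrank_inf_eq (D.rootSpan X) (D.rootSpan Y)
  rw [RootsIndependent, rootSpan_append, List.length_append] at h
  refine ⟨by rw [RootsIndependent]; omega, by rw [RootsIndependent]; omega, ?_⟩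
  rw [disjoint_iff, ← Submodule.finrank_eq_zero (R := ℝ)]
  omega

theorem RootsIndependent.root_notMem_rootSpan (hx : x ∈ T) (h : D.RootsIndependent (X ++ [x])) :
    D.root x ∉ D.rootSpan X := fun hmem => by
  have h0 := Submodule.disjoint_def.mp h.of_append.2.2 _ hmem
    (root_mem_rootSpan List.mem_cons_self)
  exact π_root_ne_zero hx (by rw [h0, map_zero])

variable (D) in
/-- The linear functional `l` vanishes on the roots of `X` and takes the value `1` on the root of
`x`: on the roots of `X ++ [x]` it reads off the last coordinate. -/
structure IsLastCoordinate (X : List W) (x : W) (l : U →ₗ[ℝ] ℝ) : Prop where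
  apply_eq_zero : ∀ v ∈ D.rootSpan X, l v = 0
  apply_root : l (D.root x) = 1

theorem RootsIndependent.exists_isLastCoordinate (hx : x ∈ T)
    (h : D.RootsIndependent (X ++ [x])) : ∃ l, D.IsLastCoordinate X x l := by
  obtain ⟨f, hfx, hf⟩ := Submodule.exists_le_ker_of_notMem (h.root_notMem_rootSpan hx)
  refine ⟨(f (D.root x))⁻¹ • f, fun v hv => ?_, by simp [hfx]⟩
  rw [LinearMap.smul_apply, LinearMap.mem_ker.mp (hf hv), smul_zero]

namespace IsLastCoordinate

variable {l : U →ₗ[ℝ] ℝ}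

theorem apply_scaledRoot (hl : D.IsLastCoordinate X x l)
    (i : Bool) : l (D.scaledRoot i x) = rootWeight i (D.π (D.root x)) := by
  rw [scaledRoot, map_smul, hl.apply_root, smul_eq_mul, mul_one]

theorem apply_act_prod (hl : D.IsLastCoordinate X x l) (hX : ∀ y ∈ X ++ [x], y ∈ T) (v : U) :
    l (D.act (X ++ [x]).prod v) = l v - ⟪D.π v, coroot (D.π (D.root x))⟫ := by
  obtain ⟨hX', hx⟩ := List.forall_mem_append.mp hX
  have hact := hl.apply_eq_zero _ (act_sub_mem_rootSpan hX' (list_prod_mem_closure X)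
    (D.act x v))
  rw [map_sub, sub_eq_zero] at hact
  rw [List.prod_append, List.prod_singleton, act_mul, hact,
    D.act_reflection x (hx x List.mem_cons_self), map_sub, map_smul, hl.apply_root, smul_eq_mul,
    mul_one]

theorem exists_apply_eq_of_mem_rootLattice (hl : D.IsLastCoordinate X x l)
    (hv : v ∈ D.rootLattice i (X ++ [x])) :
    ∃ n : ℤ, v - n • D.scaledRoot i x ∈ D.rootLattice i X ∧
      l v = n * rootWeight i (D.π (D.root x)) := by
  have hsingle : D.rootLattice i [x] = AddSubgroup.zmultiples (D.scaledRoot i x) := by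
    simp [rootLattice, AddSubgroup.zmultiples_eq_closure]
  rw [rootLattice_append, hsingle, AddSubgroup.mem_sup] at hv
  obtain ⟨a, ha, _, ⟨n, rfl⟩, rfl⟩ := hv
  refine ⟨n, by simpa using ha, ?_⟩
  rw [map_add, hl.apply_eq_zero _ (rootLattice_le_rootSpan i X ha)]
  simp [hl.apply_scaledRoot]

theorem mem_rootLattice_of_apply_eq_zero (hl : D.IsLastCoordinate X x l)
    (hx : x ∈ T) (hv : v ∈ D.rootLattice i (X ++ [x]))
    (h0 : l v = 0) : v ∈ D.rootLattice i X := by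
  obtain ⟨n, hmem, hn⟩ := hl.exists_apply_eq_of_mem_rootLattice hv
  have hn0 : n = 0 := by
    simpa [h0, (rootWeight_pos i (π_root_ne_zero hx)).ne', eq_comm] using hn
  simpa [hn0] using hmem

theorem inRootLattices_of_apply_eq_zero (hl : D.IsLastCoordinate X x l)
    (hx : x ∈ T) (h : D.InRootLattices (X ++ [x]) t)
    (h0 : l (D.root t) = 0) : D.InRootLattices X t := fun i =>
  hl.mem_rootLattice_of_apply_eq_zero hx (h i) (by rw [scaledRoot, map_smul, h0, smul_zero])

theorem mem_rootSpan_of_apply_eq_zero (hl : D.IsLastCoordinate X x l)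
    (hv : v ∈ D.rootSpan (X ++ [x])) (h0 : l v = 0) :
    v ∈ D.rootSpan X := by
  have hsingle : D.rootSpan [x] = Submodule.span ℝ {D.root x} := by simp [rootSpan]
  rw [rootSpan_append, hsingle, Submodule.mem_sup] at hv
  obtain ⟨a, ha, b, hb, rfl⟩ := hv
  obtain ⟨c, rfl⟩ := Submodule.mem_span_singleton.mp hb
  have hc : c = 0 := by simpa [hl.apply_eq_zero a ha, hl.apply_root] using h0
  simpa [hc] using ha

end IsLastCoordinate

theorem RootsIndependent.inner_eq_zero_of_act_prod_eq_self (hX : ∀ x ∈ X, x ∈ T)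
    (hR : D.RootsIndependent X) (hv : D.act X.prod v = v) :
    ∀ x ∈ X, ⟪D.π v, D.π (D.root x)⟫ = 0 := by
  induction X using List.reverseRecOn with
  | nil => simp
  | append_singleton X x ih =>
    obtain ⟨hX', hx⟩ := List.forall_mem_append.mp hX
    rw [List.forall_mem_singleton] at hx
    obtain ⟨l, hl⟩ := hR.exists_isLastCoordinate hx
    have hcoroot : ⟪D.π v, coroot (D.π (D.root x))⟫ = 0 := by
      have := hl.apply_act_prod hX v
      rw [hv] at this
      linarith
    rw [List.prod_append, List.prod_singleton, act_mul, D.act_reflection x hx, hcoroot, zero_smul,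
      sub_zero] at hv
    rw [List.forall_mem_append, List.forall_mem_singleton]
    exact ⟨ih hX' hR.of_append.1 hv, (inner_coroot_eq_zero (π_root_ne_zero hx)).mp hcoroot⟩

theorem inner_π_eq_zero_of_mem_rootSpan (hv : v ∈ D.rootSpan X) {a : E}
    (ha : ∀ x ∈ X, ⟪a, D.π (D.root x)⟫ = 0) : ⟪a, D.π v⟫ = 0 := by
  have hle : D.rootSpan X ≤ LinearMap.ker ((innerₛₗ ℝ a).comp D.π) := by
    rw [rootSpan, Submodule.span_le, Set.image_subset_iff]
    exact ha
  exact hle hv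

theorem π_eq_zero_of_inner_eq_zero (hv : v ∈ D.rootSpan X)
    (h : ∀ x ∈ X, ⟪D.π v, D.π (D.root x)⟫ = 0) : D.π v = 0 :=
  inner_self_eq_zero.mp (inner_π_eq_zero_of_mem_rootSpan hv h)

end Independence

end AffineRealization

section OrbitSteps

theorem exists_eq_zero_or_sign_change {e : ℤ → ℤ} (he : ∀ j, |e (j + 1) - e j| ≤ 2)
    (hp : ∃ p, e p ≤ 0) (hq : ∃ q, 0 ≤ e q) :
    ∃ j, e j = 0 ∨ (e j = 1 ∧ e (j + 1) = -1) ∨ (e j = -1 ∧ e (j + 1) = 1) := by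
  by_contra! hne
  have hsign : ∀ j, e (j + 1) < 0 ↔ e j < 0 := fun j => by
    have hstep := abs_le.mp (he j)
    have hj := hne j
    have hj' := hne (j + 1)
    omega
  have hconst : ∀ j, e j < 0 ↔ e 0 < 0 := fun j => by
    induction j with
    | zero => rfl
    | succ j ih => exact (hsign j).trans ih
    | pred j ih => rw [← ih, ← hsign, sub_add_cancel]
  obtain ⟨p, hp⟩ := hp
  obtain ⟨q, hq⟩ := hq
  exact absurd hq (not_le.mpr <| (hconst q).mpr ((hconst p).mp (hp.lt_of_ne (hne p).1)))

variable {E : Type*} [NormedAddCommGroup E] [InnerProductSpace ℝ E]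

theorem eq_of_inner_coroot_ge_two {a α : E} (hα : α ≠ 0) (hle : ⟪a, a⟫ ≤ ⟪α, α⟫)
    (h : 2 ≤ ⟪a, coroot α⟫) : a = α := by
  rw [inner_coroot, le_div_iff₀ (real_inner_self_pos.mpr hα)] at h
  have hsub : ⟪a - α, a - α⟫ ≤ 0 := by
    rw [inner_sub_sub_self, real_inner_comm a α]
    linarith
  exact sub_eq_zero.mp (real_inner_self_nonpos.mp hsub)

theorem abs_inner_coroot_le_two {a α : E} (hα : α ≠ 0) (hle : ⟪a, a⟫ ≤ ⟪α, α⟫) :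
    |⟪a, coroot α⟫| ≤ 2 ∧ (⟪a, coroot α⟫ = 2 → a = α) ∧ (⟪a, coroot α⟫ = -2 → a = -α) := by
  have hle_two : ∀ b : E, ⟪b, b⟫ ≤ ⟪α, α⟫ → ⟪b, coroot α⟫ ≤ 2 := fun b hb =>
    le_of_not_gt fun h => by
      rw [eq_of_inner_coroot_ge_two hα hb h.le, inner_coroot_self hα] at h
      exact h.false
  have hneg : ⟪-a, -a⟫ ≤ ⟪α, α⟫ := by rwa [inner_neg_neg]
  refine ⟨abs_le'.mpr ⟨hle_two a hle, by simpa using hle_two (-a) hneg⟩,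
    fun h => eq_of_inner_coroot_ge_two hα hle h.ge, fun h => ?_⟩
  rw [← eq_of_inner_coroot_ge_two hα hneg (by rw [inner_neg_left, h, neg_neg]), neg_neg]

/-- The Cartan number is at most two in absolute value in the direction of the shorter root, so
roots are used when `β` is the shorter one and coroots otherwise. -/
theorem exists_rootWeight_mul_inner_coroot_le {α β : E} (hα : α ≠ 0) (hβ : β ≠ 0) :
    ∃ i, ∀ a : E, ⟪a, a⟫ = ⟪β, β⟫ →
      ∃ c : ℝ, rootWeight i β * ⟪a, coroot α⟫ = c * rootWeight i α ∧
        |c| ≤ 2 ∧ (c = 2 → a = α) ∧ (c = -2 → a = -α) := by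
  rcases le_total ⟪β, β⟫ ⟪α, α⟫ with hle | hle
  · exact ⟨false, fun a ha => ⟨⟪a, coroot α⟫, by simp [rootWeight],
      abs_inner_coroot_le_two hα (ha.trans_le hle)⟩⟩
  · refine ⟨true, fun a ha => ?_⟩
    have ha0 : a ≠ 0 := by
      rintro rfl
      exact hβ (inner_self_eq_zero.mp (ha.symm.trans (inner_zero_left 0)))
    obtain ⟨hc, hpos, hneg⟩ := abs_inner_coroot_le_two ha0 (hle.trans_eq ha.symm)
    refine ⟨⟪α, coroot a⟫, ?_, hc, fun h => (hpos h).symm, fun h => by rw [hneg h, neg_neg]⟩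
    rw [← rootWeight_congr true ha, rootWeight_true_mul_inner_coroot]

end OrbitSteps

/-- Some list in the Hurwitz orbit of `X` contains `t`. -/
def HurwitzReachable {G : Type*} [Group G] (X : List G) (t : G) : Prop :=
  ∃ X', HurwitzEquiv X X' ∧ t ∈ X'

theorem HurwitzReachable.of_conj_zpow {G : Type*} [Group G] {X : List G} {t : G} (j : ℤ)
    (h : HurwitzReachable X (X.prod ^ j * t * (X.prod ^ j)⁻¹)) : HurwitzReachable X t := by
  obtain ⟨X', hXX', ht⟩ := h
  refine ⟨_, hXX'.trans (HurwitzEquiv.conj_zpow X' (-j)), List.mem_map.mpr ⟨_, ht, ?_⟩⟩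
  rw [← hXX'.prod_eq, zpow_neg, MulAut.conj_apply, inv_inv]
  simp [mul_assoc]

theorem HurwitzReachable.append_right {G : Type*} [Group G] {X : List G} {t : G}
    (h : HurwitzReachable X t) (Y : List G) : HurwitzReachable (X ++ Y) t := by
  obtain ⟨X', hXX', ht⟩ := h
  exact ⟨X' ++ Y, hXX'.append_right Y, List.mem_append_left Y ht⟩

namespace AffineRealization

variable {W : Type*} [Group W] {T : Set W} {U E : Type*} [AddCommGroup U] [Module ℝ U]
  [NormedAddCommGroup E] [InnerProductSpace ℝ E] {D : AffineRealization W T U E}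
  {X : List W} {g t x : W} {l : U →ₗ[ℝ] ℝ}

theorem prod_zpow_mem_closure (X : List W) (j : ℤ) :
    X.prod ^ j ∈ Subgroup.closure {x | x ∈ X} :=
  zpow_mem (list_prod_mem_closure X) j

theorem act_zpow_add_one (g : W) (j : ℤ) (u : U) :
    D.act (g ^ (j + 1)) u = D.act g (D.act (g ^ j) u) := by
  rw [← act_mul, add_comm, zpow_one_add]

theorem IsLastCoordinate.exists_orbit_steps (hl : D.IsLastCoordinate X x l)
    (hX : ∀ y ∈ X ++ [x], y ∈ T) (ht : t ∈ T) (hL : D.InRootLattices (X ++ [x]) t) :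
    ∃ c : ℝ, 0 < c ∧ ∃ e : ℤ → ℤ, ∀ j,
      l (D.act ((X ++ [x]).prod ^ j) (D.root t)) = e j * c ∧ |e (j + 1) - e j| ≤ 2 ∧
      (e (j + 1) - e j = -2 →
        D.π (D.act ((X ++ [x]).prod ^ j) (D.root t)) = D.π (D.root x) ∧ c = 1) ∧
      (e (j + 1) - e j = 2 →
        D.π (D.act ((X ++ [x]).prod ^ j) (D.root t)) = -D.π (D.root x) ∧ c = 1) := by
  have hx : x ∈ T := hX x (by simp)
  obtain ⟨i, hi⟩ := exists_rootWeight_mul_inner_coroot_le (D.π_root_ne_zero hx)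
    (D.π_root_ne_zero ht)
  set w := (X ++ [x]).prod
  set a := rootWeight i (D.π (D.root t)) with ha
  set b := rootWeight i (D.π (D.root x)) with hb
  have ha0 : 0 < a := rootWeight_pos i (π_root_ne_zero ht)
  have hb0 : 0 < b := rootWeight_pos i (π_root_ne_zero hx)
  have hint : ∀ j : ℤ, ∃ n : ℤ, a * l (D.act (w ^ j) (D.root t)) = n * b := fun j => by
    obtain ⟨n, -, hn⟩ := hl.exists_apply_eq_of_mem_rootLattice
      (act_mem_rootLattice hX (prod_zpow_mem_closure _ j) (hL i))
    exact ⟨n, by rwa [scaledRoot, map_smul, map_smul] at hn⟩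
  choose e he using hint
  refine ⟨b / a, div_pos hb0 ha0, e, fun j => ?_⟩
  have hnorm := D.inner_π_act_self (w ^ j) (D.root t)
  obtain ⟨c, hc, hc2, hpos, hneg⟩ := hi _ hnorm
  have hstep : (((e (j + 1) - e j : ℤ)) : ℝ) = -c := by
    have h := he (j + 1)
    rw [act_zpow_add_one, hl.apply_act_prod hX, mul_sub, he j, hc, ← sub_mul] at h
    rw [Int.cast_sub, ← mul_right_cancel₀ hb0.ne' h, sub_sub_cancel_left]
  have hone : ∀ y : E, ⟪y, y⟫ = ⟪D.π (D.root x), D.π (D.root x)⟫ →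
      D.π (D.act (w ^ j) (D.root t)) = y → b / a = 1 := fun y hy h => by
    rw [div_eq_one_iff_eq ha0.ne', ha, hb]
    exact rootWeight_congr i (by rw [← hnorm, h, hy])
  refine ⟨by rw [← mul_div_assoc, ← he j, mul_div_cancel_left₀ _ ha0.ne'], ?_, fun h => ?_,
    fun h => ?_⟩
  · rw [← abs_neg c, ← hstep] at hc2
    exact_mod_cast hc2
  · have := hpos (by rw [h] at hstep; push_cast at hstep; linarith)
    exact ⟨this, hone _ rfl this⟩
  · have := hneg (by rw [h] at hstep; push_cast at hstep; linarith)
    exact ⟨this, hone _ (inner_neg_neg _ _) this⟩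

theorem IsLastCoordinate.exists_apply_act_zpow (hl : D.IsLastCoordinate X x l)
    (hX : ∀ y ∈ X ++ [x], y ∈ T) (ht : t ∈ T) (hL : D.InRootLattices (X ++ [x]) t)
    (hp : ∃ p : ℤ, l (D.act ((X ++ [x]).prod ^ p) (D.root t)) ≤ 0)
    (hq : ∃ q : ℤ, 0 ≤ l (D.act ((X ++ [x]).prod ^ q) (D.root t))) :
    ∃ (j : ℤ) (u : U), u = D.act ((X ++ [x]).prod ^ j) (D.root t) ∧
      (l u = 0 ∨ (D.π u = D.π (D.root x) ∧ l u = 1) ∨ (D.π u = -D.π (D.root x) ∧ l u = -1)) := by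
  obtain ⟨c, hc, e, he⟩ := hl.exists_orbit_steps hX ht hL
  simp only [fun j => (he j).1] at hp hq
  obtain ⟨j, hj⟩ := exists_eq_zero_or_sign_change (fun j => (he j).2.1)
    (hp.imp fun p hp => by exact_mod_cast nonpos_of_mul_nonpos_left hp hc)
    (hq.imp fun q hq => by exact_mod_cast nonneg_of_mul_nonneg_left hq hc)
  obtain ⟨hlj, -, hpos, hneg⟩ := he j
  refine ⟨j, _, rfl, ?_⟩
  rcases hj with hj | ⟨hj, hj'⟩ | ⟨hj, hj'⟩
  · exact .inl (by rw [hlj, hj, Int.cast_zero, zero_mul])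
  · obtain ⟨hπ, rfl⟩ := hpos (by omega)
    exact .inr (.inl ⟨hπ, by rw [hlj, hj]; simp⟩)
  · obtain ⟨hπ, rfl⟩ := hneg (by omega)
    exact .inr (.inr ⟨hπ, by rw [hlj, hj]; simp⟩)

theorem conj_eq_of_act_root_eq (ht : t ∈ T) (hx : x ∈ T)
    (h : D.act g (D.root t) = D.root x ∨ D.act g (D.root t) = -D.root x) : g * t * g⁻¹ = x := by
  refine D.root_injective _ (D.conj_mem g t ht) _ hx ?_
  rcases D.root_conj g t ht with e | e <;> rcases h with h | h <;> simp [e, h]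

/-- Follow the last coordinate of the root of `t` along the orbit of the powers of the product: when
it hits `0` the list `X` takes over, and when it jumps from `±1` to `∓1` the root is that of `x`. -/
theorem IsLastCoordinate.hurwitzReachable (hl : D.IsLastCoordinate X x l)
    (hX : ∀ y ∈ X ++ [x], y ∈ T)
    (hdef : ∀ r ∈ D.rootSpan (X ++ [x]), D.π r = 0 → l r = 0 → r = 0)
    (hsub : ∀ t ∈ T, D.InRootLattices X t → HurwitzReachable X t)
    (ht : t ∈ T) (hL : D.InRootLattices (X ++ [x]) t)
    (hp : ∃ p : ℤ, l (D.act ((X ++ [x]).prod ^ p) (D.root t)) ≤ 0)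
    (hq : ∃ q : ℤ, 0 ≤ l (D.act ((X ++ [x]).prod ^ q) (D.root t))) :
    HurwitzReachable (X ++ [x]) t := by
  have hx : x ∈ T := hX x (by simp)
  obtain ⟨j, u, hu, hj⟩ := hl.exists_apply_act_zpow hX ht hL hp hq
  refine HurwitzReachable.of_conj_zpow j ?_
  set g := (X ++ [x]).prod ^ j
  have hg : g ∈ Subgroup.closure {y | y ∈ X ++ [x]} := prod_zpow_mem_closure _ j
  have huspan : u ∈ D.rootSpan (X ++ [x]) := hu ▸ act_mem_rootSpan hX hg hL.root_mem_rootSpan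
  have hxspan : D.root x ∈ D.rootSpan (X ++ [x]) := root_mem_rootSpan (by simp)
  have hlast : (u = D.root x ∨ u = -D.root x) →
      HurwitzReachable (X ++ [x]) (g * t * g⁻¹) := fun h => by
    rw [conj_eq_of_act_root_eq ht hx (hu ▸ h)]
    exact ⟨_, .refl _, by simp⟩
  rcases hj with h0 | ⟨hπ, h1⟩ | ⟨hπ, h1⟩
  · have hl0 : l (D.root (g * t * g⁻¹)) = 0 := by
      rcases D.root_conj g t ht with e | e <;> simp [e, ← hu, h0]
    exact (hsub _ (D.conj_mem g t ht)
      (hl.inRootLattices_of_apply_eq_zero hx (hL.conj hX hg ht) hl0)).append_right [x]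
  · refine hlast (.inl (sub_eq_zero.mp (hdef _ (sub_mem huspan hxspan) ?_ ?_)))
    · rw [map_sub, hπ, sub_self]
    · rw [map_sub, h1, hl.apply_root, sub_self]
  · refine hlast (.inr (eq_neg_of_add_eq_zero_left (hdef _ (add_mem huspan hxspan) ?_ ?_)))
    · rw [map_add, hπ, neg_add_cancel]
    · rw [map_add, h1, hl.apply_root, neg_add_cancel]

end AffineRealization

namespace AffineRealization

variable {W : Type*} [Group W] {T : Set W} {U E : Type*} [AddCommGroup U] [Module ℝ U]
  [NormedAddCommGroup E] [InnerProductSpace ℝ E] (D : AffineRealization W T U E)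

/-- The partial orbit sum of `v` under the cyclic group generated by `g`; for `n` a multiple of
the order of the linear part of `g` its image in `E` is fixed by `g`. -/
def orbitSum (g : W) (n : ℕ) (v : U) : U := ∑ j ∈ Finset.range n, D.act (g ^ j) v

/-- The span of the roots of `X` contains no imaginary vector, as happens when the reflections in
`X` generate a finite group. -/
def IsSpherical (X : List W) : Prop := ∀ u ∈ D.rootSpan X, D.π u = 0 → u = 0

variable {D} {X Y : List W} {g t x : W} {u v : U} {l : U →ₗ[ℝ] ℝ}

theorem IsSpherical.mono (hX : D.IsSpherical X) (h : D.rootSpan Y ≤ D.rootSpan X) :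
    D.IsSpherical Y := fun u hu => hX u (h hu)

theorem IsSpherical.append_left (hX : D.IsSpherical (X ++ Y)) : D.IsSpherical X :=
  hX.mono (rootSpan_mono (List.subset_append_left X Y))

theorem act_pow_add_one (g : W) (j : ℕ) (u : U) :
    D.act (g ^ (j + 1)) u = D.act g (D.act (g ^ j) u) := by
  rw [← act_mul, pow_succ']

theorem act_orbitSum_sub (g : W) (n : ℕ) (v : U) :
    D.act g (D.orbitSum g n v) - D.orbitSum g n v = D.act (g ^ n) v - v := by
  simp only [orbitSum, map_sum, ← act_pow_add_one, ← Finset.sum_sub_distrib]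
  simpa using Finset.sum_range_sub (fun j => D.act (g ^ j) v) n

theorem π_act_pow_orderOf_lin (g : W) (v : U) :
    D.π (D.act (g ^ orderOf (D.lin g)) v) = D.π v := by
  rw [D.π_act, map_pow, pow_orderOf_eq_one, Module.End.one_apply]

theorem orbitSum_mem_rootSpan (hX : ∀ x ∈ X, x ∈ T) (hv : v ∈ D.rootSpan X) (n : ℕ) :
    D.orbitSum X.prod n v ∈ D.rootSpan X :=
  sum_mem fun j _ => act_mem_rootSpan hX (pow_mem (list_prod_mem_closure X) j) hv

theorem exists_apply_nonpos_of_orbitSum {n : ℕ} (hn : 0 < n)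
    (h : l (D.orbitSum g n v) ≤ 0) : ∃ p : ℤ, l (D.act (g ^ p) v) ≤ 0 := by
  rw [orbitSum, map_sum, ← Finset.sum_const_zero (s := Finset.range n)] at h
  obtain ⟨j, -, hj⟩ :=
    Finset.exists_le_of_sum_le (Finset.nonempty_range_iff.mpr hn.ne') h
  exact ⟨j, by simpa using hj⟩

theorem exists_apply_nonneg_of_orbitSum {n : ℕ} (hn : 0 < n)
    (h : 0 ≤ l (D.orbitSum g n v)) : ∃ q : ℤ, 0 ≤ l (D.act (g ^ q) v) := by
  obtain ⟨q, hq⟩ := exists_apply_nonpos_of_orbitSum (D := D) (l := -l) hn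
    (by simpa using h)
  exact ⟨q, by simpa using hq⟩

section Spherical

theorem IsSpherical.eq_zero_of_act_prod_eq_self (hD : D.IsSpherical X)
    (hX : ∀ x ∈ X, x ∈ T) (hR : D.RootsIndependent X) (hv : v ∈ D.rootSpan X)
    (h : D.act X.prod v = v) : v = 0 :=
  hD v hv (π_eq_zero_of_inner_eq_zero hv (hR.inner_eq_zero_of_act_prod_eq_self hX h))

theorem IsSpherical.orbitSum_eq_zero (hD : D.IsSpherical X) (hX : ∀ x ∈ X, x ∈ T)
    (hR : D.RootsIndependent X) (hv : v ∈ D.rootSpan X) :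
    D.orbitSum X.prod (orderOf (D.lin X.prod)) v = 0 := by
  refine hD.eq_zero_of_act_prod_eq_self hX hR (orbitSum_mem_rootSpan hX hv _) ?_
  rw [← sub_eq_zero, act_orbitSum_sub]
  refine hD _ (act_sub_mem_rootSpan hX (pow_mem (list_prod_mem_closure X) _) v) ?_
  rw [map_sub, π_act_pow_orderOf_lin, sub_self]

theorem IsSpherical.hurwitzReachable (hD : D.IsSpherical X) (hX : ∀ x ∈ X, x ∈ T)
    (hR : D.RootsIndependent X) :
    ∀ t ∈ T, D.InRootLattices X t → HurwitzReachable X t := by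
  induction X using List.reverseRecOn with
  | nil =>
    intro t ht hL
    have h0 : D.root t = 0 := by simpa [rootSpan] using hL.root_mem_rootSpan
    exact absurd (by rw [h0, map_zero]) (D.π_root_ne_zero ht)
  | append_singleton X x ih =>
    intro t ht hL
    obtain ⟨l, hl⟩ := hR.exists_isLastCoordinate (hX x (by simp))
    have hpos := (D.isOfFinOrder_lin (X ++ [x]).prod).orderOf_pos
    have hsum := congrArg l (hD.orbitSum_eq_zero hX hR hL.root_mem_rootSpan)
    rw [map_zero] at hsum
    exact hl.hurwitzReachable hX (fun r hr hπ _ => hD r hr hπ)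
      (ih hD.append_left (List.forall_mem_append.mp hX).1 hR.of_append.1) ht hL
      (exists_apply_nonpos_of_orbitSum hpos hsum.le) (exists_apply_nonneg_of_orbitSum hpos hsum.ge)

theorem IsSpherical.exists_act_prod_sub_eq (hD : D.IsSpherical X) (hX : ∀ x ∈ X, x ∈ T)
    (hR : D.RootsIndependent X) (hv : v ∈ D.rootSpan X) :
    ∃ u ∈ D.rootSpan X, D.act X.prod u - u = v := by
  let f : D.rootSpan X →ₗ[ℝ] D.rootSpan X := (D.act X.prod - 1).restrict fun v _ =>
    act_sub_mem_rootSpan hX (list_prod_mem_closure X) v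
  have hf : Function.Injective f := by
    rw [← LinearMap.ker_eq_bot, LinearMap.ker_eq_bot']
    rintro ⟨v, hv⟩ h
    exact Subtype.ext (hD.eq_zero_of_act_prod_eq_self hX hR hv
      (sub_eq_zero.mp (congrArg Subtype.val h)))
  obtain ⟨u, hu⟩ := LinearMap.surjective_of_injective hf ⟨v, hv⟩
  exact ⟨u, u.2, congrArg Subtype.val hu⟩

/-- The span of the roots of an independent spherical `X` is the image of `X.prod - 1`, which lies
in the span of the roots of any other factorization. -/
theorem IsSpherical.rootSpan_eq_of_prod_eq (hD : D.IsSpherical X) (hX : ∀ x ∈ X, x ∈ T)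
    (hR : D.RootsIndependent X) (hY : ∀ y ∈ Y, y ∈ T) (hprod : X.prod = Y.prod)
    (hlen : X.length = Y.length) : D.rootSpan Y = D.rootSpan X := by
  have hle : D.rootSpan X ≤ D.rootSpan Y := fun v hv => by
    obtain ⟨u, -, rfl⟩ := hD.exists_act_prod_sub_eq hX hR hv
    rw [hprod]
    exact act_sub_mem_rootSpan hY (list_prod_mem_closure Y) _
  exact (Submodule.eq_of_le_of_finrank_le hle
    ((finrank_rootSpan_le Y).trans_eq (hlen.symm.trans hR.symm))).symm

theorem IsSpherical.hurwitzEquiv (hD : D.IsSpherical X) (hX : ∀ x ∈ X, x ∈ T)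
    (hR : D.RootsIndependent X) (hY : ∀ y ∈ Y, y ∈ T) (hprod : X.prod = Y.prod)
    (hlen : X.length = Y.length) (hL : ∀ y ∈ Y, D.InRootLattices X y) : HurwitzEquiv X Y := by
  induction Y using List.reverseRecOn generalizing X with
  | nil =>
    rw [List.length_eq_zero_iff.mp hlen]
    exact .refl _
  | append_singleton Y y ih =>
    obtain ⟨hY', hy⟩ := List.forall_mem_append.mp hY
    rw [List.forall_mem_singleton] at hy
    obtain ⟨X₁, hX₁, hyX₁⟩ := hD.hurwitzReachable hX hR y hy (hL y (by simp))
    obtain ⟨X', hX'⟩ := HurwitzEquiv.exists_append_singleton_of_mem hyX₁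
    have hequiv := hX₁.trans hX'
    have hT := (List.forall_mem_append.mp ((D.forall_mem_iff hequiv).mp hX)).1
    have hR' := (rootsIndependent_iff_of_hurwitzEquiv hequiv hX).mp hR
    have hD' : D.IsSpherical X' :=
      (hD.mono (rootSpan_eq_of_hurwitzEquiv hequiv hX).ge).append_left
    have hprod' : X'.prod = Y.prod := by simpa using hequiv.prod_eq.symm.trans hprod
    have hlen' : X'.length = Y.length := by simpa using hequiv.length_eq.symm.trans hlen
    obtain ⟨l, hl⟩ := hR'.exists_isLastCoordinate hy
    have hspan := hD'.rootSpan_eq_of_prod_eq hT hR'.of_append.1 hY' hprod' hlen'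
    refine hequiv.trans ((ih hD' hT hR'.of_append.1 hY' hprod' hlen' fun z hz => ?_).append_right _)
    have hzL := (inRootLattices_iff_of_hurwitzEquiv hequiv hX z).mp (hL z (by simp [hz]))
    exact hl.inRootLattices_of_apply_eq_zero hy hzL
      (hl.apply_eq_zero _ (hspan ▸ root_mem_rootSpan hz))

end Spherical

end AffineRealization

theorem exists_int_add_mul_nonpos (a : ℝ) {b : ℝ} (hb : b ≠ 0) : ∃ k : ℤ, a + k * b ≤ 0 := by
  rcases hb.lt_or_gt with hneg | hpos
  · refine ⟨⌈-a / b⌉, ?_⟩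
    have := mul_le_mul_of_nonpos_right (Int.le_ceil (-a / b)) hneg.le
    rw [div_mul_cancel₀ _ hb] at this
    linarith
  · refine ⟨⌊-a / b⌋, ?_⟩
    have := mul_le_mul_of_nonneg_right (Int.floor_le (-a / b)) hpos.le
    rw [div_mul_cancel₀ _ hb] at this
    linarith

theorem exists_int_add_mul_nonneg (a : ℝ) {b : ℝ} (hb : b ≠ 0) : ∃ k : ℤ, 0 ≤ a + k * b := by
  obtain ⟨k, hk⟩ := exists_int_add_mul_nonpos (-a) (neg_ne_zero.mpr hb)
  exact ⟨k, by linarith⟩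

namespace AffineRealization

variable {W : Type*} [Group W] {T : Set W} {U E : Type*} [AddCommGroup U] [Module ℝ U]
  [NormedAddCommGroup E] [InnerProductSpace ℝ E] (D : AffineRealization W T U E)

/-- The displacement of `v` under the smallest positive power of `g` with trivial linear part; it
is an imaginary vector. -/
noncomputable def shift (g : W) (v : U) : U := D.act (g ^ orderOf (D.lin g)) v - v

/-- The imaginary vectors in the span of the roots of `X` form at most a line. -/
def ImaginaryLine (X : List W) : Prop :=
  ∃ ρ : U, ∀ r ∈ D.rootSpan X, D.π r = 0 → ∃ c : ℝ, r = c • ρ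

variable {D} {X Y : List W} {g t x y : W} {u v N : U} {l : U →ₗ[ℝ] ℝ}

theorem π_shift (g : W) (v : U) : D.π (D.shift g v) = 0 := by
  rw [shift, map_sub, π_act_pow_orderOf_lin, sub_self]

theorem shift_mem_rootSpan (hX : ∀ x ∈ X, x ∈ T) (v : U) : D.shift X.prod v ∈ D.rootSpan X :=
  act_sub_mem_rootSpan hX (pow_mem (list_prod_mem_closure X) _) v

theorem act_orbitSum_orderOf_lin (g : W) (v : U) :
    D.act g (D.orbitSum g (orderOf (D.lin g)) v) =
      D.orbitSum g (orderOf (D.lin g)) v + D.shift g v := by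
  rw [← sub_eq_iff_eq_add', act_orbitSum_sub, shift]

theorem lin_π_orbitSum_orderOf_lin (g : W) (v : U) :
    D.lin g (D.π (D.orbitSum g (orderOf (D.lin g)) v)) =
      D.π (D.orbitSum g (orderOf (D.lin g)) v) := by
  rw [← D.π_act, act_orbitSum_orderOf_lin, map_add, π_shift, add_zero]

theorem inner_π_orbitSum {c : E} (hc : D.lin g c = c) (n : ℕ) (v : U) :
    ⟪c, D.π (D.orbitSum g n v)⟫ = n * ⟪c, D.π v⟫ := by
  have hterm : ∀ j : ℕ, ⟪c, D.π (D.act (g ^ j) v)⟫ = ⟪c, D.π v⟫ := fun j => by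
    induction j with
    | zero => simp
    | succ j ih =>
      rw [act_pow_add_one, D.π_act, ← ih]
      conv_lhs => rw [← hc, D.inner_lin]
  simp only [orbitSum, map_sum, inner_sum, hterm, Finset.sum_const, Finset.card_range, nsmul_eq_mul]

theorem act_zpow_of_act_eq_add (hv : D.act g v = v + N) (hN : D.act g N = N) (k : ℤ) :
    D.act (g ^ k) v = v + (k : ℝ) • N := by
  have hinv : ∀ {u}, D.act g⁻¹ (D.act g u) = u := fun {u} => by
    rw [← act_mul, inv_mul_cancel, map_one, Module.End.one_apply]
  have hN' : D.act g⁻¹ N = N := by simpa only [hN] using hinv (u := N)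
  have hv' : D.act g⁻¹ v = v - N := by
    have := hinv (u := v)
    rw [hv, map_add, hN'] at this
    exact eq_sub_of_add_eq this
  induction k with
  | zero => simp
  | succ k ih =>
    rw [act_zpow_add_one, ih, map_add, map_smul, hv, hN]
    push_cast
    module
  | pred k ih =>
    rw [sub_eq_neg_add, zpow_add, zpow_neg_one, act_mul, ih, map_add, map_smul, hv', hN']
    push_cast
    module

theorem act_pow_orderOf_lin_zpow (hX : ∀ x ∈ X, x ∈ T) (v : U) (k : ℤ) :
    D.act (X.prod ^ (orderOf (D.lin X.prod) * k : ℤ)) v = v + (k : ℝ) • D.shift X.prod v := by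
  rw [zpow_mul, zpow_natCast]
  exact act_zpow_of_act_eq_add (add_sub_cancel _ _).symm (act_eq_self_of_π_eq_zero hX
    (pow_mem (list_prod_mem_closure X) _) (π_shift _ v)) k

section LastCoordinate

theorem ImaginaryLine.exists_eq_smul (hX : D.ImaginaryLine X) (hu : u ∈ D.rootSpan X)
    (hπu : D.π u = 0) (hu0 : u ≠ 0) (hv : v ∈ D.rootSpan X) (hπv : D.π v = 0) :
    ∃ c : ℝ, v = c • u := by
  obtain ⟨ρ, hρ⟩ := hX
  obtain ⟨a, rfl⟩ := hρ u hu hπu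
  obtain ⟨b, rfl⟩ := hρ v hv hπv
  have ha : a ≠ 0 := left_ne_zero_of_smul hu0
  exact ⟨b / a, by rw [smul_smul, div_mul_cancel₀ _ ha]⟩

theorem ImaginaryLine.eq_zero_of_apply_eq_zero (hX : D.ImaginaryLine X)
    (hu : u ∈ D.rootSpan X) (hπu : D.π u = 0) (hlu : l u ≠ 0) (hv : v ∈ D.rootSpan X)
    (hπv : D.π v = 0) (hlv : l v = 0) : v = 0 := by
  have hu0 : u ≠ 0 := by
    rintro rfl
    exact hlu (map_zero l)
  obtain ⟨c, rfl⟩ := hX.exists_eq_smul hu hπu hu0 hv hπv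
  rw [map_smul, smul_eq_mul, mul_eq_zero, or_iff_left hlu] at hlv
  rw [hlv, zero_smul]

theorem ImaginaryLine.isSpherical (hline : D.ImaginaryLine (X ++ [x]))
    (hl : D.IsLastCoordinate X x l) (hu : u ∈ D.rootSpan (X ++ [x])) (hπu : D.π u = 0)
    (hlu : l u ≠ 0) : D.IsSpherical X := fun v hv hπv =>
  hline.eq_zero_of_apply_eq_zero hu hπu hlu (rootSpan_mono (List.subset_append_left X _) hv) hπv
    (hl.apply_eq_zero v hv)

theorem ImaginaryLine.of_rootSpan_eq (hX : D.ImaginaryLine X) (h : D.rootSpan X = D.rootSpan Y) :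
    D.ImaginaryLine Y := by
  rwa [ImaginaryLine, ← h]

theorem RootsIndependent.exists_isLastCoordinate_apply_ne_zero (hX : ∀ x ∈ X, x ∈ T)
    (hR : D.RootsIndependent X) (hu : u ∈ D.rootSpan X) (hu0 : u ≠ 0) :
    ∃ X' x l, HurwitzEquiv X (X' ++ [x]) ∧ D.IsLastCoordinate X' x l ∧ l u ≠ 0 := by
  induction X using List.reverseRecOn with
  | nil => exact absurd (by simpa [rootSpan] using hu) hu0
  | append_singleton X x ih =>
    obtain ⟨hX', hx⟩ := List.forall_mem_append.mp hX
    rw [List.forall_mem_singleton] at hx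
    obtain ⟨l, hl⟩ := hR.exists_isLastCoordinate hx
    by_cases hlu : l u = 0
    swap
    · exact ⟨X, x, l, .refl _, hl, hlu⟩
    have huX := hl.mem_rootSpan_of_apply_eq_zero hu hlu
    obtain ⟨A, a, m, hA, hm, hmu⟩ := ih hX' hR.of_append.1 huX
    have hequiv : HurwitzEquiv (X ++ [x]) ((A ++ [x]) ++ [x⁻¹ * a * x]) :=
      (hA.append_right [x]).trans (.symm (by
        simpa [mul_assoc] using HurwitzEquiv.move A [] x (x⁻¹ * a * x)))
    have hlA : D.IsLastCoordinate A x l := by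
      refine ⟨fun v hv => hl.apply_eq_zero v ?_, hl.apply_root⟩
      rw [rootSpan_eq_of_hurwitzEquiv hA hX']
      exact rootSpan_mono (List.subset_append_left A _) hv
    have ha : x⁻¹ * a * x ∈ T := (D.forall_mem_iff hequiv).mp hX _ (by simp)
    obtain ⟨k, hk⟩ :=
      ((rootsIndependent_iff_of_hurwitzEquiv hequiv hX).mp hR).exists_isLastCoordinate ha
    refine ⟨_, _, k, hequiv, hk, fun hku => hmu (hm.apply_eq_zero u ?_)⟩
    rw [rootSpan_eq_of_hurwitzEquiv hequiv hX] at hu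
    exact hlA.mem_rootSpan_of_apply_eq_zero (hk.mem_rootSpan_of_apply_eq_zero hu hku) hlu

end LastCoordinate

section Transitivity

theorem exists_lin_prod_eq_self (hX : ∀ y ∈ X ++ [x], y ∈ T) (hD : D.IsSpherical X)
    (hR : D.RootsIndependent X) (hu : u ∈ D.rootSpan X) (hπu : D.π u = D.π (D.root x)) :
    ∃ b ∈ D.rootSpan X, D.lin (X ++ [x]).prod (D.π b) = D.π b ∧
      ⟪D.π b, coroot (D.π (D.root x))⟫ = 1 := by
  obtain ⟨hX', hx⟩ := List.forall_mem_append.mp hX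
  rw [List.forall_mem_singleton] at hx
  obtain ⟨b, hb, hbu⟩ := hD.exists_act_prod_sub_eq hX' hR
    (act_mem_rootSpan hX' (list_prod_mem_closure X) hu)
  have hact : D.act X.prod (b - u) = b := by
    rw [map_sub, ← hbu, sub_sub_cancel]
  have hnorm : 2 * ⟪D.π b, D.π u⟫ = ⟪D.π u, D.π u⟫ := by
    have := D.inner_π_act_self X.prod (b - u)
    rw [hact, map_sub, inner_sub_sub_self, real_inner_comm (D.π b) (D.π u)] at this
    linarith
  have hcoroot : ⟪D.π b, coroot (D.π (D.root x))⟫ = 1 := by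
    rw [inner_coroot, ← hπu, hnorm, hπu, div_self (inner_self_ne_zero.mpr (π_root_ne_zero hx))]
  refine ⟨b, hb, ?_, hcoroot⟩
  rw [List.prod_append, List.prod_singleton, map_mul, Module.End.mul_apply, D.lin_reflection x hx,
    hcoroot, one_smul, ← hπu, ← map_sub, ← D.π_act, hact]

theorem π_orbitSum_eq_zero_of_shift_eq_zero (hX : ∀ x ∈ X, x ∈ T) (hR : D.RootsIndependent X)
    (hv : v ∈ D.rootSpan X) (h : D.shift X.prod v = 0) :
    D.π (D.orbitSum X.prod (orderOf (D.lin X.prod)) v) = 0 :=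
  π_eq_zero_of_inner_eq_zero (orbitSum_mem_rootSpan hX hv _)
    (hR.inner_eq_zero_of_act_prod_eq_self hX (by rw [act_orbitSum_orderOf_lin, h, add_zero]))

theorem exists_mem_shift_ne_zero (hX : ∀ x ∈ X, x ∈ T) (hR : D.RootsIndependent X)
    (hline : D.ImaginaryLine X) (hD : ¬ D.IsSpherical X) (hY : ∀ y ∈ Y, y ∈ T)
    (hprod : X.prod = Y.prod) (hYX : ∀ y ∈ Y, D.root y ∈ D.rootSpan X) :
    ∃ y ∈ Y, D.shift X.prod (D.root y) ≠ 0 := by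
  obtain ⟨u, hu, hπu, hu0⟩ : ∃ u ∈ D.rootSpan X, D.π u = 0 ∧ u ≠ 0 := by
    simpa [IsSpherical] using hD
  obtain ⟨X', x, l, hequiv, hl, hlu⟩ :=
    hR.exists_isLastCoordinate_apply_ne_zero hX hu hu0
  have hspan := D.rootSpan_eq_of_hurwitzEquiv hequiv hX
  have hT := (D.forall_mem_iff hequiv).mp hX
  have hD' := (hline.of_rootSpan_eq hspan).isSpherical hl (hspan ▸ hu) hπu hlu
  obtain ⟨b, -, hb, hbx⟩ := exists_lin_prod_eq_self (u := D.root x - (l u)⁻¹ • u) hT hD'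
    ((rootsIndependent_iff_of_hurwitzEquiv hequiv hX).mp hR).of_append.1
    (hl.mem_rootSpan_of_apply_eq_zero
      (sub_mem (root_mem_rootSpan (by simp)) (Submodule.smul_mem _ _ (hspan ▸ hu)))
      (by simp [hl.apply_root, hlu])) (by simp [hπu])
  obtain ⟨y, hy, hby⟩ : ∃ y ∈ Y, ⟪D.π b, D.π (D.root y)⟫ ≠ 0 := by
    by_contra! hno
    have hfix := act_eq_self_of_inner_eq_zero hY (list_prod_mem_closure Y) hno
    have := hl.apply_act_prod hT b
    rw [← hequiv.prod_eq, hprod, hfix, hbx] at this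
    linarith
  refine ⟨y, hy, fun hshift => ?_⟩
  have hsum := D.inner_π_orbitSum (g := X.prod) (hequiv.prod_eq ▸ hb)
    (orderOf (D.lin X.prod)) (D.root y)
  rw [π_orbitSum_eq_zero_of_shift_eq_zero hX hR (hYX y hy) hshift, inner_zero_right] at hsum
  exact mul_ne_zero (Nat.cast_ne_zero.mpr (D.isOfFinOrder_lin _).orderOf_pos.ne') hby hsum.symm

theorem IsLastCoordinate.apply_shift_root_ne_zero (hl : D.IsLastCoordinate X x l)
    (hX : ∀ y ∈ X ++ [x], y ∈ T) (h : D.shift (X ++ [x]).prod (D.root x) ≠ 0) :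
    l (D.shift (X ++ [x]).prod (D.root x)) ≠ 0 := by
  set g := (X ++ [x]).prod
  set S := D.orbitSum g (orderOf (D.lin g)) (D.root x)
  have hS : D.act g S = S + D.shift g (D.root x) := D.act_orbitSum_orderOf_lin g _
  have hπS : D.π S ≠ 0 := fun h0 => h (by
    rwa [act_eq_self_of_π_eq_zero hX (list_prod_mem_closure _) h0, left_eq_add] at hS)
  have hSx : ⟪D.π S, D.π (D.root x)⟫ ≠ 0 := fun h0 => by
    have := D.inner_π_orbitSum (D.lin_π_orbitSum_orderOf_lin g (D.root x)) (orderOf (D.lin g))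
      (D.root x)
    rw [h0, mul_zero, inner_self_eq_zero] at this
    exact hπS this
  have hlS := hl.apply_act_prod hX S
  rw [hS, map_add, sub_eq_add_neg, add_right_inj] at hlS
  rw [hlS, neg_ne_zero]
  exact mt (inner_coroot_eq_zero (π_root_ne_zero (hX x (by simp)))).mp hSx

theorem ImaginaryLine.hurwitzReachable (hline : D.ImaginaryLine X) (hX : ∀ x ∈ X, x ∈ T)
    (hR : D.RootsIndependent X) (ht : t ∈ T) (hL : D.InRootLattices X t)
    (hshift : D.shift X.prod (D.root t) ≠ 0) : HurwitzReachable X t := by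
  obtain ⟨X', x, l, hequiv, hl, hlN⟩ :=
    hR.exists_isLastCoordinate_apply_ne_zero hX (shift_mem_rootSpan hX _) hshift
  have hspan := D.rootSpan_eq_of_hurwitzEquiv hequiv hX
  have hT := (D.forall_mem_iff hequiv).mp hX
  have hline' := hline.of_rootSpan_eq hspan
  have hmem := hspan ▸ D.shift_mem_rootSpan hX (D.root t)
  have hR' := ((rootsIndependent_iff_of_hurwitzEquiv hequiv hX).mp hR).of_append.1
  have horbit (k : ℤ) :=
    congrArg l (D.act_pow_orderOf_lin_zpow hX (D.root t) k)
  simp only [map_add, map_smul, smul_eq_mul, hequiv.prod_eq] at horbit hlN hmem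
  obtain ⟨p, hp⟩ := exists_int_add_mul_nonpos (l (D.root t)) hlN
  obtain ⟨q, hq⟩ := exists_int_add_mul_nonneg (l (D.root t)) hlN
  obtain ⟨X'', hX'', htX''⟩ := hl.hurwitzReachable hT
    (fun r hr hπ => hline'.eq_zero_of_apply_eq_zero hmem (π_shift _ _) hlN hr hπ)
    ((hline'.isSpherical hl hmem (π_shift _ _) hlN).hurwitzReachable
      (List.forall_mem_append.mp hT).1 hR') ht
    ((D.inRootLattices_iff_of_hurwitzEquiv hequiv hX t).mp hL)
    ⟨_, (horbit p).trans_le hp⟩ ⟨_, hq.trans_eq (horbit q).symm⟩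
  exact ⟨X'', hequiv.trans hX'', htX''⟩

theorem forall_inRootLattices_of_hurwitzEquiv {Z : List W} (h : HurwitzEquiv Y Z)
    (hY : ∀ y ∈ Y, y ∈ T) (hL : ∀ y ∈ Y, D.InRootLattices X y) :
    ∀ z ∈ Z, D.InRootLattices X z := fun z hz i => by
  have hle : D.rootLattice i Y ≤ D.rootLattice i X :=
    (AddSubgroup.closure_le _).mpr (Set.image_subset_iff.mpr fun y hy => hL y hy i)
  exact hle (D.rootLattice_eq_of_hurwitzEquiv i h hY ▸ scaledRoot_mem_rootLattice hz)

theorem ImaginaryLine.hurwitzEquiv (hline : D.ImaginaryLine X) (hX : ∀ x ∈ X, x ∈ T)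
    (hR : D.RootsIndependent X) (hY : ∀ y ∈ Y, y ∈ T) (hprod : X.prod = Y.prod)
    (hlen : X.length = Y.length) (hL : ∀ y ∈ Y, D.InRootLattices X y) : HurwitzEquiv X Y := by
  by_cases hD : D.IsSpherical X
  · exact hD.hurwitzEquiv hX hR hY hprod hlen hL
  obtain ⟨y, hyY, hshift⟩ := exists_mem_shift_ne_zero hX hR hline hD hY hprod
    fun y hy => (hL y hy).root_mem_rootSpan
  obtain ⟨X₁, hX₁, hyX₁⟩ := hline.hurwitzReachable hX hR (hY y hyY) (hL y hyY) hshift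
  obtain ⟨X', hX'⟩ := HurwitzEquiv.exists_append_singleton_of_mem hyX₁
  obtain ⟨Y', hY'⟩ := HurwitzEquiv.exists_append_singleton_of_mem hyY
  have hequiv := hX₁.trans hX'
  have hXT := (D.forall_mem_iff hequiv).mp hX
  have hX'T := (List.forall_mem_append.mp hXT).1
  have hY'T := (List.forall_mem_append.mp ((D.forall_mem_iff hY').mp hY)).1
  have hR' := (rootsIndependent_iff_of_hurwitzEquiv hequiv hX).mp hR
  have hspan := D.rootSpan_eq_of_hurwitzEquiv hequiv hX
  have hprod' : X'.prod = Y'.prod := by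
    simpa using (hequiv.prod_eq.symm.trans hprod).trans hY'.prod_eq
  have hlen' : X'.length = Y'.length := by
    simpa using (hequiv.length_eq.symm.trans hlen).trans hY'.length_eq
  obtain ⟨l, hl⟩ := hR'.exists_isLastCoordinate (hY y hyY)
  have hmem := hspan ▸ D.shift_mem_rootSpan hX (D.root y)
  rw [hequiv.prod_eq] at hshift hmem
  have hD' := (hline.of_rootSpan_eq hspan).isSpherical hl hmem (π_shift _ _)
    (hl.apply_shift_root_ne_zero hXT hshift)
  have hspan' := hD'.rootSpan_eq_of_prod_eq hX'T hR'.of_append.1 hY'T hprod' hlen'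
  have hequiv' := hD'.hurwitzEquiv hX'T hR'.of_append.1 hY'T hprod' hlen' fun z hz =>
    hl.inRootLattices_of_apply_eq_zero (hY y hyY)
      ((D.inRootLattices_iff_of_hurwitzEquiv hequiv hX z).mp
        (forall_inRootLattices_of_hurwitzEquiv hY' hY hL z (by simp [hz])))
      (hl.apply_eq_zero _ (hspan' ▸ root_mem_rootSpan hz))
  exact hequiv.trans ((hequiv'.append_right _).trans hY'.symm)

end Transitivity

end AffineRealization

theorem mem_span_singleton_of_smul_add_smul_eq_zero {V : Type*} [AddCommGroup V] [Module ℝ V]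
    {r s : V} {p q : ℝ} (hpq : p ≠ 0 ∨ q ≠ 0) (h : p • r + q • s = 0) (hs : s ≠ 0) :
    r ∈ Submodule.span ℝ {s} := by
  have hp : p ≠ 0 := by
    rintro rfl
    have hq := hpq.resolve_left (not_not.mpr rfl)
    rw [zero_smul, zero_add, smul_eq_zero] at h
    exact h.elim hq hs
  refine Submodule.mem_span_singleton.mpr ⟨-(p⁻¹ * q), ?_⟩
  rw [neg_smul, mul_smul, neg_eq_iff_add_eq_zero, ← inv_smul_smul₀ hp r, ← smul_add, add_comm,
    h, smul_zero]

namespace AffineRealization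

variable {W : Type*} [Group W] {T : Set W} {U E : Type*} [AddCommGroup U] [Module ℝ U]
  [NormedAddCommGroup E] [InnerProductSpace ℝ E] (D : AffineRealization W T U E)

/-- The list `X` of reflections cannot be split into two nonempty mutually orthogonal parts: a
property that passes from a member to every member not orthogonal to it holds everywhere as soon as
it holds somewhere. -/
def IsConnected (X : List W) : Prop :=
  ∀ p : W → Prop, (∃ x ∈ X, p x) →
    (∀ x ∈ X, ∀ x' ∈ X, p x → ⟪D.π (D.root x), D.π (D.root x')⟫ ≠ 0 → p x') → ∀ x ∈ X, p x

/-- The roots, with both signs, of all reflections in the group generated by `X`. -/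
def generatedRoots (X : List W) : Set U :=
  {v | ∃ t ∈ T, t ∈ Subgroup.closure {x | x ∈ X} ∧ (v = D.root t ∨ v = -D.root t)}

variable {D} {X : List W} {g t x : W} {r s u v z ρ : U}

section GeneratedRoots

theorem root_mem_generatedRoots (hx : x ∈ X) (hxT : x ∈ T) : D.root x ∈ D.generatedRoots X :=
  ⟨x, hxT, Subgroup.subset_closure hx, .inl rfl⟩

theorem act_mem_generatedRoots (hg : g ∈ Subgroup.closure {x | x ∈ X})
    (hv : v ∈ D.generatedRoots X) : D.act g v ∈ D.generatedRoots X := by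
  obtain ⟨t, ht, htX, htv⟩ := hv
  refine ⟨_, D.conj_mem g t ht, mul_mem (mul_mem hg htX) (inv_mem hg), ?_⟩
  rcases htv with rfl | rfl <;> rcases D.root_conj g t ht with h | h <;> simp [h]

theorem π_ne_zero_of_mem_generatedRoots (hv : v ∈ D.generatedRoots X) : D.π v ≠ 0 := by
  obtain ⟨t, ht, -, rfl | rfl⟩ := hv
  · exact π_root_ne_zero ht
  · simpa using π_root_ne_zero ht

theorem exists_act_eq_of_mem_generatedRoots (hv : v ∈ D.generatedRoots X) :
    ∃ t ∈ Subgroup.closure {x | x ∈ X}, ∀ u, D.act t u = u - ⟪D.π u, coroot (D.π v)⟫ • v := by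
  obtain ⟨t, ht, htX, rfl | rfl⟩ := hv
  · exact ⟨t, htX, D.act_reflection t ht⟩
  · exact ⟨t, htX, fun u => by simp [D.act_reflection t ht, coroot]⟩

theorem sub_smul_mem_generatedRoots (hv : v ∈ D.generatedRoots X) (hu : u ∈ D.generatedRoots X) :
    u - ⟪D.π u, coroot (D.π v)⟫ • v ∈ D.generatedRoots X := by
  obtain ⟨t, ht, hact⟩ := exists_act_eq_of_mem_generatedRoots hv
  exact hact u ▸ act_mem_generatedRoots ht hu

/-- The product of the reflections in `z` and `z + r` is a translation along `r`. -/
theorem add_smul_mem_generatedRoots (hz : z ∈ D.generatedRoots X) (hr : D.π r = 0)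
    (hzr : z + r ∈ D.generatedRoots X) (hv : v ∈ D.generatedRoots X) :
    v + ⟪D.π v, coroot (D.π z)⟫ • r ∈ D.generatedRoots X := by
  have h := sub_smul_mem_generatedRoots hzr (sub_smul_mem_generatedRoots hz hv)
  rw [map_add, hr, add_zero, map_sub, map_smul, inner_sub_left, real_inner_smul_left,
    inner_coroot_self (π_ne_zero_of_mem_generatedRoots hz)] at h
  convert h using 1
  module

theorem exists_smul_add_smul_eq_zero (hr : D.π r = 0) (hs : D.π s = 0)
    (hv : v ∈ D.generatedRoots X) (hvr : v + r ∈ D.generatedRoots X)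
    (hvs : v + s ∈ D.generatedRoots X) : ∃ p q : ℝ, (p ≠ 0 ∨ q ≠ 0) ∧ p • r + q • s = 0 := by
  obtain ⟨t₁, ht₁, -, h₁⟩ := hv
  obtain ⟨t₂, ht₂, -, h₂⟩ := hvr
  obtain ⟨t₃, ht₃, -, h₃⟩ := hvs
  rcases h₁ with rfl | rfl
  · exact D.imaginary_dependent t₁ ht₁ t₂ ht₂ t₃ ht₃ r s hr hs
      (h₂.imp Eq.symm fun h => by rw [h, neg_neg]) (h₃.imp Eq.symm fun h => by rw [h, neg_neg])
  · have hneg : ∀ {a b : U}, -D.root t₁ + a = b ∨ -D.root t₁ + a = -b →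
        b = D.root t₁ + -a ∨ b = -(D.root t₁ + -a) := fun h =>
      h.symm.imp (fun h => by rw [← neg_eq_iff_eq_neg.mpr h]; abel) (fun h => by rw [← h]; abel)
    obtain ⟨p, q, hpq, h⟩ := D.imaginary_dependent t₁ ht₁ t₂ ht₂ t₃ ht₃ (-r) (-s)
      (by simp [hr]) (by simp [hs]) (hneg h₂) (hneg h₃)
    exact ⟨p, q, hpq, neg_eq_zero.mp (by rw [neg_add, ← smul_neg, ← smul_neg, h])⟩

theorem exists_mem_inner_ne_zero (hX : ∀ x ∈ X, x ∈ T) (hv : v ∈ D.generatedRoots X) :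
    ∃ x ∈ X, ⟪D.π v, D.π (D.root x)⟫ ≠ 0 := by
  by_contra! hno
  obtain ⟨t, ht, hact⟩ := exists_act_eq_of_mem_generatedRoots hv
  have hv0 := π_ne_zero_of_mem_generatedRoots hv
  have h := hact v
  rw [act_eq_self_of_inner_eq_zero hX ht hno, inner_coroot_self hv0, eq_comm, sub_eq_self,
    smul_eq_zero_iff_right two_ne_zero] at h
  exact hv0 (by rw [h, map_zero])

theorem finite_π_image_generatedRoots (X : List W) : (D.π '' D.generatedRoots X).Finite := by
  refine (D.isRoot.finite.union D.isRoot.finite.neg).subset ?_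
  rintro _ ⟨v, ⟨t, ht, -, rfl | rfl⟩, rfl⟩
  · exact .inl (D.π_root_mem t ht)
  · exact .inr (by simpa using D.π_root_mem t ht)

end GeneratedRoots

section ImaginaryLine

theorem IsConnected.forall_exists_add_smul_mem (hC : D.IsConnected X) (hX : ∀ x ∈ X, x ∈ T)
    (hρ : D.π ρ = 0) (hz : z ∈ D.generatedRoots X) (hzρ : z + ρ ∈ D.generatedRoots X) :
    ∀ x ∈ X, ∃ k : ℝ, k ≠ 0 ∧ D.root x + k • ρ ∈ D.generatedRoots X := by
  refine hC _ ?_ ?_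
  · obtain ⟨x, hx, hzx⟩ := exists_mem_inner_ne_zero hX hz
    rw [real_inner_comm] at hzx
    exact ⟨x, hx, _, mt (inner_coroot_eq_zero (π_ne_zero_of_mem_generatedRoots hz)).mp hzx,
      add_smul_mem_generatedRoots hz hρ hzρ (root_mem_generatedRoots hx (hX x hx))⟩
  · rintro x hx x' hx' ⟨k, hk, h⟩ hxx'
    rw [real_inner_comm] at hxx'
    refine ⟨⟪D.π (D.root x'), coroot (D.π (D.root x))⟫ * k,
      mul_ne_zero (mt (inner_coroot_eq_zero (π_root_ne_zero (hX x hx))).mp hxx') hk, ?_⟩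
    rw [mul_smul]
    exact add_smul_mem_generatedRoots (root_mem_generatedRoots hx (hX x hx))
      (by rw [map_smul, hρ, smul_zero]) h (root_mem_generatedRoots hx' (hX x' hx'))

/-- Translations in the generated group spread one imaginary difference of roots over all the
generators, so all imaginary differences are proportional. -/
theorem IsConnected.exists_forall_mem_span (hC : D.IsConnected X) (hX : ∀ x ∈ X, x ∈ T) :
    ∃ ρ : U, ∀ v ∈ D.generatedRoots X, ∀ r, D.π r = 0 → v + r ∈ D.generatedRoots X →
      r ∈ Submodule.span ℝ {ρ} := by
  by_cases hall : ∀ v ∈ D.generatedRoots X, ∀ r, D.π r = 0 → v + r ∈ D.generatedRoots X → r = 0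
  · exact ⟨0, fun v hv r hr h => by rw [hall v hv r hr h]; exact zero_mem _⟩
  push Not at hall
  obtain ⟨z, hz, ρ, hρ, hzρ, hρ0⟩ := hall
  refine ⟨ρ, fun v hv r hr hvr => ?_⟩
  obtain ⟨x, hx, hvx⟩ := exists_mem_inner_ne_zero hX hv
  obtain ⟨k, hk, hxk⟩ := hC.forall_exists_add_smul_mem hX hρ hz hzρ x hx
  have hkρ : D.π (k • ρ) = 0 := by rw [map_smul, hρ, smul_zero]
  set c := ⟪D.π v, coroot (D.π (D.root x))⟫
  have hc : c ≠ 0 := mt (inner_coroot_eq_zero (π_root_ne_zero (hX x hx))).mp hvx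
  obtain ⟨p, q, hpq, h⟩ := exists_smul_add_smul_eq_zero hr (by rw [map_smul, hkρ, smul_zero]) hv
    hvr (add_smul_mem_generatedRoots (root_mem_generatedRoots hx (hX x hx)) hkρ hxk hv)
  rw [smul_smul c k] at h
  have hr' := mem_span_singleton_of_smul_add_smul_eq_zero hpq h
    (smul_ne_zero (mul_ne_zero hc hk) hρ0)
  exact (Submodule.span_singleton_smul_le ℝ _ ρ) hr'

theorem rootSpan_linearMap_ext {h₁ h₂ : D.rootSpan X →ₗ[ℝ] ℝ}
    (h : ∀ x (hx : x ∈ X), h₁ ⟨D.root x, root_mem_rootSpan hx⟩ =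
      h₂ ⟨D.root x, root_mem_rootSpan hx⟩) : h₁ = h₂ := by
  refine LinearMap.ext_on (Submodule.span_span_coe_preimage (s := D.root '' {x | x ∈ X})) ?_
  rintro ⟨_, _⟩ ⟨x, hx, rfl⟩
  exact h x hx

variable (D) in
/-- The orbit of the functional `f` under the group generated by `X`, restricted to the span of the
roots of `X`. -/
def functionalOrbit (X : List W) (f : U →ₗ[ℝ] ℝ) : Set (D.rootSpan X →ₗ[ℝ] ℝ) :=
  (fun g => (f.comp (D.act g)).domRestrict (D.rootSpan X)) '' Subgroup.closure {x | x ∈ X}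

theorem finite_functionalOrbit (hX : ∀ x ∈ X, x ∈ T) {f : U →ₗ[ℝ] ℝ}
    (hf : (f '' D.generatedRoots X).Finite) : (D.functionalOrbit X f).Finite := by
  have : Finite {x // x ∈ X} := X.finite_toSet
  let eval (h : D.rootSpan X →ₗ[ℝ] ℝ) (x : {x // x ∈ X}) : ℝ :=
    h ⟨D.root x, root_mem_rootSpan x.2⟩
  have heval : eval.Injective := fun h₁ h₂ h =>
    rootSpan_linearMap_ext fun x hx => congrFun h ⟨x, hx⟩
  refine Set.Finite.of_finite_image ((Set.Finite.pi' fun _ => hf).subset ?_) heval.injOn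
  rintro _ ⟨_, ⟨g, hg, rfl⟩, rfl⟩ x
  exact ⟨_, act_mem_generatedRoots hg (root_mem_generatedRoots x.2 (hX x x.2)), rfl⟩

theorem sum_functionalOrbit_apply_root (hX : ∀ x ∈ X, x ∈ T) {f : U →ₗ[ℝ] ℝ}
    {S : Finset (D.rootSpan X →ₗ[ℝ] ℝ)} (hS : ∀ h, h ∈ S ↔ h ∈ D.functionalOrbit X f)
    (hx : x ∈ X) : ∑ h ∈ S, h ⟨D.root x, root_mem_rootSpan hx⟩ = 0 := by
  have hxX : x ∈ Subgroup.closure {x | x ∈ X} := Subgroup.subset_closure hx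
  let e : D.rootSpan X →ₗ[ℝ] D.rootSpan X :=
    (D.act x).restrict fun _ hv => act_mem_rootSpan hX hxX hv
  have hroot : e ⟨D.root x, root_mem_rootSpan hx⟩ = -⟨D.root x, root_mem_rootSpan hx⟩ := by
    ext
    simp only [e, LinearMap.coe_restrict_apply, D.act_reflection x (hX x hx),
      inner_coroot_self (π_root_ne_zero (hX x hx)), Submodule.coe_neg]
    module
  have he : e.comp e = LinearMap.id := by
    ext v
    simp only [e, LinearMap.comp_apply, LinearMap.coe_restrict_apply, ← act_mul,
      D.mul_self x (hX x hx), map_one, Module.End.one_apply, LinearMap.id_apply]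
  refine Finset.sum_involution (fun h _ => h.comp e) (fun h _ => ?_) (fun h _ hne heq => hne ?_)
    (fun h hh => ?_) (fun h _ => ?_)
  · rw [LinearMap.comp_apply, hroot, map_neg, add_neg_cancel]
  · have := LinearMap.congr_fun heq ⟨D.root x, root_mem_rootSpan hx⟩
    rw [LinearMap.comp_apply, hroot, map_neg] at this
    linarith
  · obtain ⟨g, hg, rfl⟩ := (hS h).mp hh
    refine (hS _).mpr ⟨g * x, mul_mem hg hxX, LinearMap.ext fun v => ?_⟩
    simp [e]
  · rw [LinearMap.comp_assoc, he, LinearMap.comp_id]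

/-- The sum of the orbit of `f` kills every root of `X`, while all members of the orbit take the
same value at the imaginary vector `u`. -/
theorem apply_eq_zero_of_finite_image_generatedRoots (hX : ∀ x ∈ X, x ∈ T) {f : U →ₗ[ℝ] ℝ}
    (hf : (f '' D.generatedRoots X).Finite) (hu : u ∈ D.rootSpan X) (hπu : D.π u = 0) :
    f u = 0 := by
  set S := (finite_functionalOrbit hX hf).toFinset
  have hmem : ∀ h, h ∈ S ↔ h ∈ D.functionalOrbit X f := fun h => Set.Finite.mem_toFinset _
  have hzero : ∑ h ∈ S, h = 0 := rootSpan_linearMap_ext fun x hx => by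
    rw [LinearMap.sum_apply, sum_functionalOrbit_apply_root hX hmem hx, LinearMap.zero_apply]
  have hconst : ∀ h ∈ S, h ⟨u, hu⟩ = f u := fun h hh => by
    obtain ⟨g, hg, rfl⟩ := (hmem h).mp hh
    exact congrArg f (act_eq_self_of_π_eq_zero hX hg hπu)
  have hsum := LinearMap.congr_fun hzero ⟨u, hu⟩
  rw [LinearMap.sum_apply, Finset.sum_congr rfl hconst, Finset.sum_const, LinearMap.zero_apply,
    smul_eq_zero, Finset.card_eq_zero] at hsum
  refine hsum.resolve_left (Finset.ne_empty_of_mem ((hmem _).mpr ⟨1, one_mem _, rfl⟩))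

theorem IsConnected.imaginaryLine (hC : D.IsConnected X) (hX : ∀ x ∈ X, x ∈ T) :
    D.ImaginaryLine X := by
  obtain ⟨ρ, hρ⟩ := hC.exists_forall_mem_span hX
  refine ⟨ρ, fun u hu hπu => ?_⟩
  by_contra hno
  obtain ⟨f, hfu, hf⟩ := Submodule.exists_le_ker_of_notMem (p := Submodule.span ℝ {ρ}) (v := u)
    fun h => hno ((Submodule.mem_span_singleton.mp h).imp fun _ => Eq.symm)
  refine hfu (apply_eq_zero_of_finite_image_generatedRoots hX ?_ hu hπu)
  have hinv : ∀ v ∈ D.generatedRoots X,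
      f (Function.invFunOn D.π (D.generatedRoots X) (D.π v)) = f v := fun v hv => by
    have hex : ∃ a ∈ D.generatedRoots X, D.π a = D.π v := ⟨v, hv, rfl⟩
    have hmem := Function.invFunOn_mem hex
    have heq := Function.invFunOn_eq hex
    have h := hf (hρ v hv (Function.invFunOn D.π (D.generatedRoots X) (D.π v) - v)
      (by rw [map_sub, heq, sub_self]) (by rwa [add_sub_cancel]))
    rwa [LinearMap.mem_ker, map_sub, sub_eq_zero] at h
  refine ((finite_π_image_generatedRoots (D := D) X).image fun a =>
    f (Function.invFunOn D.π (D.generatedRoots X) a)).subset ?_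
  rintro _ ⟨v, hv, rfl⟩
  exact ⟨_, ⟨v, hv, rfl⟩, hinv v hv⟩

end ImaginaryLine

end AffineRealization

namespace IsRedFac

variable {G : Type*} [Group G] {T : Set G} {w : G} {l l' : List G}

theorem of_hurwitzEquiv (hl : IsRedFac T w l) (h : HurwitzEquiv l l') (hl' : ∀ t ∈ l', t ∈ T) :
    IsRedFac T w l' :=
  ⟨hl', h.prod_eq.symm.trans hl.2.1, h.length_eq.symm.trans hl.2.2⟩

theorem of_length_le (hl : ∀ t ∈ l, t ∈ T) (hprod : l.prod = w)
    (hle : ∀ l' : List G, (∀ t ∈ l', t ∈ T) → l'.prod = w → l.length ≤ l'.length) :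
    IsRedFac T w l := by
  refine ⟨hl, hprod, le_antisymm ?_ (Nat.sInf_le ⟨l, hl, hprod, rfl⟩)⟩
  refine le_csInf ⟨_, l, hl, hprod, rfl⟩ ?_
  rintro _ ⟨l', hl', hprod', rfl⟩
  exact hle l' hl' hprod'

theorem of_append (h : IsRedFac T w (l ++ l')) :
    IsRedFac T l.prod l ∧ IsRedFac T l'.prod l' := by
  obtain ⟨hl, hl'⟩ := List.forall_mem_append.mp h.1
  refine ⟨of_length_le hl rfl fun m hm hprod => ?_, of_length_le hl' rfl fun m hm hprod => ?_⟩
  · have := h.length_le (l' := m ++ l') (List.forall_mem_append.mpr ⟨hm, hl'⟩)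
      (by rw [List.prod_append, hprod, ← List.prod_append, h.2.1])
    simpa using this
  · have := h.length_le (l' := l ++ m) (List.forall_mem_append.mpr ⟨hl, hm⟩)
      (by rw [List.prod_append, hprod, ← List.prod_append, h.2.1])
    simpa using this

end IsRedFac

namespace AffineRealization

variable {W : Type*} [Group W] {T : Set W} {U E : Type*} [AddCommGroup U] [Module ℝ U]
  [NormedAddCommGroup E] [InnerProductSpace ℝ E] (D : AffineRealization W T U E)

/-- The directions of the members of `X` are orthogonal to those of the members of `Y`. -/
def IsOrthogonal (X Y : List W) : Prop :=
  ∀ x ∈ X, ∀ y ∈ Y, ⟪D.π (D.root x), D.π (D.root y)⟫ = 0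

variable {D} {X Y : List W} {a b c d g x y : W} {u v : U}

theorem mul_comm_of_inner_eq_zero (hx : x ∈ T) (hy : y ∈ T)
    (h : ⟪D.π (D.root x), D.π (D.root y)⟫ = 0) : x * y = y * x := by
  rw [real_inner_comm] at h
  have hfix : D.act x (D.root y) = D.root y := by
    rw [D.act_reflection x hx, (inner_coroot_eq_zero (π_root_ne_zero hx)).mpr h, zero_smul,
      sub_zero]
  refine mul_inv_eq_iff_eq_mul.mp (D.root_injective _ (D.conj_mem x y hy) _ hy ?_)
  simpa only [hfix] using D.root_conj x y hy

theorem exists_isOrthogonal_of_not_isConnected (hX : ∀ x ∈ X, x ∈ T) (h : ¬D.IsConnected X) :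
    ∃ X₁ X₂, HurwitzEquiv X (X₁ ++ X₂) ∧ X₁ ≠ [] ∧ X₂ ≠ [] ∧ D.IsOrthogonal X₁ X₂ := by
  classical
  rw [IsConnected] at h
  push Not at h
  obtain ⟨p, ⟨x₁, hx₁, hpx₁⟩, hclosed, x₂, hx₂, hpx₂⟩ := h
  have horth : ∀ x ∈ X, ∀ y ∈ X, p x → ¬p y → ⟪D.π (D.root x), D.π (D.root y)⟫ = 0 :=
    fun x hx y hy hpx hpy => not_not.mp (mt (hclosed x hx y hy hpx) hpy)
  refine ⟨X.filter (p ·), X.filter fun x => !decide (p x),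
    HurwitzEquiv.filter_append_filter_not _ fun x hx y hy hpx hpy =>
      mul_comm_of_inner_eq_zero (hX x hx) (hX y hy)
        (horth x hx y hy (of_decide_eq_true hpx) (of_decide_eq_false hpy)),
    List.ne_nil_of_mem (a := x₁) (by simp [hx₁, hpx₁]),
    List.ne_nil_of_mem (a := x₂) (by simp [hx₂, hpx₂]), fun x hx y hy => ?_⟩
  simp only [List.mem_filter, decide_eq_true_eq, Bool.not_eq_true', decide_eq_false_iff_not]
    at hx hy
  exact horth x hx.1 y hy.1 hx.2 hy.2

namespace IsOrthogonal

theorem symm (h : D.IsOrthogonal X Y) : D.IsOrthogonal Y X := fun y hy x hx => by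
  rw [real_inner_comm, h x hx y hy]

theorem inner_eq_zero (h : D.IsOrthogonal X Y) (hu : u ∈ D.rootSpan X) (hv : v ∈ D.rootSpan Y) :
    ⟪D.π u, D.π v⟫ = 0 :=
  inner_π_eq_zero_of_mem_rootSpan hv fun y hy => by
    rw [real_inner_comm]
    exact inner_π_eq_zero_of_mem_rootSpan hu fun x hx => h.symm y hy x hx

theorem act_eq_self (h : D.IsOrthogonal X Y) (hY : ∀ y ∈ Y, y ∈ T)
    (hg : g ∈ Subgroup.closure {y | y ∈ Y}) (hu : u ∈ D.rootSpan X) : D.act g u = u :=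
  act_eq_self_of_inner_eq_zero hY hg fun _ hy => h.inner_eq_zero hu (root_mem_rootSpan hy)

theorem commute (h : D.IsOrthogonal X Y) (hX : ∀ x ∈ X, x ∈ T) (hY : ∀ y ∈ Y, y ∈ T)
    (ha : a ∈ Subgroup.closure {x | x ∈ X}) (hb : b ∈ Subgroup.closure {y | y ∈ Y}) :
    Commute a b := by
  have hle : Subgroup.closure {y | y ∈ Y} ≤
      Subgroup.centralizer (Subgroup.closure {x | x ∈ X}) := by
    rw [Subgroup.centralizer_closure, Subgroup.closure_le]
    exact fun y hy => Subgroup.mem_centralizer_iff.mpr fun x hx =>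
      mul_comm_of_inner_eq_zero (hX x hx) (hY y hy) (h x hx y hy)
  exact Subgroup.mem_centralizer_iff.mp (hle hb) a ha

theorem exists_mul_eq (h : D.IsOrthogonal X Y) (hX : ∀ x ∈ X, x ∈ T) (hY : ∀ y ∈ Y, y ∈ T)
    (hg : g ∈ Subgroup.closure {x | x ∈ X} ⊔ Subgroup.closure {y | y ∈ Y}) :
    ∃ a ∈ Subgroup.closure {x | x ∈ X}, ∃ b ∈ Subgroup.closure {y | y ∈ Y}, a * b = g := by
  rw [← Subgroup.range_subtype (Subgroup.closure {x | x ∈ X}),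
    ← Subgroup.range_subtype (Subgroup.closure {y | y ∈ Y}), ← MonoidHom.noncommCoprod_range _ _
      fun a b => h.commute hX hY a.2 b.2] at hg
  obtain ⟨⟨a, b⟩, rfl⟩ := hg
  exact ⟨a, a.2, b, b.2, rfl⟩

theorem eq_of_mul_eq_mul (h : D.IsOrthogonal X Y) (hX : ∀ x ∈ X, x ∈ T) (hY : ∀ y ∈ Y, y ∈ T)
    (ha : a ∈ Subgroup.closure {x | x ∈ X}) (hc : c ∈ Subgroup.closure {x | x ∈ X})
    (hb : b ∈ Subgroup.closure {y | y ∈ Y}) (hd : d ∈ Subgroup.closure {y | y ∈ Y})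
    (heq : a * b = c * d) : a = c ∧ b = d := by
  have hcomm : c⁻¹ * a = d * b⁻¹ := by
    rw [inv_mul_eq_iff_eq_mul, ← mul_assoc, ← heq, mul_inv_cancel_right]
  have hone : c⁻¹ * a = 1 := by
    refine D.faithful {x | x ∈ X} hX _ (mul_mem (inv_mem hc) ha) fun x hx => ?_
    rw [hcomm]
    exact h.act_eq_self hY (mul_mem hd (inv_mem hb)) (root_mem_rootSpan hx)
  obtain rfl := inv_mul_eq_one.mp hone
  exact ⟨rfl, mul_left_cancel heq⟩

theorem mem_closure_of_root_mem_rootSpan (h : D.IsOrthogonal X Y) (hX : ∀ x ∈ X, x ∈ T)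
    (hY : ∀ y ∈ Y, y ∈ T) (hg : g ∈ T)
    (hgXY : g ∈ Subgroup.closure {x | x ∈ X} ⊔ Subgroup.closure {y | y ∈ Y})
    (hroot : D.root g ∈ D.rootSpan X) : g ∈ Subgroup.closure {x | x ∈ X} := by
  obtain ⟨a, ha, b, hb, rfl⟩ := h.exists_mul_eq hX hY hgXY
  suffices hb1 : b = 1 by rwa [hb1, mul_one]
  refine D.faithful {y | y ∈ Y} hY b hb fun y hy => ?_
  have hyY : D.root y ∈ D.rootSpan Y := root_mem_rootSpan hy
  have hfix : D.act (a * b) (D.root y) = D.root y := by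
    rw [D.act_reflection _ hg, (inner_coroot_eq_zero (π_root_ne_zero hg)).mpr
      (h.symm.inner_eq_zero hyY hroot), zero_smul, sub_zero]
  rwa [act_mul, h.symm.act_eq_self hX ha (act_mem_rootSpan hY hb hyY)] at hfix

/-- A reflection in the product group preserves both spans; it moves its own root, hence one of the
two components of that root, along the root. -/
theorem root_mem_rootSpan_or (h : D.IsOrthogonal X Y) (hX : ∀ x ∈ X, x ∈ T)
    (hY : ∀ y ∈ Y, y ∈ T) (hg : g ∈ T)
    (hgXY : g ∈ Subgroup.closure {x | x ∈ X} ⊔ Subgroup.closure {y | y ∈ Y})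
    (hroot : D.root g ∈ D.rootSpan X ⊔ D.rootSpan Y) :
    D.root g ∈ D.rootSpan X ∨ D.root g ∈ D.rootSpan Y := by
  obtain ⟨a, ha, b, hb, rfl⟩ := h.exists_mul_eq hX hY hgXY
  obtain ⟨u, hu, v, hv, huv⟩ := Submodule.mem_sup.mp hroot
  have hact_u : D.act (a * b) u ∈ D.rootSpan X := by
    rw [act_mul, h.act_eq_self hY hb hu]
    exact act_mem_rootSpan hX ha hu
  have hact_v : D.act (a * b) v ∈ D.rootSpan Y := by
    rw [act_mul, h.symm.act_eq_self hX ha (act_mem_rootSpan hY hb hv)]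
    exact act_mem_rootSpan hY hb hv
  rw [D.act_reflection _ hg] at hact_u hact_v
  have hne : ⟪D.π u, coroot (D.π (D.root (a * b)))⟫ ≠ 0 ∨
      ⟪D.π v, coroot (D.π (D.root (a * b)))⟫ ≠ 0 := by
    by_contra! hzero
    have := inner_coroot_self (π_root_ne_zero (D := D) hg)
    nth_rw 1 [← huv, map_add, inner_add_left, hzero.1, hzero.2] at this
    norm_num at this
  refine hne.imp (fun hne => ?_) fun hne => ?_
  · exact ((D.rootSpan X).smul_mem_iff hne).mp (by simpa using sub_mem hu hact_u)
  · exact ((D.rootSpan Y).smul_mem_iff hne).mp (by simpa using sub_mem hv hact_v)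

end IsOrthogonal

theorem InRootLattices.of_root_mem_rootSpan (hdisj : Disjoint (D.rootSpan X) (D.rootSpan Y))
    (h : D.InRootLattices (X ++ Y) g) (hroot : D.root g ∈ D.rootSpan X) : D.InRootLattices X g := by
  intro i
  have hi := h i
  rw [rootLattice_append, AddSubgroup.mem_sup] at hi
  obtain ⟨a, ha, b, hb, hab⟩ := hi
  have hbX : b ∈ D.rootSpan X := by
    rw [← sub_eq_iff_eq_add'.mpr hab.symm]
    exact sub_mem (Submodule.smul_mem _ _ hroot) (rootLattice_le_rootSpan i X ha)
  have hb0 := Submodule.disjoint_def.mp hdisj b hbX (rootLattice_le_rootSpan i Y hb)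
  rwa [← hab, hb0, add_zero]

variable (D) in
/-- The reflections in the list `Y` are supported on `X`: they lie in the group generated by `X`,
and their roots and coroots lie in the lattices of `X`. -/
def IsSupported (X Y : List W) : Prop :=
  ∀ y ∈ Y, y ∈ Subgroup.closure {x | x ∈ X} ∧ D.InRootLattices X y

theorem IsSupported.of_hurwitzEquiv {X' : List W} (h : D.IsSupported X Y)
    (hX : ∀ x ∈ X, x ∈ T) (hXX' : HurwitzEquiv X X') : D.IsSupported X' Y := fun y hy =>
  ⟨hXX'.closure_eq ▸ (h y hy).1, (inRootLattices_iff_of_hurwitzEquiv hXX' hX y).mp (h y hy).2⟩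

theorem IsSupported.exists_hurwitzEquiv_append {X₁ X₂ : List W} (h : D.IsSupported (X₁ ++ X₂) Y)
    (hX : ∀ x ∈ X₁ ++ X₂, x ∈ T) (hY : ∀ y ∈ Y, y ∈ T) (horth : D.IsOrthogonal X₁ X₂)
    (hdisj : Disjoint (D.rootSpan X₁) (D.rootSpan X₂)) :
    ∃ Y₁ Y₂, HurwitzEquiv Y (Y₁ ++ Y₂) ∧ D.IsSupported X₁ Y₁ ∧ D.IsSupported X₂ Y₂ := by
  classical
  obtain ⟨hX₁, hX₂⟩ := List.forall_mem_append.mp hX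
  simp only [IsSupported, List.mem_append, Set.ofPred_or, Subgroup.closure_union] at h
  have hor : ∀ y ∈ Y, D.root y ∈ D.rootSpan X₁ ∨ D.root y ∈ D.rootSpan X₂ := fun y hy =>
    horth.root_mem_rootSpan_or hX₁ hX₂ (hY y hy) (h y hy).1
      (rootSpan_append (D := D) X₁ X₂ ▸ (h y hy).2.root_mem_rootSpan)
  refine ⟨Y.filter (D.root · ∈ D.rootSpan X₁), Y.filter fun y => !decide (D.root y ∈ D.rootSpan X₁),
    HurwitzEquiv.filter_append_filter_not _ fun x hx y hy hpx hpy =>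
      mul_comm_of_inner_eq_zero (hY x hx) (hY y hy) (horth.inner_eq_zero (of_decide_eq_true hpx)
        ((hor y hy).resolve_left (of_decide_eq_false hpy))), fun y hy => ?_, fun y hy => ?_⟩
  · rw [List.mem_filter, decide_eq_true_eq] at hy
    have hyXX := h y hy.1
    exact ⟨horth.mem_closure_of_root_mem_rootSpan hX₁ hX₂ (hY y hy.1) hyXX.1 hy.2,
      hyXX.2.of_root_mem_rootSpan hdisj hy.2⟩
  · rw [List.mem_filter, Bool.not_eq_true', decide_eq_false_iff_not] at hy
    have hyXX := h y hy.1
    have hroot := (hor y hy.1).resolve_left hy.2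
    refine ⟨horth.symm.mem_closure_of_root_mem_rootSpan hX₂ hX₁ (hY y hy.1)
      (sup_comm (Subgroup.closure {x | x ∈ X₁}) _ ▸ hyXX.1) hroot,
      InRootLattices.of_root_mem_rootSpan hdisj.symm (fun i => ?_) hroot⟩
    rw [rootLattice_append, sup_comm, ← rootLattice_append]
    exact hyXX.2 i

theorem IsSupported.list_prod_mem (h : D.IsSupported X Y) :
    Y.prod ∈ Subgroup.closure {x | x ∈ X} :=
  Subgroup.list_prod_mem _ fun y hy => (h y hy).1

theorem IsSupported.hurwitzEquiv {w : W} (h : D.IsSupported X Y) (hX : IsRedFac T w X)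
    (hY : IsRedFac T w Y) (hR : D.RootsIndependent X) : HurwitzEquiv X Y := by
  induction hn : X.length using Nat.strong_induction_on generalizing X Y w with
  | _ n ih =>
    by_cases hC : D.IsConnected X
    · exact (hC.imaginaryLine hX.1).hurwitzEquiv hX.1 hR hY.1 (hX.2.1.trans hY.2.1.symm)
        (hX.2.2.trans hY.2.2.symm) fun y hy => (h y hy).2
    obtain ⟨X₁, X₂, hXX, hne₁, hne₂, horth⟩ := exists_isOrthogonal_of_not_isConnected hX.1 hC
    have hXXT := (D.forall_mem_iff hXX).mp hX.1
    obtain ⟨hX₁, hX₂⟩ := List.forall_mem_append.mp hXXT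
    obtain ⟨hR₁, hR₂, hdisj⟩ := ((D.rootsIndependent_iff_of_hurwitzEquiv hXX hX.1).mp hR).of_append
    obtain ⟨Y₁, Y₂, hYY, hY₁, hY₂⟩ :=
      (h.of_hurwitzEquiv hX.1 hXX).exists_hurwitzEquiv_append hXXT hY.1 horth hdisj
    have hredX := (hX.of_hurwitzEquiv hXX hXXT).of_append
    have hredY := (hY.of_hurwitzEquiv hYY ((D.forall_mem_iff hYY).mp hY.1)).of_append
    have hprod : X₁.prod * X₂.prod = Y₁.prod * Y₂.prod := by
      rw [← List.prod_append, ← List.prod_append, ← hXX.prod_eq, ← hYY.prod_eq, hX.2.1, hY.2.1]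
    obtain ⟨hprod₁, hprod₂⟩ := horth.eq_of_mul_eq_mul hX₁ hX₂ (list_prod_mem_closure X₁)
      hY₁.list_prod_mem (list_prod_mem_closure X₂) hY₂.list_prod_mem hprod
    have hlen : X.length = X₁.length + X₂.length := by rw [hXX.length_eq, List.length_append]
    have hpos₁ := List.length_pos_iff.mpr hne₁
    have hpos₂ := List.length_pos_iff.mpr hne₂
    have h₁ := ih X₁.length (by omega) hY₁ hredX.1 (hprod₁ ▸ hredY.1) hR₁ rfl
    have h₂ := ih X₂.length (by omega) hY₂ hredX.2 (hprod₂ ▸ hredY.2) hR₂ rfl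
    exact hXX.trans (((h₁.append_right X₂).trans (h₂.append_left Y₁)).trans hYY.symm)

end AffineRealization

section ReflectionPairs

/-- By the Chebyshev formula, the powers of a product of two reflections depend only on the
pairings of their roots and coroots. -/
theorem reflection_mul_reflection_pow_eq_one {N P : Type*} [AddCommGroup N] [Module ℝ N]
    [AddCommGroup P] [Module ℝ P] {x y : N} {f g : Module.Dual ℝ N} {x' y' : P}
    {f' g' : Module.Dual ℝ P} (hf : f x = 2) (hg : g y = 2) (hf' : f' x' = 2) (hg' : g' y' = 2)
    {p q : ℝ} (hgx : g x = p) (hgx' : g' x' = p) (hfy : f y = q) (hfy' : f' y' = q)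
    (hxy : LinearIndependent ℝ ![x', y']) (hpq : q * p ≠ 4) {m : ℕ}
    (h : (Module.reflection hf' * Module.reflection hg') ^ m = 1) :
    (Module.reflection hf * Module.reflection hg) ^ m = 1 := by
  have hz := Module.reflection_mul_reflection_pow_apply hf' hg' m
  have hone : ∀ z, (1 : P ≃ₗ[ℝ] P) z = z := fun _ => rfl
  simp only [h, hone, hgx', hfy', add_assoc, left_eq_add] at hz
  ext z
  rw [Module.reflection_mul_reflection_pow_apply hf hg m z, hfy, hgx]
  change _ = z
  generalize ((Polynomial.Chebyshev.S ℝ _).eval _) * _ = a at hz ⊢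
  generalize ((Polynomial.Chebyshev.S ℝ _).eval _) * _ = b at hz ⊢
  have hcoeff := LinearIndependent.pair_iff.mp hxy
  obtain ⟨hx₁, hx₂⟩ := hcoeff (-2 * a + b * (q * p - 2)) ((a - b) * p) <| by
    rw [← hz x', hf', hgx']; module
  obtain ⟨hy₁, -⟩ := hcoeff ((b - a) * q) (a * (p * q - 2) - 2 * b) <| by
    rw [← hz y', hg', hfy']; module
  rcases eq_or_ne a b with rfl | hab
  · have ha : a * (q * p - 4) = 0 := by linear_combination hx₁
    rw [(mul_eq_zero.mp ha).resolve_right (sub_ne_zero.mpr hpq)]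
    module
  · have hp : p = 0 := (mul_eq_zero.mp hx₂).resolve_left (sub_ne_zero.mpr hab)
    have hq : q = 0 := (mul_eq_zero.mp hy₁).resolve_left (sub_ne_zero.mpr hab.symm)
    have hb : b = -a := by rw [hp] at hx₁; linear_combination -hx₁ / 2
    rw [hp, hq, hb]
    module

end ReflectionPairs

section AffineReflections

variable {E : Type*} [NormedAddCommGroup E] [InnerProductSpace ℝ E]

theorem sAff_apply (α : E) (k : ℝ) (v : E) : sAff α k v = v - (⟪v, α⟫ - k) • coroot α := rfl

theorem sAff_neg (α : E) (k : ℝ) : sAff (-α) k = sAff α (-k) := by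
  ext v
  simp only [sAff_apply, coroot, inner_neg_right, inner_neg_left, neg_neg]
  module

theorem inner_smul_coroot (v α : E) : ⟪v, α⟫ • coroot α = ⟪v, coroot α⟫ • α := by
  rw [coroot, real_inner_smul_right, smul_smul, mul_comm]

theorem sAff_add (α : E) (k : ℝ) (u v : E) :
    sAff α k (u + v) = sAff α k u + (v - ⟪v, coroot α⟫ • α) := by
  rw [sAff_apply, sAff_apply, inner_add_left, ← inner_smul_coroot]
  module

theorem sAff_sAff {α : E} (hα : α ≠ 0) (k k' : ℝ) (v : E) :
    sAff α k (sAff α k' v) = v + (k - k') • coroot α := by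
  have h : ⟪coroot α, α⟫ = 2 := by rw [real_inner_comm, inner_coroot_self hα]
  rw [sAff_apply, sAff_apply, inner_sub_left, real_inner_smul_left, h]
  module

theorem inner_coroot_mul_inner_coroot_ne_four {α β : E} (h : LinearIndependent ℝ ![α, β]) :
    ⟪β, coroot α⟫ * ⟪α, coroot β⟫ ≠ 4 := by
  intro h4
  have hα : ⟪α, α⟫ ≠ 0 := inner_self_ne_zero.mpr (h.ne_zero 0)
  have hβ : ⟪β, β⟫ ≠ 0 := inner_self_ne_zero.mpr (h.ne_zero 1)
  have hzero : α + (-(⟪α, coroot β⟫ / 2)) • β = 0 := by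
    rw [← inner_self_eq_zero (𝕜 := ℝ)]
    simp only [inner_coroot, real_inner_comm α β] at h4 ⊢
    simp only [inner_add_left, inner_add_right, real_inner_smul_left, real_inner_smul_right,
      real_inner_comm α β]
    field_simp at h4 ⊢
    linarith
  exact one_ne_zero (LinearIndependent.pair_iff.mp h 1 _ (by rwa [one_smul])).1

theorem zpow_apply_eq_add_zsmul {G A : Type*} [Group G] [AddCommGroup A] {F : G → A → A}
    (one : ∀ x, F 1 x = x) (mul : ∀ a b x, F (a * b) x = F a (F b x)) {g : G} {d : A → A}
    (hg : ∀ x, F g x = x + d x) (hd : ∀ x (n : ℤ), d (x + n • d x) = d x) (n : ℤ) (x : A) :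
    F (g ^ n) x = x + n • d x := by
  have hinv : ∀ x, F g⁻¹ x = x - d x := fun x => by
    have h : F g (x - d x) = x := by
      have := hd x (-1)
      rw [neg_one_zsmul, ← sub_eq_add_neg] at this
      rw [hg, this, sub_add_cancel]
    rw [← h, ← mul, inv_mul_cancel, one, h]
  induction n using Int.induction_on with
  | zero => simp [one]
  | succ n ih => rw [add_comm, zpow_add, zpow_one, mul, ih, hg, hd]; module
  | pred n ih =>
    rw [sub_eq_neg_add, zpow_add, zpow_neg_one, mul, ih, hinv, hd]; module

end AffineReflections

/-- A faithful affine action of a Coxeter group on a Euclidean space in which every simple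
reflection acts as an affine reflection with direction in a crystallographic root system `Φ` and
integral level. The data are indexed by `W` rather than by the index type `B`, because
`b ↦ cs.simple b` may fail to be injective a priori; only the values on simple reflections
matter. -/
structure AffineReflectionRep {B W : Type*} [Group W] {M : CoxeterMatrix B}
    (cs : CoxeterSystem M W) (E : Type*) [NormedAddCommGroup E] [InnerProductSpace ℝ E] where
  Φ : Set E
  isRoot : IsCrystRootSystem Φ
  toPerm : W →* Equiv.Perm E
  injective : Function.Injective toPerm
  direction : W → E
  level : W → ℤ
  direction_mem : ∀ b, direction (cs.simple b) ∈ Φ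
  toPerm_simple : ∀ b,
    toPerm (cs.simple b) = sAff (direction (cs.simple b)) (level (cs.simple b))

namespace AffineReflectionRep

variable {B W E : Type*} [Group W] {M : CoxeterMatrix B} {cs : CoxeterSystem M W}
  [NormedAddCommGroup E] [InnerProductSpace ℝ E] (R : AffineReflectionRep cs E)

theorem direction_ne_zero (b : B) : R.direction (cs.simple b) ≠ 0 :=
  R.isRoot.ne_zero _ (R.direction_mem b)

theorem toPerm_mul (g h : W) (v : E) : R.toPerm (g * h) v = R.toPerm g (R.toPerm h v) := by
  rw [map_mul, Equiv.Perm.mul_apply]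

section LinearPart

theorem exists_linearPart (g : W) :
    ∃ L : Module.End ℝ E, ∀ u v, R.toPerm g (u + v) = R.toPerm g u + L v := by
  induction g using cs.simple_induction with
  | simple b =>
    have h : innerₛₗ ℝ (coroot (R.direction (cs.simple b))) (R.direction (cs.simple b)) = 2 := by
      rw [innerₛₗ_apply_apply, real_inner_comm, inner_coroot_self (R.direction_ne_zero b)]
    refine ⟨Module.reflection h, fun u v => ?_⟩
    rw [R.toPerm_simple, sAff_add, real_inner_comm]
    rfl
  | one => exact ⟨1, fun u v => by simp⟩
  | mul g h hg hh =>
    obtain ⟨L, hL⟩ := hg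
    obtain ⟨L', hL'⟩ := hh
    exact ⟨L * L', fun u v => by rw [toPerm_mul, hL', hL, toPerm_mul, Module.End.mul_apply]⟩

/-- The linear part of the affine action. -/
noncomputable def lin : W →* Module.End ℝ E where
  toFun g := (R.exists_linearPart g).choose
  map_one' := by
    ext v
    simpa using ((R.exists_linearPart 1).choose_spec 0 v).symm
  map_mul' g h := by
    ext v
    have hgh := (R.exists_linearPart (g * h)).choose_spec 0 v
    rw [toPerm_mul, (R.exists_linearPart h).choose_spec, (R.exists_linearPart g).choose_spec,
      toPerm_mul, add_right_inj] at hgh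
    exact hgh.symm

theorem toPerm_add (g : W) (u v : E) : R.toPerm g (u + v) = R.toPerm g u + R.lin g v :=
  (R.exists_linearPart g).choose_spec u v

theorem lin_mul (g h : W) (v : E) : R.lin (g * h) v = R.lin g (R.lin h v) := by
  rw [map_mul, Module.End.mul_apply]

theorem lin_simple (b : B) (v : E) : R.lin (cs.simple b) v =
    v - ⟪v, coroot (R.direction (cs.simple b))⟫ • R.direction (cs.simple b) := by
  have h := R.toPerm_add (cs.simple b) 0 v
  rwa [toPerm_simple, sAff_add, add_right_inj, eq_comm] at h

theorem inner_lin (g : W) (u v : E) : ⟪R.lin g u, R.lin g v⟫ = ⟪u, v⟫ := by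
  induction g using cs.simple_induction generalizing u v with
  | simple b =>
    have hα : ⟪R.direction (cs.simple b), R.direction (cs.simple b)⟫ ≠ 0 :=
      inner_self_ne_zero.mpr (R.direction_ne_zero b)
    simp only [lin_simple, inner_coroot, inner_sub_left, inner_sub_right, real_inner_smul_left,
      real_inner_smul_right, real_inner_comm v (R.direction (cs.simple b))]
    field_simp
    ring
  | one => simp
  | mul g h hg hh => rw [lin_mul, lin_mul, hg, hh]

theorem lin_coroot (g : W) (α : E) : R.lin g (coroot α) = coroot (R.lin g α) := by
  rw [coroot, map_smul, coroot, inner_lin]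

theorem lin_inv_apply (g : W) (v : E) : R.lin g (R.lin g⁻¹ v) = v := by
  rw [← lin_mul, mul_inv_cancel, map_one, Module.End.one_apply]

theorem inner_lin_inv (g : W) (u v : E) : ⟪R.lin g⁻¹ u, v⟫ = ⟪u, R.lin g v⟫ := by
  rw [← R.inner_lin g, lin_inv_apply]

theorem lin_mem (g : W) {α : E} (hα : α ∈ R.Φ) : R.lin g α ∈ R.Φ := by
  induction g using cs.simple_induction generalizing α with
  | simple b =>
    have h := R.isRoot.refl_mem _ (R.direction_mem b) _ hα
    rwa [sAffFun, sub_zero, inner_smul_coroot, ← lin_simple] at h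
  | one => simpa
  | mul g h hg hh => rw [lin_mul]; exact hg (hh hα)

theorem finite_range_lin : (Set.range R.lin).Finite := by
  have : Finite R.Φ := R.isRoot.finite
  have hinj : Function.Injective fun L : {L : Module.End ℝ E // Set.MapsTo L R.Φ R.Φ} =>
      L.2.restrict := fun L L' h => Subtype.ext <| LinearMap.ext_on R.isRoot.spanning
    fun α hα => congrArg Subtype.val (congrFun h ⟨α, hα⟩)
  have hfin : {L : Module.End ℝ E | Set.MapsTo L R.Φ R.Φ}.Finite := Finite.of_injective _ hinj
  exact hfin.subset (Set.range_subset_iff.mpr fun g _ => R.lin_mem g)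

theorem isOfFinOrder_lin (g : W) : IsOfFinOrder (R.lin g) := by
  obtain ⟨m, n, hmn, h⟩ := R.finite_range_lin.exists_lt_map_eq_of_forall_mem
    (f := fun n : ℕ => R.lin (g ^ n)) fun n => Set.mem_range_self _
  refine isOfFinOrder_iff_pow_eq_one.mpr ⟨n - m, tsub_pos_of_lt hmn, ?_⟩
  rw [← map_pow, pow_sub g hmn.le, map_mul, ← h, ← map_mul, mul_inv_cancel, map_one]

end LinearPart

end AffineReflectionRep

namespace AffineReflectionRep

variable {B W E : Type*} [Group W] {M : CoxeterMatrix B} {cs : CoxeterSystem M W}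
  [NormedAddCommGroup E] [InnerProductSpace ℝ E] (R : AffineReflectionRep cs E)

section ExtendedRepresentation

theorem toPerm_zpow_apply {g : W} {x : E} (hg : ∀ v, R.toPerm g v = v + x) (n : ℤ) (v : E) :
    R.toPerm (g ^ n) v = v + n • x :=
  zpow_apply_eq_add_zsmul (F := fun g => R.toPerm g) (fun _ => by simp) R.toPerm_mul hg
    (fun _ _ => rfl) n v

theorem linearIndependent_direction {i j : B} (hij : cs.simple i ≠ cs.simple j)
    (hM : M i j ≠ 0) :
    LinearIndependent ℝ ![R.direction (cs.simple i), R.direction (cs.simple j)] := by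
  refine (LinearIndependent.pair_iff' (R.direction_ne_zero i)).mpr fun c hc => hij ?_
  obtain ⟨k, hk⟩ : ∃ k : ℝ,
      R.toPerm (cs.simple j) = sAff (R.direction (cs.simple i)) k := by
    rw [R.toPerm_simple j, ← hc]
    rcases R.isRoot.reduced _ (R.direction_mem i) c (hc ▸ R.direction_mem j) with rfl | rfl
    · exact ⟨_, by rw [one_smul]⟩
    · exact ⟨_, by rw [neg_one_smul, sAff_neg]⟩
  have htrans := R.toPerm_zpow_apply (g := cs.simple i * cs.simple j)
    (fun v => by rw [toPerm_mul, hk, R.toPerm_simple, sAff_sAff (R.direction_ne_zero i)])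
    (M i j) 0
  rw [zpow_natCast, cs.simple_mul_simple_pow, map_one, Equiv.Perm.one_apply, left_eq_add,
    natCast_zsmul, ← Nat.cast_smul_eq_nsmul ℝ] at htrans
  have hcoroot : coroot (R.direction (cs.simple i)) ≠ 0 := fun h => by
    simpa [h] using inner_coroot_self (R.direction_ne_zero i)
  have hlevel : (R.level (cs.simple i) : ℝ) = k := by
    simpa [hM, hcoroot, sub_eq_zero] using htrans
  exact R.injective (by rw [hk, R.toPerm_simple, hlevel])

/-- The linear map sending the basis vector of a simple reflection to its direction. -/
noncomputable def toDirection : (W →₀ ℝ) →ₗ[ℝ] E := Finsupp.linearCombination ℝ R.direction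

/-- The basis vector of a simple reflection, viewed as an abstract simple root. -/
noncomputable def simpleRoot (cs : CoxeterSystem M W) (b : B) : W →₀ ℝ :=
  Finsupp.single (cs.simple b) 1

@[simp]
theorem toDirection_simpleRoot (b : B) :
    R.toDirection (simpleRoot cs b) = R.direction (cs.simple b) := by
  simp [toDirection, simpleRoot]

/-- The span of the abstract simple roots together with a second factor that records a free value
for every simple coroot; in it the simple coroots become linearly independent functionals. -/
abbrev ExtRootSpace (W : Type*) : Type _ := (W →₀ ℝ) × (W → ℝ)

/-- The simple coroots, as functionals on the extended root space. -/
noncomputable def corootForm (b : B) : Module.Dual ℝ (ExtRootSpace W) :=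
  (innerₛₗ ℝ (coroot (R.direction (cs.simple b)))).comp
      (R.toDirection.comp (LinearMap.fst ℝ (W →₀ ℝ) (W → ℝ))) +
    (LinearMap.proj (cs.simple b)).comp (LinearMap.snd ℝ (W →₀ ℝ) (W → ℝ))

theorem corootForm_apply (b : B) (v : ExtRootSpace W) : R.corootForm b v =
    ⟪R.toDirection v.1, coroot (R.direction (cs.simple b))⟫ + v.2 (cs.simple b) := by
  rw [real_inner_comm]
  rfl

theorem corootForm_simpleRoot (b c : B) : R.corootForm b (simpleRoot cs c, 0) =
    ⟪R.direction (cs.simple c), coroot (R.direction (cs.simple b))⟫ := by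
  simp [corootForm_apply]

theorem corootForm_simpleRoot_self (b : B) : R.corootForm b (simpleRoot cs b, 0) = 2 := by
  rw [corootForm_simpleRoot, inner_coroot_self (R.direction_ne_zero b)]

theorem innerₛₗ_coroot_direction (b c : B) :
    innerₛₗ ℝ (coroot (R.direction (cs.simple b))) (R.direction (cs.simple c)) =
      ⟪R.direction (cs.simple c), coroot (R.direction (cs.simple b))⟫ := by
  rw [innerₛₗ_apply_apply, real_inner_comm]

theorem innerₛₗ_coroot_direction_self (b : B) :
    innerₛₗ ℝ (coroot (R.direction (cs.simple b))) (R.direction (cs.simple b)) = 2 := by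
  rw [innerₛₗ_coroot_direction, inner_coroot_self (R.direction_ne_zero b)]

theorem reflection_eq_lin (b : B) :
    (Module.reflection (R.innerₛₗ_coroot_direction_self b) : E →ₗ[ℝ] E) =
      R.lin (cs.simple b) := by
  ext v
  rw [lin_simple, real_inner_comm]
  rfl

theorem isLiftable_reflection :
    M.IsLiftable fun b => Module.reflection (R.corootForm_simpleRoot_self b) := fun i j => by
  by_cases hM : M i j = 0
  · rw [hM, pow_zero]
  by_cases hij : cs.simple i = cs.simple j
  · have hsame : Module.reflection (R.corootForm_simpleRoot_self i) =
        Module.reflection (R.corootForm_simpleRoot_self j) := by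
      simp only [corootForm, simpleRoot, hij]
    have hone : Module.reflection (R.corootForm_simpleRoot_self i) *
        Module.reflection (R.corootForm_simpleRoot_self j) = 1 := by
      rw [hsame, mul_eq_one_iff_eq_inv, Module.reflection_inv]
    exact (congrArg (· ^ M i j) hone).trans (one_pow _)
  have hind := R.linearIndependent_direction hij hM
  refine reflection_mul_reflection_pow_eq_one (R.corootForm_simpleRoot_self i)
    (R.corootForm_simpleRoot_self j) (R.innerₛₗ_coroot_direction_self i)
    (R.innerₛₗ_coroot_direction_self j) (R.corootForm_simpleRoot j i)
    (R.innerₛₗ_coroot_direction j i) (R.corootForm_simpleRoot i j)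
    (R.innerₛₗ_coroot_direction i j) hind (inner_coroot_mul_inner_coroot_ne_four hind) ?_
  apply LinearEquiv.toLinearMap_injective
  change LinearEquiv.automorphismGroup.toLinearMapMonoidHom (_ ^ M i j) = 1
  rw [map_pow, map_mul]
  change (LinearEquiv.toLinearMap _ * LinearEquiv.toLinearMap _) ^ M i j = 1
  rw [reflection_eq_lin, reflection_eq_lin, ← map_mul, ← map_pow, cs.simple_mul_simple_pow,
    map_one]

/-- The action on the extended space generated by the reflections in the simple roots. -/
noncomputable def extRep : W →* (ExtRootSpace W ≃ₗ[ℝ] ExtRootSpace W) :=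
  cs.lift ⟨_, R.isLiftable_reflection⟩

theorem extRep_simple_apply (b : B) (v : ExtRootSpace W) :
    R.extRep (cs.simple b) v = v - R.corootForm b v • (simpleRoot cs b, 0) := by
  rw [extRep, cs.lift_apply_simple, Module.reflection_apply]

theorem extRep_mul (g h : W) (v : ExtRootSpace W) :
    R.extRep (g * h) v = R.extRep g (R.extRep h v) := by
  rw [map_mul, LinearEquiv.mul_apply]

theorem extRep_snd (g : W) (v : ExtRootSpace W) : (R.extRep g v).2 = v.2 := by
  induction g using cs.simple_induction generalizing v with
  | simple b => simp [extRep_simple_apply]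
  | one => rw [map_one]; rfl
  | mul g h hg hh => rw [extRep_mul, hg, hh]

/-- The restriction of the extended action to the span of the simple roots. -/
noncomputable def act : W →* Module.End ℝ (W →₀ ℝ) where
  toFun g := LinearMap.fst ℝ (W →₀ ℝ) (W → ℝ) ∘ₗ (R.extRep g).toLinearMap ∘ₗ LinearMap.inl ℝ _ _
  map_one' := by
    rw [map_one]
    rfl
  map_mul' g h := by
    refine LinearMap.ext fun u => ?_
    have hu : R.extRep h (u, 0) = ((R.extRep h (u, 0)).1, 0) := Prod.ext rfl (R.extRep_snd h _)
    change (R.extRep (g * h) (u, 0)).1 = (R.extRep g ((R.extRep h (u, 0)).1, 0)).1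
    rw [extRep_mul, ← hu]

theorem extRep_inl (g : W) (u : W →₀ ℝ) : R.extRep g (u, 0) = (R.act g u, 0) :=
  Prod.ext rfl (R.extRep_snd g _)

theorem act_mul (g h : W) (u : W →₀ ℝ) : R.act (g * h) u = R.act g (R.act h u) := by
  rw [map_mul, Module.End.mul_apply]

theorem act_inv_apply (g : W) (u : W →₀ ℝ) : R.act g (R.act g⁻¹ u) = u := by
  rw [← act_mul, mul_inv_cancel, map_one, Module.End.one_apply]

theorem act_simple (b : B) (u : W →₀ ℝ) : R.act (cs.simple b) u =
    u - ⟪R.toDirection u, coroot (R.direction (cs.simple b))⟫ • simpleRoot cs b := by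
  have h := congrArg Prod.fst (R.extRep_simple_apply b (u, 0))
  simpa [extRep_inl, corootForm_apply] using h

theorem toDirection_act (g : W) (u : W →₀ ℝ) :
    R.toDirection (R.act g u) = R.lin g (R.toDirection u) := by
  induction g using cs.simple_induction generalizing u with
  | simple b => simp [act_simple, lin_simple]
  | one => simp
  | mul g h hg hh => rw [act_mul, hg, hh, lin_mul]

end ExtendedRepresentation

end AffineReflectionRep

namespace AffineReflectionRep

variable {B W E : Type*} [Group W] {M : CoxeterMatrix B} {cs : CoxeterSystem M W}
  [NormedAddCommGroup E] [InnerProductSpace ℝ E] (R : AffineReflectionRep cs E)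

section Levels

/-- The linear functional sending the basis vector of a simple reflection to its level. -/
noncomputable def toLevel : (W →₀ ℝ) →ₗ[ℝ] ℝ :=
  Finsupp.linearCombination ℝ fun w => (R.level w : ℝ)

@[simp]
theorem toLevel_simpleRoot (b : B) : R.toLevel (simpleRoot cs b) = R.level (cs.simple b) := by
  simp [toLevel, simpleRoot]

/-- The affine function on `E` attached to `u`; for a root it cuts out the hyperplane of the
corresponding reflection. -/
noncomputable def affineForm (u : W →₀ ℝ) (v : E) : ℝ := ⟪v, R.toDirection u⟫ - R.toLevel u

theorem toPerm_simple_apply (b : B) (v : E) : R.toPerm (cs.simple b) v =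
    v - R.affineForm (simpleRoot cs b) v • coroot (R.direction (cs.simple b)) := by
  rw [toPerm_simple, sAff_apply, affineForm, toDirection_simpleRoot, toLevel_simpleRoot]

theorem affineForm_act (g : W) (u : W →₀ ℝ) (v : E) :
    R.affineForm (R.act g u) (R.toPerm g v) = R.affineForm u v := by
  induction g using cs.simple_induction generalizing u v with
  | simple b =>
    have h := inner_coroot_self (R.direction_ne_zero b)
    rw [real_inner_comm] at h
    rw [act_simple, toPerm_simple_apply]
    simp only [affineForm, map_sub, map_smul, toDirection_simpleRoot, toLevel_simpleRoot,
      inner_sub_left, inner_sub_right, real_inner_smul_left, real_inner_smul_right, smul_eq_mul, h,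
      real_inner_comm (R.toDirection u) (coroot _)]
    ring
  | one => simp
  | mul g h hg hh => rw [act_mul, toPerm_mul, hg, hh]

end Levels

section Roots

/-- `x` is a root of the reflection `t`: the image of a simple root under an element conjugating
the simple reflection into `t`. -/
def IsRootOf (t : W) (x : W →₀ ℝ) : Prop :=
  ∃ g b, t = g * cs.simple b * g⁻¹ ∧ x = R.act g (simpleRoot cs b)

theorem isRootOf_simple (b : B) : R.IsRootOf (cs.simple b) (simpleRoot cs b) :=
  ⟨1, b, by simp, by simp⟩

namespace IsRootOf

variable {R} {t t' : W} {x x' r r' : W →₀ ℝ}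

theorem isReflection (h : R.IsRootOf t x) : cs.IsReflection t :=
  let ⟨g, b, ht, _⟩ := h; ⟨g, b, ht⟩

theorem conj (g : W) (h : R.IsRootOf t x) : R.IsRootOf (g * t * g⁻¹) (R.act g x) := by
  obtain ⟨h, b, rfl, rfl⟩ := h
  exact ⟨g * h, b, by group, (R.act_mul g h _).symm⟩

theorem toDirection_mem (h : R.IsRootOf t x) : R.toDirection x ∈ R.Φ := by
  obtain ⟨g, b, -, rfl⟩ := h
  rw [toDirection_act, toDirection_simpleRoot]
  exact R.lin_mem g (R.direction_mem b)

theorem toDirection_ne_zero (h : R.IsRootOf t x) : R.toDirection x ≠ 0 :=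
  R.isRoot.ne_zero _ h.toDirection_mem

theorem act_apply (h : R.IsRootOf t x) (u : W →₀ ℝ) :
    R.act t u = u - ⟪R.toDirection u, coroot (R.toDirection x)⟫ • x := by
  obtain ⟨g, b, rfl, rfl⟩ := h
  rw [act_mul, act_mul, act_simple, map_sub, map_smul, act_inv_apply, toDirection_act,
    toDirection_act, toDirection_simpleRoot, ← lin_coroot, inner_lin_inv]

theorem lin_apply (h : R.IsRootOf t x) (v : E) :
    R.lin t v = v - ⟪v, coroot (R.toDirection x)⟫ • R.toDirection x := by
  obtain ⟨g, b, rfl, rfl⟩ := h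
  rw [lin_mul, lin_mul, lin_simple, map_sub, map_smul, lin_inv_apply, toDirection_act,
    toDirection_simpleRoot, ← lin_coroot, inner_lin_inv]

theorem toPerm_eq (h : R.IsRootOf t x) :
    R.toPerm t = sAff (R.toDirection x) (R.toLevel x) := by
  obtain ⟨g, b, rfl, rfl⟩ := h
  ext v
  have hform := R.affineForm_act g (simpleRoot cs b) (R.toPerm g⁻¹ v)
  rw [← toPerm_mul, mul_inv_cancel, map_one, Equiv.Perm.one_apply] at hform
  rw [toPerm_mul, toPerm_mul, toPerm_simple_apply, ← hform, sub_eq_add_neg, toPerm_add,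
    ← toPerm_mul, mul_inv_cancel, map_one, Equiv.Perm.one_apply, map_neg, map_smul, lin_coroot,
    ← sub_eq_add_neg, sAff_apply, affineForm, toDirection_act, toDirection_simpleRoot]

theorem act_self (h : R.IsRootOf t x) : R.act t x = -x := by
  rw [h.act_apply, inner_coroot_self h.toDirection_ne_zero]
  module

protected theorem neg (h : R.IsRootOf t x) : R.IsRootOf t (-x) := by
  have := h.conj t
  rwa [h.act_self, mul_inv_cancel_right] at this

theorem eq_or_eq_neg (h : R.IsRootOf t x) (h' : R.IsRootOf t x') : x = x' ∨ x = -x' := by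
  have hx : x = (⟪R.toDirection x, coroot (R.toDirection x')⟫ / 2) • x' := by
    have := h'.act_apply x
    rw [h.act_self, neg_eq_iff_add_eq_zero, add_sub, ← two_smul ℝ x, sub_eq_zero] at this
    rw [div_eq_inv_mul, mul_smul, ← this, inv_smul_smul₀ two_ne_zero]
  obtain ⟨c, rfl⟩ : ∃ c : ℝ, x = c • x' := ⟨_, hx⟩
  have hc := h.toDirection_mem
  rw [map_smul] at hc
  rcases R.isRoot.reduced _ h'.toDirection_mem c hc with rfl | rfl
  · exact Or.inl (one_smul _ _)
  · exact Or.inr (neg_one_smul _ _)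

theorem injective (h : R.IsRootOf t x) (h' : R.IsRootOf t' x') (hx : x = x' ∨ x = -x') :
    t = t' := by
  have hx' : R.IsRootOf t' x := hx.elim (fun hx => hx ▸ h') fun hx => hx ▸ h'.neg
  exact R.injective (h.toPerm_eq.trans hx'.toPerm_eq.symm)

theorem exists_toLevel_eq (h : R.IsRootOf t x) : ∃ n : ℤ, R.toLevel x = n := by
  obtain ⟨g, b, -, rfl⟩ := h
  induction g using cs.simple_induction_left with
  | one => exact ⟨R.level (cs.simple b), by simp⟩
  | mul_simple_left g c ih =>
    obtain ⟨n, hn⟩ := ih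
    obtain ⟨m, hm⟩ := R.isRoot.cryst _ (R.direction_mem c) _
      (R.lin_mem g (R.direction_mem b))
    refine ⟨n - m * R.level (cs.simple c), ?_⟩
    rw [act_mul, act_simple, map_sub, hn, map_smul, toDirection_act, toDirection_simpleRoot,
      inner_coroot, hm, toLevel_simpleRoot]
    push_cast
    rfl

theorem act_mul_apply (h : R.IsRootOf t x) (h' : R.IsRootOf t' (x + r))
    (hr : R.toDirection r = 0) (u : W →₀ ℝ) :
    R.act (t * t') u = u + -⟪R.toDirection u, coroot (R.toDirection x)⟫ • r := by
  have hdir : R.toDirection (x + r) = R.toDirection x := by rw [map_add, hr, add_zero]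
  rw [act_mul, h'.act_apply, hdir, h.act_apply, map_sub, map_smul, hdir, inner_sub_left,
    real_inner_smul_left, inner_coroot_self h.toDirection_ne_zero]
  module

theorem exists_toPerm_mul_eq (h : R.IsRootOf t x) (h' : R.IsRootOf t' (x + r))
    (hr : R.toDirection r = 0) :
    ∃ n : ℤ, ∀ v, R.toPerm (t * t') v = v + n • coroot (R.toDirection x) := by
  obtain ⟨k, hk⟩ := h.exists_toLevel_eq
  obtain ⟨k', hk'⟩ := h'.exists_toLevel_eq
  refine ⟨k - k', fun v => ?_⟩
  rw [toPerm_mul, h.toPerm_eq, h'.toPerm_eq, map_add R.toDirection, hr, add_zero,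
    sAff_sAff h.toDirection_ne_zero, hk, hk', ← Int.cast_sub, Int.cast_smul_eq_zsmul]

theorem zpow_mul_apply_self (h : R.IsRootOf t x) (h' : R.IsRootOf t' (x + r))
    (hr : R.toDirection r = 0) (n : ℤ) : R.act ((t * t') ^ n) x = x + n • (-2 : ℝ) • r := by
  have hzpow := zpow_apply_eq_add_zsmul (F := fun g => R.act g) (fun _ => by simp) R.act_mul
    (fun u => h.act_mul_apply h' hr u) (fun u m => by simp [hr]) n x
  rwa [inner_coroot_self h.toDirection_ne_zero] at hzpow

theorem imaginary_dependent {t₁ t₂ t₃ : W} (h₁ : R.IsRootOf t₁ x) (h₂ : R.IsRootOf t₂ (x + r))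
    (h₃ : R.IsRootOf t₃ (x + r')) (hr : R.toDirection r = 0) (hr' : R.toDirection r' = 0) :
    ∃ p q : ℝ, (p ≠ 0 ∨ q ≠ 0) ∧ p • r + q • r' = 0 := by
  obtain ⟨m, hm⟩ := h₁.exists_toPerm_mul_eq h₂ hr
  obtain ⟨n, hn⟩ := h₁.exists_toPerm_mul_eq h₃ hr'
  have hpow : (t₁ * t₂) ^ n = (t₁ * t₃) ^ m := R.injective <| Equiv.ext fun v => by
    rw [R.toPerm_zpow_apply hm, R.toPerm_zpow_apply hn, smul_comm]
  have hdep := h₁.zpow_mul_apply_self h₂ hr n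
  rw [hpow, h₁.zpow_mul_apply_self h₃ hr' m, add_right_inj] at hdep
  by_cases hmn : n = 0 ∧ m = 0
  · have hone : t₁ * t₂ = 1 := R.injective <| Equiv.ext fun v => by
      rw [hm, hmn.2, zero_smul, add_zero, map_one, Equiv.Perm.one_apply]
    have hr0 := h₁.zpow_mul_apply_self h₂ hr 1
    rw [hone, one_zpow, map_one, Module.End.one_apply, left_eq_add, one_smul] at hr0
    exact ⟨1, 0, Or.inl one_ne_zero, by simpa using hr0⟩
  · refine ⟨n, -m, by simpa [or_iff_not_imp_left] using hmn, ?_⟩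
    simp only [← Int.cast_smul_eq_zsmul ℝ, smul_comm _ (-2 : ℝ)] at hdep
    have := smul_right_injective _ (neg_ne_zero.mpr (two_ne_zero' ℝ)) hdep
    rw [← this, neg_smul, add_neg_cancel]

end IsRootOf

end Roots

end AffineReflectionRep

theorem IsCrystRootSystem.finiteDimensional {E : Type*} [NormedAddCommGroup E]
    [InnerProductSpace ℝ E] {Φ : Set E} (hΦ : IsCrystRootSystem Φ) : FiniteDimensional ℝ E :=
  ⟨⟨hΦ.finite.toFinset, by rw [hΦ.finite.coe_toFinset, hΦ.spanning]⟩⟩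

namespace AffineReflectionRep

variable {B W E : Type*} [Group W] {M : CoxeterMatrix B} {cs : CoxeterSystem M W}
  [NormedAddCommGroup E] [InnerProductSpace ℝ E] (R : AffineReflectionRep cs E)

section Faithful

/-- A chosen root of the reflection `t`; it is unique up to sign. -/
noncomputable def root (t : W) : W →₀ ℝ := Classical.epsilon (R.IsRootOf t)

variable {g t : W} {X : Set W}

theorem isRootOf_root (ht : cs.IsReflection t) : R.IsRootOf t (R.root t) := by
  obtain ⟨g, b, hg⟩ := ht
  exact Classical.epsilon_spec (p := R.IsRootOf t) ⟨_, g, b, hg, rfl⟩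

/-- The span of the directions of a set of reflections. -/
def directionSpan (X : Set W) : Submodule ℝ E :=
  Submodule.span ℝ ((fun x => R.toDirection (R.root x)) '' X)

theorem toPerm_sub_mem_directionSpan (hX : ∀ x ∈ X, cs.IsReflection x)
    (hg : g ∈ Subgroup.closure X) (v : E) : R.toPerm g v - v ∈ R.directionSpan X := by
  induction hg using Subgroup.closure_induction generalizing v with
  | mem x hx =>
    rw [(R.isRootOf_root (hX x hx)).toPerm_eq, sAff_apply, sub_sub_cancel_left, coroot, smul_smul]
    exact neg_mem (Submodule.smul_mem _ _ (Submodule.subset_span ⟨x, hx, rfl⟩))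
  | one => simp
  | mul g h _ _ hg hh => simpa [toPerm_mul] using add_mem (hg (R.toPerm h v)) (hh v)
  | inv g _ hg =>
    rw [← neg_sub]
    simpa only [← toPerm_mul, mul_inv_cancel, map_one, Equiv.Perm.one_apply] using
      neg_mem (hg (R.toPerm g⁻¹ v))

theorem lin_eq_self_of_mem_orthogonal (hX : ∀ x ∈ X, cs.IsReflection x)
    (hg : g ∈ Subgroup.closure X) {v : E} (hv : v ∈ (R.directionSpan X)ᗮ) : R.lin g v = v := by
  have hmem : R.lin g v - v ∈ R.directionSpan X := by
    have h := sub_mem (R.toPerm_sub_mem_directionSpan hX hg (0 + v))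
      (R.toPerm_sub_mem_directionSpan hX hg 0)
    rw [toPerm_add] at h
    convert h using 1
    abel
  have horth := Submodule.inner_right_of_mem_orthogonal hmem hv
  rw [← sub_eq_zero, ← inner_self_eq_zero (𝕜 := ℝ)]
  have hnorm := R.inner_lin g v v
  rw [inner_sub_left] at horth
  rw [inner_sub_left, inner_sub_right, inner_sub_right, hnorm, real_inner_comm (R.lin g v) v]
  linarith

theorem eq_one_of_forall_act_root_eq (hX : ∀ x ∈ X, cs.IsReflection x)
    (hg : g ∈ Subgroup.closure X) (hfix : ∀ x ∈ X, R.act g (R.root x) = R.root x) : g = 1 := by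
  have := R.isRoot.finiteDimensional
  have hspan : ∀ v ∈ R.directionSpan X, R.lin g v = v := by
    refine LinearMap.eqOn_span (f := R.lin g) (g := LinearMap.id) ?_
    rintro _ ⟨x, hx, rfl⟩
    rw [← toDirection_act, hfix x hx, LinearMap.id_apply]
  have hlin : ∀ v, R.lin g v = v := fun v => by
    obtain ⟨y, hy, z, hz, rfl⟩ := (R.directionSpan X).exists_add_mem_mem_orthogonal v
    rw [map_add, hspan y hy, R.lin_eq_self_of_mem_orthogonal hX hg hz]
  have hmem : R.toPerm g 0 ∈ R.directionSpan X := by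
    simpa using R.toPerm_sub_mem_directionSpan hX hg 0
  have horth : R.toPerm g 0 ∈ (R.directionSpan X)ᗮ := by
    refine (Submodule.mem_orthogonal' _ _).mpr fun v hv => ?_
    have hle : R.directionSpan X ≤ LinearMap.ker (innerₛₗ ℝ (R.toPerm g 0)) := by
      refine Submodule.span_le.mpr ?_
      rintro _ ⟨x, hx, rfl⟩
      have h := R.affineForm_act g (R.root x) 0
      rw [hfix x hx, affineForm, affineForm, sub_left_inj, inner_zero_left] at h
      exact h
    exact hle hv
  have hzero : R.toPerm g 0 = 0 :=
    inner_self_eq_zero.mp (Submodule.inner_right_of_mem_orthogonal hmem horth)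
  refine R.injective (Equiv.ext fun v => ?_)
  rw [← zero_add v, toPerm_add, hzero, hlin, map_one, Equiv.Perm.one_apply]

end Faithful

theorem isRootOf_of_eq_or_eq_neg {t : W} {x : W →₀ ℝ} (ht : cs.IsReflection t)
    (h : R.root t = x ∨ R.root t = -x) : R.IsRootOf t x := by
  rcases h with rfl | h
  · exact R.isRootOf_root ht
  · exact neg_neg x ▸ (h ▸ R.isRootOf_root ht).neg

/-- The affine realization on the span of the abstract simple roots. -/
noncomputable def realization :
    AffineRealization W {t | cs.IsReflection t} (W →₀ ℝ) E where
  Φ := R.Φ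
  isRoot := R.isRoot
  π := R.toDirection
  act := R.act
  lin := R.lin
  root := R.root
  π_act := R.toDirection_act
  inner_lin := R.inner_lin
  isOfFinOrder_lin := R.isOfFinOrder_lin
  mul_self _ ht := ht.mul_self
  act_reflection _ ht := (R.isRootOf_root ht).act_apply
  lin_reflection _ ht := (R.isRootOf_root ht).lin_apply
  π_root_mem _ ht := (R.isRootOf_root ht).toDirection_mem
  root_injective _ ht _ ht' := (R.isRootOf_root ht).injective (R.isRootOf_root ht')
  conj_mem g _ ht := ht.conj g
  root_conj g _ ht := (R.isRootOf_root (ht.conj g)).eq_or_eq_neg ((R.isRootOf_root ht).conj g)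
  imaginary_dependent _ h₁ _ h₂ _ h₃ _ _ hr hr' hr₂ hr₃ :=
    (R.isRootOf_root h₁).imaginary_dependent (R.isRootOf_of_eq_or_eq_neg h₂ hr₂)
      (R.isRootOf_of_eq_or_eq_neg h₃ hr₃) hr hr'
  faithful _ hX _ hg hfix := R.eq_one_of_forall_act_root_eq hX hg hfix

section Lattices

variable {i : Bool} {v : ExtRootSpace W} {g : W} {X : List W}

/-- The simple coroots take values on `v` that are integral multiples of the root weights. -/
def HasIntegralCoroots (i : Bool) (v : ExtRootSpace W) : Prop :=
  ∀ b, ∃ z : ℤ, R.corootForm b v = z * rootWeight i (R.direction (cs.simple b))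

variable {R}

theorem HasIntegralCoroots.extRep (hv : R.HasIntegralCoroots i v) (g : W) :
    R.HasIntegralCoroots i (R.extRep g v) := by
  induction g using cs.simple_induction generalizing v with
  | simple c =>
    intro b
    obtain ⟨y, hy⟩ := hv b
    obtain ⟨z, hz⟩ := hv c
    obtain ⟨n, hn⟩ := R.isRoot.exists_rootWeight_mul_inner_coroot i (R.direction_mem b)
      (R.direction_mem c)
    refine ⟨y - z * n, ?_⟩
    rw [extRep_simple_apply, map_sub, map_smul, corootForm_simpleRoot, hy, hz, smul_eq_mul,
      mul_assoc, hn]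
    push_cast
    ring
  | one => rwa [map_one]
  | mul g h hg hh => rw [extRep_mul]; exact hg (hh hv)

theorem IsRootOf.scaledRoot_eq_or_eq_neg {t : W} {x : W →₀ ℝ} (h : R.IsRootOf t x) (i : Bool) :
    R.realization.scaledRoot i t = rootWeight i (R.toDirection x) • x ∨
      R.realization.scaledRoot i t = -(rootWeight i (R.toDirection x) • x) := by
  change rootWeight i (R.toDirection (R.root t)) • R.root t = _ ∨
    rootWeight i (R.toDirection (R.root t)) • R.root t = _
  rcases (R.isRootOf_root h.isReflection).eq_or_eq_neg h with hx | hx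
  · exact Or.inl (by rw [hx])
  · right
    rw [hx, smul_neg, map_neg, rootWeight_congr i (inner_neg_neg _ _)]

theorem HasIntegralCoroots.exists_extRep_reflection {t : W} (hv : R.HasIntegralCoroots i v)
    (ht : cs.IsReflection t) :
    ∃ z : ℤ, (R.extRep t v).1 = v.1 - z • R.realization.scaledRoot i t := by
  obtain ⟨g, b, rfl⟩ := ht
  obtain ⟨z, hz⟩ := hv.extRep g⁻¹ b
  have hroot : R.IsRootOf (g * cs.simple b * g⁻¹) (R.act g (simpleRoot cs b)) :=
    ⟨g, b, rfl, rfl⟩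
  have hweight : rootWeight i (R.toDirection (R.act g (simpleRoot cs b))) =
      rootWeight i (R.direction (cs.simple b)) :=
    rootWeight_congr i (by rw [toDirection_act, inner_lin, toDirection_simpleRoot])
  have hext : (R.extRep (g * cs.simple b * g⁻¹) v).1 =
      v.1 - z • rootWeight i (R.direction (cs.simple b)) • R.act g (simpleRoot cs b) := by
    rw [extRep_mul, extRep_mul, extRep_simple_apply, hz, map_sub, map_smul, extRep_inl,
      ← extRep_mul, mul_inv_cancel, map_one, mul_smul, ← Int.cast_smul_eq_zsmul ℝ]
    rfl
  rcases hroot.scaledRoot_eq_or_eq_neg i with h | h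
  · exact ⟨z, by rw [h, hweight, hext]⟩
  · exact ⟨-z, by rw [h, hweight, hext, smul_neg, neg_smul, neg_neg]⟩

theorem HasIntegralCoroots.extRep_sub_mem (hv : R.HasIntegralCoroots i v)
    (hX : ∀ x ∈ X, cs.IsReflection x) (hg : g ∈ Subgroup.closure {x | x ∈ X}) :
    (R.extRep g v).1 - v.1 ∈ R.realization.rootLattice i X := by
  refine R.realization.closure_induction hX (p := fun g => ∀ v, R.HasIntegralCoroots i v →
    (R.extRep g v).1 - v.1 ∈ R.realization.rootLattice i X) (fun x hx v hv => ?_)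
    (fun v _ => ?_) (fun g h hg hh v hv => ?_) hg v hv
  · obtain ⟨z, hz⟩ := hv.exists_extRep_reflection (hX x hx)
    rw [hz, sub_sub_cancel_left]
    exact neg_mem (zsmul_mem (AffineRealization.scaledRoot_mem_rootLattice hx) z)
  · simp
  · rw [extRep_mul]
    simpa using add_mem (hg _ (hv.extRep h)) (hh v hv)

theorem hasIntegralCoroots_simpleRoot (R : AffineReflectionRep cs E) (i : Bool) (b : B) :
    R.HasIntegralCoroots i
      (0, ⇑(rootWeight i (R.direction (cs.simple b)) • simpleRoot cs b)) := fun c => by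
  rw [corootForm_apply, map_zero, inner_zero_left, zero_add]
  by_cases hbc : cs.simple b = cs.simple c
  · exact ⟨1, by simp [simpleRoot, hbc]⟩
  · exact ⟨0, by simp [simpleRoot, Finsupp.single_eq_of_ne' hbc]⟩

theorem inRootLattices_simple (R : AffineReflectionRep cs E) (hX : ∀ x ∈ X, cs.IsReflection x)
    {b : B} (hb : cs.simple b ∈ Subgroup.closure {x | x ∈ X}) :
    R.realization.InRootLattices X (cs.simple b) := fun i => by
  have h := (R.hasIntegralCoroots_simpleRoot i b).extRep_sub_mem hX hb
  have hcoroot : R.corootForm b (0, ⇑(rootWeight i (R.direction (cs.simple b)) •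
      simpleRoot cs b)) = rootWeight i (R.direction (cs.simple b)) := by
    simp [corootForm_apply, simpleRoot]
  rw [extRep_simple_apply, hcoroot, Prod.fst_sub, sub_sub_cancel_left, neg_mem_iff] at h
  rcases (R.isRootOf_simple b).scaledRoot_eq_or_eq_neg i with hx | hx
  · rw [hx, toDirection_simpleRoot]
    exact h
  · rw [hx, toDirection_simpleRoot]
    exact neg_mem h

end Lattices

end AffineReflectionRep

namespace AffineReflectionRep

variable {B W E : Type*} [Group W] {M : CoxeterMatrix B} {cs : CoxeterSystem M W}
  [NormedAddCommGroup E] [InnerProductSpace ℝ E] (R : AffineReflectionRep cs E)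
  {X Y : List W} {J : Set B} {w : W}

section QuasiCoxeter

theorem simpleRoot_mem_rootSpan (hX : ∀ x ∈ X, cs.IsReflection x) {b : B}
    (hb : cs.simple b ∈ Subgroup.closure {x | x ∈ X}) :
    simpleRoot cs b ∈ R.realization.rootSpan X := by
  have h : R.root (cs.simple b) ∈ R.realization.rootSpan X :=
    (R.inRootLattices_simple hX hb).root_mem_rootSpan
  rcases (R.isRootOf_root (cs.isReflection_simple b)).eq_or_eq_neg (R.isRootOf_simple b)
    with hx | hx
  · rwa [hx] at h
  · rwa [hx, neg_mem_iff] at h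

theorem rootsIndependent_of_length_le_ncard (hX : ∀ x ∈ X, cs.IsReflection x)
    (hJ : cs.simple '' J ⊆ Subgroup.closure {x | x ∈ X})
    (hcard : X.length ≤ (cs.simple '' J).ncard) : R.realization.RootsIndependent X := by
  refine (R.realization.finrank_rootSpan_le X).antisymm (hcard.trans ?_)
  have hle : Finsupp.supported ℝ ℝ (cs.simple '' J) ≤ R.realization.rootSpan X := by
    rw [Finsupp.supported_eq_span_single, Submodule.span_le]
    rintro _ ⟨_, ⟨b, hb, rfl⟩, rfl⟩
    exact R.simpleRoot_mem_rootSpan hX (hJ ⟨b, hb, rfl⟩)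
  calc (cs.simple '' J).ncard
      = Module.finrank ℝ (Finsupp.supported ℝ ℝ (cs.simple '' J)) :=
        (Module.finrank_eq_nat_card_basis ⟨Finsupp.supportedEquivFinsupp _⟩).symm
    _ ≤ Module.finrank ℝ (R.realization.rootSpan X) := Submodule.finrank_mono hle

theorem hurwitzEquiv_of_closure_eq (R : AffineReflectionRep cs E)
    (hX : IsRedFac {t | cs.IsReflection t} w X)
    (hY : IsRedFac {t | cs.IsReflection t} w Y)
    (hJ : Subgroup.closure {x | x ∈ X} = Subgroup.closure (cs.simple '' J))
    (hcard : X.length ≤ (cs.simple '' J).ncard) : HurwitzEquiv X Y := by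
  have hsimple : cs.simple '' J ⊆ Subgroup.closure {x | x ∈ X} := hJ ▸ Subgroup.subset_closure
  have hw : w ∈ Subgroup.closure (cs.simple '' J) := by
    rw [← hJ, ← hX.2.1]
    exact list_prod_mem_closure X
  have hYJ := hY.forall_isParabolicReflection hw
  refine AffineRealization.IsSupported.hurwitzEquiv (D := R.realization)
    (fun y hy => ⟨hJ ▸ (hYJ y hy).mem_closure, ?_⟩) hX hY
    (R.rootsIndependent_of_length_le_ncard hX.1 hsimple hcard)
  obtain ⟨g, hg, b, hb, rfl⟩ := hYJ y hy
  exact (R.inRootLattices_simple hX.1 (hsimple ⟨b, hb, rfl⟩)).conj hX.1 (hJ ▸ hg)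
    (cs.isReflection_simple b)

end QuasiCoxeter

/-- The affine reflection representation of a Coxeter group whose reflections act as affine
reflections of a crystallographic root system. -/
noncomputable def ofReflections {Φ : Set E} (hΦ : IsCrystRootSystem Φ) (φ : W →* Equiv.Perm E)
    (hφ : Function.Injective φ) (h : ∀ t, cs.IsReflection t → φ t ∈ AffReflections Φ) :
    AffineReflectionRep cs E where
  Φ := Φ
  isRoot := hΦ
  toPerm := φ
  injective := hφ
  direction g := Classical.epsilon fun α => α ∈ Φ ∧ ∃ k : ℤ, φ g = sAff α k
  level g := Classical.epsilon fun k : ℤ =>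
    φ g = sAff (Classical.epsilon fun α => α ∈ Φ ∧ ∃ k : ℤ, φ g = sAff α k) k
  direction_mem b := (Classical.epsilon_spec (h _ (cs.isReflection_simple b))).1
  toPerm_simple b := Classical.epsilon_spec
    (Classical.epsilon_spec (h _ (cs.isReflection_simple b))).2

end AffineReflectionRep

theorem statement_0_general {W E : Type*} [Group W] [NormedAddCommGroup E]
    [InnerProductSpace ℝ E] {Φ : Set E} (hΦ : IsCrystRootSystem Φ) {T : Set W}
    (φ : W →* Equiv.Perm E) (hφ : Function.Injective φ) (hT : ∀ t ∈ T, φ t ∈ AffReflections Φ)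
    {w : W} (hw : IsParabolicQuasiCoxeter T w) {l l' : List W} (hl : IsRedFac T w l)
    (hl' : IsRedFac T w l') : HurwitzEquiv l l' := by
  obtain ⟨n, m, hmn, s, t, hs, ⟨B, M, cs, hrange, rfl⟩, ht, hclosure⟩ := hw
  let R := AffineReflectionRep.ofReflections (cs := cs) hΦ φ hφ hT
  let s' : Fin m → W := fun j => s (Fin.castLE hmn j)
  have hs' : Function.Injective s' := hs.comp (Fin.castLE_injective hmn)
  obtain ⟨J, hJ⟩ : ∃ J, cs.simple '' J = Set.range s' :=
    Set.subset_range_iff_exists_image_eq.mp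
      (hrange ▸ Set.range_comp_subset_range (Fin.castLE hmn) s)
  have hcard : (List.ofFn t).length ≤ (cs.simple '' J).ncard := by
    rw [hJ, List.length_ofFn, ← Set.image_univ, Set.ncard_image_of_injective _ hs',
      Set.ncard_univ, Nat.card_fin]
  have hclosure' : Subgroup.closure {x | x ∈ List.ofFn t} =
      Subgroup.closure (cs.simple '' J) := by
    have hset : {x | x ∈ List.ofFn t} = Set.range t := Set.ext fun x => List.mem_ofFn' t x
    rw [hset, hclosure, hJ]
  exact (R.hurwitzEquiv_of_closure_eq ht hl hclosure' hcard).symm.trans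
    (R.hurwitzEquiv_of_closure_eq ht hl' hclosure' hcard)

theorem statement_0 {W : Type*} [Group W] (T : Set W)
    (hdual : IsDualCoxeterSystem W T)
    (haffine : Nonempty (AffineDualCoxeterModel W T))
    (w : W) (hw : IsParabolicQuasiCoxeter T w)
    (l l' : List W) (hl : IsRedFac T w l) (hl' : IsRedFac T w l') :
    HurwitzEquiv l l' := by
  obtain ⟨A⟩ := haffine
  let _ := A.normed
  let _ := A.ips
  exact statement_0_general A.isRoot ((AffWeylGroup A.Φ).subtype.comp A.iso.toMonoidHom)
    (Subtype.val_injective.comp A.iso.injective) (fun t ht => (A.mem_T_iff t).mp ht) hw hl hl'
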